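/- Uniqueness of weak solutions (Proposition 2.3): For every T>0, every V₀ ∈ ℝ and every q₀ ∈ L^∞(D) odd in y, if (V₁,q₁) and (V₂,q₂) are both weak solutions of the barotropic quasi-geostrophic equations on [0,T] with initial datum (V₀,q₀) in the sense described in the context, then V₁(t)=V₂(t) for a.e. t ∈ [0,T] and q₁ = q₂ almost everywhere on [0,T]×D. -/

import Mathlib

open MeasureTheory Real Set

noncomputable section

namespace BQG

/-- The fundamental domain `D = [−π,π]²` of the two-dimensional torus. -/
def Dom : Set (ℝ × ℝ) := Ioc (-π) π ×ˢ Ioc (-π) π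

/-- The Fourier coefficient of `f` against the mode `e_{-j} s_k`,
`f̂_{j,k} = ∫_D f(x,y) e^{−ijx}/(2π) · sin(ky) dx dy`. -/
def fhat (f : ℝ × ℝ → ℝ) (j : ℤ) (k : ℕ) : ℂ :=
  ∫ z in Dom, (f z : ℂ) * Complex.exp (-(Complex.I * (j : ℂ) * (z.1 : ℂ))) / (2 * π)
    * (Real.sin ((k : ℝ) * z.2) : ℂ)

/-- The Fourier coefficient of `f` against the cosine-type mode `e_{-j} c_k`. -/
def chat (f : ℝ × ℝ → ℝ) (j : ℤ) (k : ℕ) : ℂ :=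
  ∫ z in Dom, (f z : ℂ) * Complex.exp (-(Complex.I * (j : ℂ) * (z.1 : ℂ))) / (2 * π)
    * (Real.cos ((k : ℝ) * z.2) : ℂ)

/-- `f` is odd in `y`: its `L²`-expansion only uses the modes `e_j s_k`, i.e. all its
cosine-type Fourier coefficients vanish. -/
def OddInY (f : ℝ × ℝ → ℝ) : Prop := ∀ (j : ℤ) (k : ℕ), chat f j k = 0

/-- The Fourier coefficient of `Δ⁻¹ f` on the mode `e_j s_k`, namely `−f̂_{j,k}/(j²+k²)`. -/
def invLapCoeff (f : ℝ × ℝ → ℝ) (j : ℤ) (k : ℕ) : ℂ :=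
  -(fhat f j k) / ((j : ℂ)^2 + (k : ℂ)^2)

/-- The velocity field `u = (V,0) + ∇^⊥ ψ′` with `ψ′ = Δ⁻¹ f`, characterized as the
square-integrable vector field on `D` whose Fourier coefficients are those obtained by
termwise application of `∇^⊥ = (−∂_y, ∂_x)` to the Fourier series of `Δ⁻¹ f`, plus the
constant `(V,0)`. -/
def IsVelocity (f : ℝ × ℝ → ℝ) (V : ℝ) (u : ℝ × ℝ → ℝ × ℝ) : Prop :=
  MemLp u 2 (volume.restrict Dom) ∧
  (∀ (j : ℤ) (k : ℕ),
    chat (fun z => (u z).1) j k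
      = (if j = 0 ∧ k = 0 then (2 * π * V : ℂ) else 0)
        + (if 1 ≤ k then -(invLapCoeff f j k) * (k : ℂ) / 2 else 0)) ∧
  (∀ (j : ℤ) (k : ℕ), 1 ≤ k → fhat (fun z => (u z).1) j k = 0) ∧
  (∀ (j : ℤ) (k : ℕ), 1 ≤ k →
    fhat (fun z => (u z).2) j k = invLapCoeff f j k * Complex.I * (j : ℂ) / 2) ∧
  (∀ (j : ℤ) (k : ℕ), chat (fun z => (u z).2) j k = 0)

/-- **Weak solutions of the barotropic quasi-geostrophic equations** (Definition 2.1).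
`(V,q)` is a weak solution on `[0,T]` with initial datum `(V₀,q₀)`, with associated velocity
field `u(t,·) = (V(t),0) + ∇^⊥Δ⁻¹(q(t,·) − h − βy)`; the test functions `φ` are `C¹` and
`2π`-periodic in both space variables. -/
structure IsWeakSolution (T β : ℝ) (h : ℝ × ℝ → ℝ) (V₀ : ℝ) (q₀ : ℝ × ℝ → ℝ)
    (V : ℝ → ℝ) (q : ℝ → ℝ × ℝ → ℝ) (u : ℝ → ℝ × ℝ → ℝ × ℝ) : Prop where
  /-- `V ∈ L^∞([0,T];ℝ)`. -/
  measV : Measurable V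
  bddV : ∃ M : ℝ, ∀ t ∈ Icc (0 : ℝ) T, |V t| ≤ M
  /-- `q ∈ L^∞([0,T]×D)`. -/
  measq : Measurable fun p : ℝ × (ℝ × ℝ) => q p.1 p.2
  bddq : ∃ M : ℝ, ∀ᵐ p ∂(volume.restrict (Icc (0 : ℝ) T ×ˢ Dom)), |q p.1 p.2| ≤ M
  /-- `q(t,·)` is odd in `y` for a.e. `t`. -/
  oddq : ∀ᵐ t ∂(volume.restrict (Icc (0 : ℝ) T)), OddInY (q t)
  /-- `t ↦ ∫_D q(t,z)ϕ(z) dz` is continuous on `[0,T]` for every continuous `ϕ`. -/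
  contq : ∀ ϕ : ℝ × ℝ → ℝ, Continuous ϕ →
    ContinuousOn (fun t => ∫ z in Dom, q t z * ϕ z) (Icc (0 : ℝ) T)
  measu : Measurable fun p : ℝ × (ℝ × ℝ) => u p.1 p.2
  /-- `u(t,·) = (V(t),0) + ∇^⊥ψ′(t,·)` with `ψ′(t,·) = Δ⁻¹(q(t,·) − h − βy)`. -/
  vel : ∀ᵐ t ∂(volume.restrict (Icc (0 : ℝ) T)),
    IsVelocity (fun z => q t z - h z - β * z.2) (V t) (u t)
  /-- Weak vorticity formulation (i). -/
  weak_q : ∀ φ : ℝ × ℝ × ℝ → ℝ, ContDiff ℝ 1 φ →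
    (∀ t x y : ℝ, φ (t, x + 2 * π, y) = φ (t, x, y)) →
    (∀ t x y : ℝ, φ (t, x, y + 2 * π) = φ (t, x, y)) →
    (∫ z in Dom, φ (T, z) * q T z) - (∫ z in Dom, φ (0, z) * q₀ z)
      = ∫ s in Icc (0 : ℝ) T, ∫ z in Dom,
          (fderiv ℝ φ (s, z) (1, 0, 0) + fderiv ℝ φ (s, z) (0, u s z)) * q s z
  /-- Mean-flow equation (ii): `V(t) = V₀ + ∫₀ᵗ ⨍_D h ∂_xψ′(s,·) dz ds`, where
  `∂_xψ′(s,·)` is the second component of `u(s,·)`. -/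
  meanflow : ∀ t ∈ Icc (0 : ℝ) T,
    V t = V₀ + ∫ s in Ioc (0 : ℝ) t, (∫ z in Dom, h z * (u s z).2) / (4 * π^2)

end BQG

namespace BQG
open scoped ComplexConjugate ENNReal

open scoped ComplexConjugate ENNReal

/-- exponential modes on the torus -/
def ek (n : ℤ × ℤ) (z : ℝ × ℝ) : ℂ :=
  Complex.exp (Complex.I * ((n.1 : ℂ) * (z.1 : ℂ) + (n.2 : ℂ) * (z.2 : ℂ)))

/-- unnormalised Fourier coefficients -/
def co (f : ℝ × ℝ → ℂ) (n : ℤ × ℤ) : ℂ := ∫ z in Dom, f z * ek (-n) z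

/-- the rescaled section of the circle -/
def sec (x : UnitAddCircle) : ℝ := 2 * π * (AddCircle.equivIoc 1 (-(1/2) : ℝ) x : ℝ)

lemma measurable_sec : Measurable sec :=
  ((AddCircle.measurableEquivIoc 1 (-(1/2) : ℝ)).measurable.subtype_val).const_mul _

/-- Haar probability measure on the two-torus -/
def tau : Measure (UnitAddTorus (Fin 2)) := Measure.pi (fun _ => AddCircle.haarAddCircle)

lemma mp_sec : MeasurePreserving sec AddCircle.haarAddCircle
    (ENNReal.ofReal (2 * π)⁻¹ • (volume.restrict (Ioc (-π) π))) := by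
  have hpi := Real.pi_pos
  refine ⟨measurable_sec, ?_⟩
  have hv : (AddCircle.haarAddCircle : Measure UnitAddCircle)
      = (volume : Measure (AddCircle (1 : ℝ))) := by
    rw [AddCircle.volume_eq_smul_haarAddCircle]; simp
  rw [hv]
  have h1 := (AddCircle.measurePreserving_equivIoc (T := 1) (a := (-(1/2) : ℝ))).map_eq
  have e : sec = (fun x : ℝ => 2 * π * x) ∘ (Subtype.val ∘ AddCircle.equivIoc 1 (-(1/2) : ℝ)) := rfl
  have hm : Measurable (AddCircle.equivIoc 1 (-(1/2) : ℝ)) :=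
    (AddCircle.measurableEquivIoc 1 (-(1/2) : ℝ)).measurable
  rw [e, ← Measure.map_map (by fun_prop) (measurable_subtype_coe.comp hm),
    ← Measure.map_map measurable_subtype_coe hm, h1, map_comap_subtype_coe measurableSet_Ioc]
  have h2 : Ioc (-(1/2) : ℝ) (-(1/2) + 1) = (fun x : ℝ => 2 * π * x) ⁻¹' (Ioc (-π) π) := by
    ext x
    simp only [mem_Ioc, mem_preimage]
    constructor
    · rintro ⟨a, b⟩; constructor <;> nlinarith
    · rintro ⟨a, b⟩; constructor <;> nlinarith
  rw [h2, ← Measure.restrict_map (by fun_prop) measurableSet_Ioc,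
    Real.map_volume_mul_left (by positivity), Measure.restrict_smul, abs_of_pos (by positivity)]

/-- the map from the torus to the fundamental domain -/
def Phi (x : UnitAddTorus (Fin 2)) : ℝ × ℝ := (sec (x 0), sec (x 1))

lemma dom_measurable : MeasurableSet Dom := measurableSet_Ioc.prod measurableSet_Ioc

instance sf_sec : IsFiniteMeasure
    (ENNReal.ofReal (2 * π)⁻¹ • ((volume : Measure ℝ).restrict (Ioc (-π) π))) :=
  Measure.smul_finite _ ENNReal.ofReal_ne_top

lemma mp_Phi : MeasurePreserving Phi tau
    (ENNReal.ofReal (4 * π ^ 2)⁻¹ • (volume.restrict Dom)) := by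
  have h1 := measurePreserving_pi (fun _ : Fin 2 => (AddCircle.haarAddCircle : Measure UnitAddCircle))
    (fun _ : Fin 2 => (ENNReal.ofReal (2 * π)⁻¹ • (volume.restrict (Ioc (-π) π))))
    (fun _ => mp_sec)
  have h2 := (measurePreserving_finTwoArrow
    (ENNReal.ofReal (2 * π)⁻¹ • ((volume : Measure ℝ).restrict (Ioc (-π) π)))).comp h1
  have h3 : (ENNReal.ofReal (2 * π)⁻¹ • ((volume : Measure ℝ).restrict (Ioc (-π) π))).prod
      (ENNReal.ofReal (2 * π)⁻¹ • ((volume : Measure ℝ).restrict (Ioc (-π) π)))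
      = ENNReal.ofReal (4 * π ^ 2)⁻¹ • (volume.restrict Dom) := by
    rw [Measure.prod_smul_left, Measure.prod_smul_right, Measure.prod_restrict, smul_smul, Dom,
      ← ENNReal.ofReal_mul (by positivity)]
    congr 2
    field_simp
    norm_num
  rw [← h3]
  convert! h2 using 1

lemma Phi_coe (n : ℤ × ℤ) (x : UnitAddTorus (Fin 2)) :
    UnitAddTorus.mFourier ![n.1, n.2] x = ek n (Phi x) := by
  simp only [UnitAddTorus.mFourier, ContinuousMap.coe_mk, Fin.prod_univ_two, Phi, ek, sec]
  have h (y : UnitAddCircle) : y = ((AddCircle.equivIoc 1 (-(1/2) : ℝ) y : ℝ) : UnitAddCircle) :=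
    ((AddCircle.equivIoc 1 (-(1/2) : ℝ)).symm_apply_apply y).symm
  conv_lhs => rw [h (x 0), h (x 1)]
  rw [fourier_coe_apply, fourier_coe_apply, ← Complex.exp_add]
  congr 1
  simp
  ring

lemma co_eq (f : ℝ × ℝ → ℂ) (n : ℤ × ℤ)
    (hf : AEStronglyMeasurable f (volume.restrict Dom)) :
    UnitAddTorus.mFourierCoeff (f ∘ Phi) ![n.1, n.2] = (4 * π ^ 2 : ℂ)⁻¹ * co f n := by
  have e : (-![n.1, n.2]) = ![(-n).1, (-n).2] := by simp
  have hek : Continuous (ek (-n)) := by unfold ek; fun_prop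
  have h := integral_map (μ := tau) mp_Phi.measurable.aemeasurable
    (f := fun z => f z * ek (-n) z) (by
      rw [mp_Phi.map_eq]
      exact (hf.mul hek.aestronglyMeasurable).mono_ac (Measure.smul_absolutelyContinuous))
  rw [mp_Phi.map_eq, integral_smul_measure] at h
  rw [UnitAddTorus.mFourierCoeff, e]
  simp only [Phi_coe, smul_eq_mul, Function.comp]
  simp only [mul_comm (ek _ _)]
  refine Eq.trans h.symm ?_
  rw [co, ENNReal.toReal_ofReal (by positivity), Complex.real_smul]
  push_cast
  ring

lemma parseval {f g : ℝ × ℝ → ℂ} (hf : MemLp f 2 (volume.restrict Dom))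
    (hg : MemLp g 2 (volume.restrict Dom)) :
    HasSum (fun n => conj (co f n) * co g n) (4 * π ^ 2 * ∫ z in Dom, conj (f z) * g z) := by
  have hpi := Real.pi_pos
  have mk : ∀ {f : ℝ × ℝ → ℂ}, MemLp f 2 (volume.restrict Dom) →
      MemLp (f ∘ Phi) 2 tau := fun {f} hf =>
    (hf.smul_measure ENNReal.ofReal_ne_top).comp_measurePreserving mp_Phi
  have key := UnitAddTorus.hasSum_prod_mFourierCoeff (mk hf).toLp (mk hg).toLp
  have ec : ∀ {f : ℝ × ℝ → ℂ} (hf : MemLp f 2 (volume.restrict Dom)) (n : Fin 2 → ℤ),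
      UnitAddTorus.mFourierCoeff (mk hf).toLp n = UnitAddTorus.mFourierCoeff (f ∘ Phi) n := by
    intro f hf n
    apply integral_congr_ae
    filter_upwards [(mk hf).coeFn_toLp] with x hx
    rw [hx]
  have ei : ∫ t, conj ((mk hf).toLp _ t) * (mk hg).toLp _ t ∂tau
      = (4 * π ^ 2 : ℂ)⁻¹ * ∫ z in Dom, conj (f z) * g z := by
    have h := integral_map (μ := tau) mp_Phi.measurable.aemeasurable
      (f := fun z => conj (f z) * g z) (by
        rw [mp_Phi.map_eq]
        exact (hf.1.star.mul hg.1).mono_ac (Measure.smul_absolutelyContinuous))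
    rw [mp_Phi.map_eq, integral_smul_measure, ENNReal.toReal_ofReal (by positivity),
      Complex.real_smul] at h
    push_cast at h
    rw [h]
    apply integral_congr_ae
    filter_upwards [(mk hf).coeFn_toLp, (mk hg).coeFn_toLp] with x hx hy
    rw [hx, hy]; rfl
  replace key := ei ▸ key
  replace key : HasSum (fun i => conj (UnitAddTorus.mFourierCoeff (f ∘ Phi) i)
      * UnitAddTorus.mFourierCoeff (g ∘ Phi) i) _ :=
    key.congr_fun fun i => congrArg₂ (fun a b => conj a * b) (ec hf i).symm (ec hg i).symm
  have h2 := ((finTwoArrowEquiv ℤ).symm.hasSum_iff).2 key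
  have h3 := h2.mul_left ((4 * π ^ 2 : ℂ) * (4 * π ^ 2))
  have hne : (π : ℂ) ≠ 0 := by exact_mod_cast hpi.ne'
  convert! h3 using 1
  · ext n
    simp only [Function.comp]
    have : (finTwoArrowEquiv ℤ).symm n = ![n.1, n.2] := rfl
    rw [this, co_eq f n hf.1, co_eq g n hg.1, map_mul, map_inv₀]
    simp only [map_mul, map_pow, Complex.conj_ofReal]
    have : conj (4 : ℂ) = 4 := by simpa using Complex.conj_ofReal 4
    rw [this]
    field_simp
  · field_simp


lemma ek_add (m n : ℤ × ℤ) (z : ℝ × ℝ) : ek (m + n) z = ek m z * ek n z := by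
  simp only [ek, ← Complex.exp_add, Prod.fst_add, Prod.snd_add, Int.cast_add]
  congr 1; ring

@[simp] lemma ek_zero (z : ℝ × ℝ) : ek 0 z = 1 := by simp [ek]

lemma conj_ek (n : ℤ × ℤ) (z : ℝ × ℝ) : conj (ek n z) = ek (-n) z := by
  simp only [ek, ← Complex.exp_conj, map_mul, Complex.conj_I, map_add, Complex.conj_ofReal,
    map_intCast, Prod.fst_neg, Prod.snd_neg, Int.cast_neg]
  congr 1; ring

@[simp] lemma norm_ek (n : ℤ × ℤ) (z : ℝ × ℝ) : ‖ek n z‖ = 1 := by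
  rw [ek, show Complex.I * ((n.1 : ℂ) * (z.1 : ℂ) + (n.2 : ℂ) * (z.2 : ℂ))
    = ((n.1 * z.1 + n.2 * z.2 : ℝ) : ℂ) * Complex.I by push_cast; ring]
  exact Complex.norm_exp_ofReal_mul_I _

@[fun_prop] lemma continuous_ek (n : ℤ × ℤ) : Continuous (ek n) := by unfold ek; fun_prop

instance fin_dom : IsFiniteMeasure ((volume : Measure (ℝ × ℝ)).restrict Dom) := by
  refine ⟨?_⟩
  rw [Measure.restrict_apply_univ, Dom, Measure.volume_eq_prod, Measure.prod_prod]
  simp only [Real.volume_Ioc]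
  exact ENNReal.mul_lt_top ENNReal.ofReal_lt_top ENNReal.ofReal_lt_top

lemma vol_dom : (volume : Measure (ℝ × ℝ)).real Dom = 4 * π ^ 2 := by
  have := Real.pi_pos
  rw [Measure.real, Dom, Measure.volume_eq_prod, Measure.prod_prod]
  simp only [Real.volume_Ioc]
  rw [← ENNReal.ofReal_mul (by linarith), ENNReal.toReal_ofReal (by nlinarith)]
  ring

lemma int_exp (n : ℤ) : ∫ x in Ioc (-π) π, Complex.exp (Complex.I * ((n : ℂ) * (x : ℂ)))
    = if n = 0 then (2 * π : ℂ) else 0 := by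
  have hpi := Real.pi_pos
  rw [← intervalIntegral.integral_of_le (by linarith)]
  split_ifs with h
  · subst h
    simp; ring
  · have hne : Complex.I * (n : ℂ) ≠ 0 := by simp [h]
    simp_rw [← mul_assoc]
    rw [integral_exp_mul_complex hne]
    have : Complex.exp (Complex.I * n * (π : ℝ)) = Complex.exp (Complex.I * n * ((-π : ℝ))) := by
      rw [Complex.exp_eq_exp_iff_exists_int]
      exact ⟨n, by push_cast; ring⟩
    rw [this]; simp

lemma int_ek (n : ℤ × ℤ) : ∫ z in Dom, ek n z = if n = 0 then (4 * π ^ 2 : ℂ) else 0 := by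
  have : ∀ z, ek n z = Complex.exp (Complex.I * ((n.1 : ℂ) * (z.1 : ℂ)))
      * Complex.exp (Complex.I * ((n.2 : ℂ) * (z.2 : ℂ))) := by
    intro z; rw [ek, ← Complex.exp_add]; congr 1; ring
  simp_rw [this, Dom, Measure.volume_eq_prod]
  rw [setIntegral_prod_mul (fun x : ℝ => Complex.exp (Complex.I * ((n.1 : ℂ) * (x : ℂ))))
    (fun x : ℝ => Complex.exp (Complex.I * ((n.2 : ℂ) * (x : ℂ)))), int_exp, int_exp]
  by_cases h1 : n.1 = 0 <;> by_cases h2 : n.2 = 0 <;> simp [h1, h2, Prod.ext_iff]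
  ring

lemma co_ek (m n : ℤ × ℤ) : co (ek m) n = if n = m then (4 * π ^ 2 : ℂ) else 0 := by
  rw [co]
  simp_rw [← ek_add, int_ek]
  congr 1
  rw [← sub_eq_add_neg, sub_eq_zero, eq_comm (a := n)]

lemma memLp_ek (n : ℤ × ℤ) : MemLp (ek n) 2 (volume.restrict Dom) :=
  MemLp.of_bound (continuous_ek n).aestronglyMeasurable 1 (by simp)

lemma parseval_norm {f : ℝ × ℝ → ℂ} (hf : MemLp f 2 (volume.restrict Dom)) :
    HasSum (fun n => ‖co f n‖ ^ 2) (4 * π ^ 2 * ∫ z in Dom, ‖f z‖ ^ 2) := by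
  have h := parseval hf hf
  have e : ∀ w : ℂ, conj w * w = ((‖w‖ ^ 2 : ℝ) : ℂ) := fun w => by
    rw [mul_comm, Complex.mul_conj, Complex.normSq_eq_norm_sq]
  simp_rw [e] at h
  rw [integral_complex_ofReal] at h
  exact_mod_cast h

lemma memC {f : ℝ × ℝ → ℝ} {p : ℝ≥0∞} {μ : Measure (ℝ × ℝ)} (hf : MemLp f p μ) :
    MemLp (fun z => (f z : ℂ)) p μ := hf.ofReal

/-- Fourier coefficients of a real function -/
def cr (f : ℝ × ℝ → ℝ) (n : ℤ × ℤ) : ℂ := co (fun z => (f z : ℂ)) n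

lemma conj_cr (f : ℝ × ℝ → ℝ) (n : ℤ × ℤ) : conj (cr f n) = cr f (-n) := by
  rw [cr, cr, co, co, ← integral_conj]
  simp [conj_ek]

lemma parseval_real {f g : ℝ × ℝ → ℝ} (hf : MemLp f 2 (volume.restrict Dom))
    (hg : MemLp g 2 (volume.restrict Dom)) (l : ℤ × ℤ) :
    HasSum (fun n => cr f n * cr g (-l - n)) (4 * π ^ 2 * ∫ z in Dom, (f z * g z : ℂ) * ek l z) := by
  have hgl : MemLp (fun z => (g z : ℂ) * ek l z) 2 (volume.restrict Dom) :=
    (memLp_top_of_bound (continuous_ek l).aestronglyMeasurable 1 (by simp)).mul (memC hg)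
  have h := (Equiv.neg (ℤ × ℤ)).hasSum_iff.2 (parseval (memC hf) hgl)
  convert h using 1
  · ext n
    simp only [Function.comp, Equiv.neg_apply]
    have := conj_cr f (-n)
    rw [neg_neg] at this
    change _ = conj (cr f (-n)) * _
    rw [this]
    congr 1
    rw [cr, co, co]
    congr 1; ext z
    rw [mul_assoc, ← ek_add]
    congr 2; abel
  · simp [mul_assoc]

lemma parseval_cr {f g : ℝ × ℝ → ℝ} (hf : MemLp f 2 (volume.restrict Dom))
    (hg : MemLp g 2 (volume.restrict Dom)) :
    HasSum (fun n => (conj (cr f n) * cr g n).re) (4 * π ^ 2 * ∫ z in Dom, f z * g z) := by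
  have h := Complex.hasSum_re (parseval (memC hf) (memC hg))
  have : ∫ z in Dom, conj ((f z : ℝ) : ℂ) * (g z : ℂ) = ((∫ z in Dom, f z * g z : ℝ) : ℂ) := by
    rw [← integral_complex_ofReal]; simp
  convert h using 1
  · rfl
  rw [this, ← Complex.ofReal_re (4 * π ^ 2 * _)]
  push_cast; rfl

lemma parseval_cr_norm {f : ℝ × ℝ → ℝ} (hf : MemLp f 2 (volume.restrict Dom)) :
    HasSum (fun n => ‖cr f n‖ ^ 2) (4 * π ^ 2 * ∫ z in Dom, f z ^ 2) := by
  have := parseval_norm (memC hf)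
  simpa [cr] using this

/-- Trigonometric polynomial -/
def tp (S : Finset (ℤ × ℤ)) (c : ℤ × ℤ → ℂ) (z : ℝ × ℝ) : ℂ := ∑ l ∈ S, c l * ek l z

@[fun_prop] lemma continuous_tp (S c) : Continuous (tp S c) := by
  unfold tp; fun_prop

lemma tp_bound (S c) : ∃ B : ℝ, ∀ z, ‖tp S c z‖ ≤ B := by
  refine ⟨∑ l ∈ S, ‖c l‖, fun z => (norm_sum_le _ _).trans (by simp)⟩

lemma memLp_tp (S c) (p : ℝ≥0∞) : MemLp (tp S c) p (volume.restrict Dom) := by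
  obtain ⟨B, hB⟩ := tp_bound S c
  exact MemLp.of_bound (continuous_tp S c).aestronglyMeasurable B (by simp [hB])

lemma co_tp (S : Finset (ℤ × ℤ)) (c : ℤ × ℤ → ℂ) (n : ℤ × ℤ) :
    co (tp S c) n = if n ∈ S then 4 * π ^ 2 * c n else 0 := by
  have : co (tp S c) n = ∑ l ∈ S, c l * co (ek l) n := by
    simp only [co, tp, Finset.sum_mul]
    rw [integral_finsetSum]
    · simp_rw [mul_assoc, integral_const_mul]
    · intro l _
      exact (MemLp.of_bound (p := 1) (by fun_prop) (‖c l‖) (by simp)).integrable le_rfl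
  rw [this]
  simp_rw [co_ek]
  simp [mul_comm]

lemma tp_sq (S : Finset (ℤ × ℤ)) (c : ℤ × ℤ → ℂ) :
    ∫ z in Dom, ‖tp S c z‖ ^ 2 = 4 * π ^ 2 * ∑ l ∈ S, ‖c l‖ ^ 2 := by
  have hpi := Real.pi_pos
  have h := parseval_norm (memLp_tp S c 2)
  have h2 : HasSum (fun n => ‖co (tp S c) n‖ ^ 2) (∑ l ∈ S, ‖co (tp S c) l‖ ^ 2) :=
    hasSum_sum_of_ne_finset_zero (by intro b hb; simp [co_tp, hb])
  have h3 := h.unique h2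
  have h4 : ∑ l ∈ S, ‖co (tp S c) l‖ ^ 2 = (4 * π ^ 2) ^ 2 * ∑ l ∈ S, ‖c l‖ ^ 2 := by
    rw [Finset.mul_sum]
    refine Finset.sum_congr rfl fun l hl => ?_
    rw [co_tp, if_pos hl, norm_mul, mul_pow]
    congr 2
    rw [show (4 * π ^ 2 : ℂ) = ((4 * π ^ 2 : ℝ) : ℂ) by push_cast; rfl, Complex.norm_real,
      Real.norm_of_nonneg (by positivity)]
  rw [h4] at h3
  have : (4 * π ^ 2) ≠ 0 := by positivity
  apply mul_left_cancel₀ this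
  rw [h3]; ring


lemma sum_even (g : ℕ → ℝ) (N : ℕ) :
    ∑ j ∈ Finset.Icc (-(N : ℤ)) N, g j.natAbs = g 0 + 2 * ∑ j ∈ Finset.range N, g (j + 1) := by
  induction N with
  | zero => simp
  | succ N ih =>
    have : Finset.Icc (-((N + 1 : ℕ) : ℤ)) ((N + 1 : ℕ) : ℤ)
        = insert ((N + 1 : ℕ) : ℤ) (insert (-((N + 1 : ℕ) : ℤ)) (Finset.Icc (-(N : ℤ)) N)) := by
      ext x; simp only [Finset.mem_Icc, Finset.mem_insert]; omega
    rw [this, Finset.sum_insert, Finset.sum_insert, ih, Finset.sum_range_succ]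
    · simp only [Int.natAbs_neg, Int.natAbs_natCast]; ring
    · simp
    · simp only [Finset.mem_insert, Finset.mem_Icc]; omega

lemma sum_inv_sq (c : ℝ) (hc : 1 ≤ c) (N : ℕ) :
    ∑ j ∈ Finset.range N, 1 / (c + ((j + 1 : ℕ) : ℝ)) ^ 2 ≤ 1 / c - 1 / (c + N) := by
  induction N with
  | zero => simp
  | succ N ih =>
    rw [Finset.sum_range_succ]
    have h : (0 : ℝ) < c + N := by positivity
    have : 1 / (c + ((N + 1 : ℕ) : ℝ)) ^ 2 ≤ 1 / (c + N) - 1 / (c + ((N + 1 : ℕ) : ℝ)) := by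
      push_cast
      rw [div_sub_div _ _ (by positivity) (by positivity), div_le_div_iff₀ (by positivity) (by positivity)]
      nlinarith
    linarith

lemma sum_inv (N : ℕ) :
    ∑ j ∈ Finset.range N, 1 / (1 + ((j + 1 : ℕ) : ℝ)) ≤ Real.log (N + 1) := by
  induction N with
  | zero => simp
  | succ N ih =>
    rw [Finset.sum_range_succ]
    have := Real.one_sub_inv_le_log_of_pos (x := ((N : ℝ) + 2) / (N + 1)) (by positivity)
    rw [Real.log_div (by positivity) (by positivity)] at this
    have h2 : 1 - (((N : ℝ) + 2) / (N + 1))⁻¹ = 1 / (1 + ((N + 1 : ℕ) : ℝ)) := by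
      push_cast; field_simp; ring
    rw [h2] at this
    push_cast at *
    rw [show (N : ℝ) + 1 + 1 = N + 2 by ring]
    linarith

/-- frequency box -/
def box (N : ℕ) : Finset (ℤ × ℤ) := Finset.Icc (-(N : ℤ)) N ×ˢ Finset.Icc (-(N : ℤ)) N

/-- the size `1+|l₁|+|l₂|` -/
def sz (l : ℤ × ℤ) : ℝ := 1 + |(l.1 : ℝ)| + |(l.2 : ℝ)|

lemma log_succ_le (N : ℕ) (hN : 1 ≤ N) : Real.log (N + 1) ≤ 1 + Real.log N := by
  have hN' : (1 : ℝ) ≤ N := by exact_mod_cast hN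
  have : Real.log (N + 1) ≤ Real.log (2 * N) := Real.log_le_log (by positivity) (by linarith)
  rw [Real.log_mul (by norm_num) (by positivity)] at this
  have := Real.log_two_lt_d9
  linarith

lemma sum_box (N : ℕ) (hN : 1 ≤ N) :
    ∑ l ∈ box N, 1 / sz l ^ 2 ≤ 9 * (1 + Real.log N) := by
  have hN' : (1 : ℝ) ≤ N := by exact_mod_cast hN
  have e : ∀ j : ℤ, |(j : ℝ)| = (j.natAbs : ℝ) := fun j => by
    rw [Nat.cast_natAbs, Int.cast_abs]
  rw [box, Finset.sum_product]
  have h1 : ∀ j : ℤ, ∑ k ∈ Finset.Icc (-(N : ℤ)) N, 1 / sz (j, k) ^ 2 ≤ 3 * (1 / (1 + (j.natAbs : ℝ))) := by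
    intro j
    simp only [sz, e]
    rw [sum_even (fun k => 1 / (1 + (j.natAbs : ℝ) + (k : ℝ)) ^ 2) N]
    have h := sum_inv_sq (1 + j.natAbs) (by linarith [(Nat.cast_nonneg j.natAbs : (0:ℝ) ≤ _)]) N
    have h3 : 0 ≤ 1 / (1 + (j.natAbs : ℝ) + N) := by positivity
    have h4 : 1 / (1 + (j.natAbs : ℝ) + ((0 : ℕ) : ℝ)) ^ 2 ≤ 1 / (1 + (j.natAbs : ℝ)) := by
      apply one_div_le_one_div_of_le (by positivity)
      have : (0 : ℝ) ≤ j.natAbs := by positivity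
      push_cast
      nlinarith
    linarith
  refine (Finset.sum_le_sum fun j _ => h1 j).trans ?_
  rw [← Finset.mul_sum, sum_even (fun k => 1 / (1 + (k : ℝ))) N]
  have := sum_inv N
  have := log_succ_le N hN
  have := Real.log_nonneg hN'
  norm_num at *
  linarith

/-- weight -/
def wt (N : ℕ) (z : ℝ × ℝ) : ℝ := 1 / (N : ℝ) ^ 2 + (2 - 2 * Real.cos z.1) + (2 - 2 * Real.cos z.2)

lemma wt_pos {N : ℕ} (hN : 1 ≤ N) (z) : 0 < wt N z := by
  have hN' : (0 : ℝ) < N := by exact_mod_cast hN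
  have := Real.cos_le_one z.1
  have := Real.cos_le_one z.2
  have : 0 < 1 / (N : ℝ) ^ 2 := by positivity
  unfold wt; linarith

lemma continuous_wt (N : ℕ) : Continuous (wt N) := by unfold wt; fun_prop

lemma wt_lower {N : ℕ} (hN : 1 ≤ N) {x y : ℝ} (hx : |x| ≤ π) (hy : |y| ≤ π) :
    1 / wt N (x, y) ≤ 12 / (1 / N + |x| + |y|) ^ 2 := by
  have hN' : (0 : ℝ) < N := by exact_mod_cast hN
  have hd : 0 < 1 / (N : ℝ) := by positivity
  have hpi : 2 / π ^ 2 ≥ 1 / 8 := by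
    rw [ge_iff_le, div_le_div_iff₀ (by norm_num) (by positivity)]
    nlinarith [Real.pi_lt_four, Real.pi_pos]
  have h1 := Real.cos_le_one_sub_mul_cos_sq hx
  have h2 := Real.cos_le_one_sub_mul_cos_sq hy
  rw [div_le_div_iff₀ (wt_pos hN _) (by positivity)]
  unfold wt
  simp only
  have h3 : 1 / 8 * x ^ 2 ≤ 2 / π ^ 2 * x ^ 2 := mul_le_mul_of_nonneg_right hpi (sq_nonneg _)
  have h4 : 1 / 8 * y ^ 2 ≤ 2 / π ^ 2 * y ^ 2 := mul_le_mul_of_nonneg_right hpi (sq_nonneg _)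
  have e : 1 / (N : ℝ) ^ 2 = (1 / (N : ℝ)) ^ 2 := by ring
  rw [e]
  rw [← sq_abs x] at h3
  rw [← sq_abs y] at h4
  rw [sq_abs] at h3 h4
  have hx2 := sq_abs x
  have hy2 := sq_abs y
  nlinarith [sq_nonneg (1 / (N : ℝ) - |x|), sq_nonneg (1 / (N : ℝ) - |y|), sq_nonneg (|x| - |y|),
    sq_nonneg (1 / (N : ℝ))]

lemma int_even (g : ℝ → ℝ) (hg : Continuous g) :
    ∫ x in (-π)..π, g |x| = 2 * ∫ x in (0 : ℝ)..π, g x := by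
  have hpi := Real.pi_pos
  have hc : Continuous fun x : ℝ => g |x| := hg.comp continuous_abs
  rw [← intervalIntegral.integral_add_adjacent_intervals (b := 0) (hc.intervalIntegrable _ _)
    (hc.intervalIntegrable _ _)]
  have h1 : ∫ x in (-π)..0, g |x| = ∫ x in (0:ℝ)..π, g |x| := by
    have := intervalIntegral.integral_comp_neg (a := 0) (b := π) (fun x => g |x|)
    simp only [abs_neg, neg_zero] at this
    exact this.symm
  have h2 : ∫ x in (0:ℝ)..π, g |x| = ∫ x in (0:ℝ)..π, g x := by
    apply intervalIntegral.integral_congr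
    intro x hx
    rw [uIcc_of_le hpi.le] at hx
    simp only [abs_of_nonneg hx.1]
  rw [h1, h2]; ring

lemma int_inv_sq (c : ℝ) (hc : 0 < c) : ∫ x in (-π)..π, 1 / (c + |x|) ^ 2 ≤ 2 / c := by
  have hpi := Real.pi_pos
  have h := int_even (fun x => 1 / (c + |x|) ^ 2) (by
    refine Continuous.div (by fun_prop) (by fun_prop) (fun x => ?_); positivity)
  simp only [abs_abs] at h
  rw [h]
  have h2 : ∫ x in (0:ℝ)..π, 1 / (c + |x|) ^ 2 = ∫ x in (0:ℝ)..π, 1 / (c + x) ^ 2 := by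
    apply intervalIntegral.integral_congr
    intro x hx
    rw [uIcc_of_le hpi.le] at hx
    simp only [abs_of_nonneg hx.1]
  have h3 : ∫ x in (0:ℝ)..π, 1 / (c + x) ^ 2 = -(c + π)⁻¹ - -(c + 0)⁻¹ := by
    refine intervalIntegral.integral_eq_sub_of_hasDerivAt (f := fun x => -(c + x)⁻¹) ?_ ?_
    · intro x hx
      rw [uIcc_of_le hpi.le] at hx
      have : c + x ≠ 0 := by linarith [hx.1]
      have := (((hasDerivAt_id x).const_add c).inv this).neg
      have e2 : -(-1 / (c + id x) ^ 2) = 1 / (c + x) ^ 2 := by simp only [id]; ring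
      rw [e2] at this
      exact this
    · apply ContinuousOn.intervalIntegrable
      rw [uIcc_of_le hpi.le]
      refine ContinuousOn.div (by fun_prop) (by fun_prop) (fun x hx => ?_)
      have : 0 < c + x := by linarith [hx.1]
      positivity
  rw [h2, h3]
  have : 0 < (c + π)⁻¹ := by positivity
  rw [add_zero, div_eq_mul_inv]; linarith

lemma int_inv (c : ℝ) (hc : 0 < c) : ∫ x in (-π)..π, 1 / (c + |x|) = 2 * Real.log ((c + π) / c) := by
  have hpi := Real.pi_pos
  have h := int_even (fun x => 1 / (c + |x|)) (by
    refine Continuous.div (by fun_prop) (by fun_prop) (fun x => ?_); positivity)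
  simp only [abs_abs] at h
  rw [h]
  have h2 : ∫ x in (0:ℝ)..π, 1 / (c + |x|) = ∫ x in (0:ℝ)..π, 1 / (c + x) := by
    apply intervalIntegral.integral_congr
    intro x hx
    rw [uIcc_of_le hpi.le] at hx
    simp only [abs_of_nonneg hx.1]
  have h3 : ∫ x in (0:ℝ)..π, 1 / (c + x) = Real.log (c + π) - Real.log (c + 0) := by
    refine intervalIntegral.integral_eq_sub_of_hasDerivAt (f := fun x => Real.log (c + x)) ?_ ?_
    · intro x hx
      rw [uIcc_of_le hpi.le] at hx
      have : c + x ≠ 0 := by linarith [hx.1]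
      exact ((hasDerivAt_id x).const_add c).log this
    · apply ContinuousOn.intervalIntegrable
      rw [uIcc_of_le hpi.le]
      refine ContinuousOn.div (by fun_prop) (by fun_prop) (fun x hx => ?_)
      have : 0 < c + x := by linarith [hx.1]
      positivity
  rw [h2, h3, add_zero, Real.log_div (by positivity) (by positivity)]

lemma per_shift (g : ℝ → ℝ) (hg : Function.Periodic g (2 * π)) (a : ℝ) :
    ∫ x in (-π)..π, g (a - x) = ∫ x in (-π)..π, g x := by
  rw [intervalIntegral.integral_comp_sub_left]
  have := hg.intervalIntegral_add_eq (a - π) (-π)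
  convert this using 2 <;> ring

lemma int_dom {g : ℝ × ℝ → ℝ} (hg : Continuous g) :
    ∫ z in Dom, g z = ∫ x in (-π)..π, ∫ y in (-π)..π, g (x, y) := by
  have hpi := Real.pi_pos
  rw [intervalIntegral.integral_of_le (by linarith)]
  simp_rw [intervalIntegral.integral_of_le (show -π ≤ π by linarith)]
  rw [Dom, Measure.volume_eq_prod, setIntegral_prod]
  have : IntegrableOn g (Icc (-π) π ×ˢ Icc (-π) π) (volume.prod volume) :=
    hg.continuousOn.integrableOn_compact (isCompact_Icc.prod isCompact_Icc)
  exact this.mono_set (prod_mono Ioc_subset_Icc_self Ioc_subset_Icc_self)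

lemma int_wt {N : ℕ} (hN : 1 ≤ N) (z₀ : ℝ × ℝ) :
    ∫ z in Dom, 1 / wt N (z₀ - z) ≤ 96 * (1 + Real.log N) := by
  have hpi := Real.pi_pos
  have hN' : (1 : ℝ) ≤ N := by exact_mod_cast hN
  have hc : Continuous fun z => 1 / wt N z :=
    continuous_const.div (continuous_wt N) fun z => (wt_pos hN z).ne'
  rw [int_dom (g := fun z => 1 / wt N (z₀ - z)) (hc.comp (by fun_prop))]
  have p1 : ∀ x, ∫ y in (-π)..π, 1 / wt N (z₀ - (x, y)) = ∫ y in (-π)..π, 1 / wt N (z₀.1 - x, y) := by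
    intro x
    exact per_shift (fun y => 1 / wt N (z₀.1 - x, y)) (fun y => by simp [wt]) z₀.2
  simp_rw [p1]
  rw [per_shift (fun x => ∫ y in (-π)..π, 1 / wt N (x, y)) (fun x => by simp [wt]) z₀.1]
  have h1 : ∀ x ∈ Icc (-π) π, ∫ y in (-π)..π, 1 / wt N (x, y) ≤ 24 * (1 / (1 / N + |x|)) := by
    intro x hx
    have hc1 : Continuous fun y : ℝ => 12 / (1 / (N : ℝ) + |x| + |y|) ^ 2 := by
      refine Continuous.div (by fun_prop) (by fun_prop) (fun x => ?_); positivity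
    calc ∫ y in (-π)..π, 1 / wt N (x, y) ≤ ∫ y in (-π)..π, 12 / (1 / (N : ℝ) + |x| + |y|) ^ 2 := by
          apply intervalIntegral.integral_mono_on (by linarith)
          · exact (hc.comp (by fun_prop : Continuous fun y : ℝ => (x, y))).intervalIntegrable _ _
          · exact hc1.intervalIntegrable _ _
          · intro y hy
            exact wt_lower hN (abs_le.2 hx) (abs_le.2 hy)
      _ = 12 * ∫ y in (-π)..π, 1 / (1 / (N : ℝ) + |x| + |y|) ^ 2 := by
          rw [← intervalIntegral.integral_const_mul]; simp only [mul_one_div]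
      _ ≤ 12 * (2 / (1 / (N : ℝ) + |x|)) := by
          gcongr; exact int_inv_sq _ (by positivity)
      _ = _ := by ring
  calc ∫ x in (-π)..π, ∫ y in (-π)..π, 1 / wt N (x, y)
      ≤ ∫ x in (-π)..π, 24 * (1 / (1 / (N : ℝ) + |x|)) := by
        apply intervalIntegral.integral_mono_on (by linarith) _ _ h1
        · apply Continuous.intervalIntegrable
          exact intervalIntegral.continuous_parametric_intervalIntegral_of_continuous' 
            (f := fun x y => 1 / wt N (x, y)) hc _ _
        · apply Continuous.intervalIntegrable
          refine continuous_const.mul (Continuous.div (by fun_prop) (by fun_prop) (fun x => ?_))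
          positivity
    _ = 24 * (2 * Real.log ((1 / N + π) / (1 / N))) := by
        rw [intervalIntegral.integral_const_mul, int_inv _ (by positivity)]
    _ ≤ 96 * (1 + Real.log N) := by
        have e : ((1 / (N : ℝ) + π) / (1 / N)) = 1 + π * N := by field_simp
        have : Real.log (1 + π * N) ≤ Real.log (5 * N) := by
          apply Real.log_le_log (by positivity)
          nlinarith [Real.pi_lt_four]
        rw [Real.log_mul (by norm_num) (by positivity)] at this
        have h5 : Real.log 5 ≤ 2 := by
          rw [Real.log_le_iff_le_exp (by norm_num)]
          have := Real.exp_one_gt_d9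
          rw [show (2 : ℝ) = 1 + 1 by norm_num, Real.exp_add]
          nlinarith
        have := Real.log_nonneg hN'
        rw [e]
        linarith


lemma mem_box {N : ℕ} {l : ℤ × ℤ} : l ∈ box N ↔ |l.1| ≤ N ∧ |l.2| ≤ N := by
  simp [box, abs_le]

lemma shift_sum (N : ℕ) (m : ℤ × ℤ → ℝ) (hs : ∀ l : ℤ × ℤ, ¬(|l.1| < N ∧ |l.2| < N) → m l = 0)
    (e : ℤ × ℤ) (he : |e.1| ≤ 1 ∧ |e.2| ≤ 1) (F : ℤ × ℤ → ℂ) :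
    ∑ l ∈ box N, (m l : ℂ) * F (l + e) = ∑ l ∈ box N, (m (l - e) : ℂ) * F l := by
  have h1 : ∑' l, (m l : ℂ) * F (l + e) = ∑ l ∈ box N, (m l : ℂ) * F (l + e) :=
    tsum_eq_sum fun l hl => by
      rw [hs l]; · simp
      rintro ⟨h1, h2⟩; exact hl (mem_box.2 ⟨h1.le, h2.le⟩)
  have h2 : ∑' l, (m (l - e) : ℂ) * F l = ∑ l ∈ box N, (m (l - e) : ℂ) * F l :=
    tsum_eq_sum fun l hl => by
      rw [hs (l - e)]; · simp
      rintro ⟨h1, h2⟩; apply hl; rw [mem_box]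
      simp only [Prod.fst_sub, Prod.snd_sub] at h1 h2
      rw [abs_lt] at h1 h2; rw [abs_le] at he; rw [abs_le, abs_le]
      have := abs_le.1 he.2
      omega
  rw [← h1, ← h2, ← (Equiv.addRight e).tsum_eq (fun l => (m (l - e) : ℂ) * F l)]
  simp

lemma norm_sub_one_sq (w : ℂ) (hw : ‖w‖ = 1) : ‖w - 1‖ ^ 2 = 2 - 2 * w.re := by
  have : ‖w‖ ^ 2 = 1 := by rw [hw]; norm_num
  rw [Complex.sq_norm, Complex.normSq_apply] at *
  simp only [Complex.sub_re, Complex.sub_im, Complex.one_re, Complex.one_im]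
  linarith

/-- the kernel of a truncated multiplier -/
def ker (N : ℕ) (m : ℤ × ℤ → ℝ) (z : ℝ × ℝ) : ℝ × ℝ → ℂ := tp (box N) (fun l => m l * ek (-l) z)

lemma ker_shift (N : ℕ) (m : ℤ × ℤ → ℝ) (hs : ∀ l : ℤ × ℤ, ¬(|l.1| < N ∧ |l.2| < N) → m l = 0)
    (e : ℤ × ℤ) (he : |e.1| ≤ 1 ∧ |e.2| ≤ 1) (z z' : ℝ × ℝ) :
    (ek e z' * ek (-e) z - 1) * ker N m z z'
      = tp (box N) (fun l => ((m (l - e) - m l : ℝ) : ℂ) * ek (-l) z) z' := by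
  have := shift_sum N m hs e he (fun l => ek (-l) z * ek l z')
  simp only [ker, tp]
  have e1 : ∑ l ∈ box N, ((m (l - e) - m l : ℝ) : ℂ) * ek (-l) z * ek l z'
    = ∑ l ∈ box N, (m (l - e) : ℂ) * (ek (-l) z * ek l z')
      - ∑ l ∈ box N, (m l : ℂ) * (ek (-l) z * ek l z') := by
    rw [← Finset.sum_sub_distrib]
    refine Finset.sum_congr rfl fun l _ => ?_
    push_cast; ring
  rw [e1, ← this, ← Finset.sum_sub_distrib, Finset.mul_sum]
  refine Finset.sum_congr rfl fun l _ => ?_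
  rw [neg_add, ek_add, ek_add]
  ring

lemma ker_norm (N : ℕ) (m : ℤ × ℤ → ℝ) (hs : ∀ l : ℤ × ℤ, ¬(|l.1| < N ∧ |l.2| < N) → m l = 0)
    (z z' : ℝ × ℝ) :
    wt N (z - z') * ‖ker N m z z'‖ ^ 2 = 1 / (N : ℝ) ^ 2 * ‖ker N m z z'‖ ^ 2
      + ‖tp (box N) (fun l => ((m (l - (1, 0)) - m l : ℝ) : ℂ) * ek (-l) z) z'‖ ^ 2
      + ‖tp (box N) (fun l => ((m (l - (0, 1)) - m l : ℝ) : ℂ) * ek (-l) z) z'‖ ^ 2 := by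
  rw [← ker_shift N m hs (1, 0) (by simp), ← ker_shift N m hs (0, 1) (by simp), norm_mul, norm_mul,
    mul_pow, mul_pow, norm_sub_one_sq _ (by simp), norm_sub_one_sq _ (by simp)]
  have a1 : (ek (1, 0) z' * ek (-(1, 0)) z).re = Real.cos (z - z').1 := by
    rw [ek, ek, ← Complex.exp_add, ← Real.cos_neg, ← Complex.exp_ofReal_mul_I_re]
    congr 2; simp; ring
  have a2 : (ek (0, 1) z' * ek (-(0, 1)) z).re = Real.cos (z - z').2 := by
    rw [ek, ek, ← Complex.exp_add, ← Real.cos_neg, ← Complex.exp_ofReal_mul_I_re]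
    congr 2; simp; ring
  rw [a1, a2, wt]; ring

lemma ker_bound (N : ℕ) (hN : 1 ≤ N) (m : ℤ × ℤ → ℝ)
    (hs : ∀ l : ℤ × ℤ, ¬(|l.1| < N ∧ |l.2| < N) → m l = 0) (b : ℝ) 
    (hm : ∀ l, |m l| ≤ 1) (hd1 : ∀ l, |m (l - (1, 0)) - m l| ≤ b / sz l)
    (hd2 : ∀ l, |m (l - (0, 1)) - m l| ≤ b / sz l) (z : ℝ × ℝ) :
    ∫ z' in Dom, ‖ker N m z z'‖ ≤ (48 + 18 * π ^ 2 * (1 + 2 * b ^ 2)) * (1 + Real.log N) := by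
  have hpi := Real.pi_pos
  have hN' : (1 : ℝ) ≤ N := by exact_mod_cast hN
  have hlog := Real.log_nonneg hN'
  have hsz : ∀ l, 0 < sz l := fun l => by unfold sz; positivity
  have hI : ∀ c, Integrable (fun z' => ‖tp (box N) c z'‖ ^ 2) (volume.restrict Dom) := fun c =>
    (memLp_tp (box N) c 2).integrable_norm_pow (by norm_num)
  have hdiff : ∀ (e : ℤ × ℤ), (∀ l, |m (l - e) - m l| ≤ b / sz l) →
      ∫ z' in Dom, ‖tp (box N) (fun l => ((m (l - e) - m l : ℝ) : ℂ) * ek (-l) z) z'‖ ^ 2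
        ≤ 4 * π ^ 2 * (b ^ 2 * (9 * (1 + Real.log N))) := by
    intro e he
    rw [tp_sq]
    gcongr
    calc _ ≤ ∑ l ∈ box N, b ^ 2 * (1 / sz l ^ 2) := by
          refine Finset.sum_le_sum fun l _ => ?_
          rw [norm_mul, norm_ek, mul_one, Complex.norm_real, Real.norm_eq_abs]
          calc _ ≤ (b / sz l) ^ 2 := by gcongr; exact he l
            _ = _ := by ring
      _ ≤ _ := by rw [← Finset.mul_sum]; gcongr; exact sum_box N hN
  have hself : 1 / (N : ℝ) ^ 2 * ∫ z' in Dom, ‖ker N m z z'‖ ^ 2 ≤ 4 * π ^ 2 * 9 := by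
    rw [ker, tp_sq]
    have : ∑ l ∈ box N, ‖(m l : ℂ) * ek (-l) z‖ ^ 2 ≤ (3 * N) ^ 2 := by
      calc _ ≤ ∑ l ∈ box N, (1 : ℝ) := by
            refine Finset.sum_le_sum fun l _ => ?_
            rw [norm_mul, norm_ek, mul_one, Complex.norm_real, Real.norm_eq_abs]
            have := hm l
            have := abs_nonneg (m l)
            nlinarith
        _ = (2 * N + 1) ^ 2 := by
            rw [Finset.sum_const, box, Finset.card_product, Int.card_Icc, nsmul_eq_mul, mul_one]
            rw [show ((N : ℤ) + 1 - -(N : ℤ)).toNat = 2 * N + 1 by omega]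
            push_cast; ring
        _ ≤ _ := by gcongr; linarith
    calc _ ≤ 1 / (N : ℝ) ^ 2 * (4 * π ^ 2 * (3 * N) ^ 2) := by gcongr
      _ = _ := by field_simp; norm_num
  have hW : ∫ z' in Dom, wt N (z - z') * ‖ker N m z z'‖ ^ 2
      ≤ 4 * π ^ 2 * (9 * (1 + 2 * b ^ 2)) * (1 + Real.log N) := by
    simp_rw [ker_norm N m hs]
    rw [integral_add, integral_add, integral_const_mul]
    · have := hdiff _ hd1
      have := hdiff _ hd2
      have : 0 ≤ 4 * π ^ 2 * 9 * Real.log N := by positivity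
      linarith
    · exact (hI _).const_mul _
    · exact hI _
    · exact ((hI _).const_mul _).add (hI _)
    · exact hI _
  have hc : Continuous fun z' => 1 / wt N (z - z') :=
    continuous_const.div ((continuous_wt N).comp (by fun_prop)) fun z => (wt_pos hN _).ne'
  have hcK : Continuous (ker N m z) := continuous_tp _ _
  have cI : ∀ g : ℝ × ℝ → ℝ, Continuous g → IntegrableOn g Dom := by
    intro g hg
    have : IntegrableOn g (Icc (-π) π ×ˢ Icc (-π) π) :=
      hg.continuousOn.integrableOn_compact (isCompact_Icc.prod isCompact_Icc)
    exact this.mono_set (prod_mono Ioc_subset_Icc_self Ioc_subset_Icc_self)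
  have hcW : Continuous fun z' => wt N (z - z') := (continuous_wt N).comp (by fun_prop)
  calc ∫ z' in Dom, ‖ker N m z z'‖
      ≤ ∫ z' in Dom, (1 / 2 * (1 / wt N (z - z')) + 1 / 2 * (wt N (z - z') * ‖ker N m z z'‖ ^ 2)) := by
        apply integral_mono
        · exact cI _ hcK.norm
        · exact cI _ (by fun_prop)
        · intro z'
          have hp := wt_pos hN (z - z')
          simp only
          rw [← sub_nonneg]
          have : 1 / 2 * (1 / wt N (z - z')) + 1 / 2 * (wt N (z - z') * ‖ker N m z z'‖ ^ 2) - ‖ker N m z z'‖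
            = 1 / (2 * wt N (z - z')) * (wt N (z - z') * ‖ker N m z z'‖ - 1) ^ 2 := by
              field_simp; ring
          rw [this]; positivity
    _ = 1 / 2 * (∫ z' in Dom, 1 / wt N (z - z')) +
          1 / 2 * ∫ z' in Dom, wt N (z - z') * ‖ker N m z z'‖ ^ 2 := by
        rw [integral_add, integral_const_mul, integral_const_mul]
        · exact cI _ (by fun_prop)
        · exact cI _ (by fun_prop)
    _ ≤ 1 / 2 * (96 * (1 + Real.log N)) + 1 / 2 * (4 * π ^ 2 * (9 * (1 + 2 * b ^ 2)) * (1 + Real.log N)) := by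
        gcongr
        exact int_wt hN z
    _ = _ := by ring

lemma mult_bound (N : ℕ) (hN : 1 ≤ N) (m : ℤ × ℤ → ℝ)
    (hs : ∀ l : ℤ × ℤ, ¬(|l.1| < N ∧ |l.2| < N) → m l = 0) (b : ℝ) 
    (hm : ∀ l, |m l| ≤ 1) (hd1 : ∀ l, |m (l - (1, 0)) - m l| ≤ b / sz l)
    (hd2 : ∀ l, |m (l - (0, 1)) - m l| ≤ b / sz l) 
    (f : ℝ × ℝ → ℝ) (hf : AEStronglyMeasurable f (volume.restrict Dom)) (M : ℝ) (hM : 0 ≤ M)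
    (hfM : ∀ᵐ z ∂(volume.restrict Dom), |f z| ≤ M) (z : ℝ × ℝ) :
    ‖tp (box N) (fun l => m l * cr f l) z‖
      ≤ M * ((48 + 18 * π ^ 2 * (1 + 2 * b ^ 2)) * (1 + Real.log N)) := by
  have hf1 : MemLp (fun z => (f z : ℂ)) 1 (volume.restrict Dom) :=
    memC (MemLp.of_bound hf M hfM)
  have e : tp (box N) (fun l => m l * cr f l) z = ∫ z' in Dom, (f z' : ℂ) * conj (ker N m z z') := by
    simp only [tp, ker, cr, co, map_sum, map_mul, Complex.conj_ofReal, conj_ek, neg_neg, Finset.mul_sum]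
    rw [integral_finsetSum]
    · refine Finset.sum_congr rfl fun l _ => ?_
      rw [mul_right_comm, ← integral_const_mul]
      congr 1; ext z'; ring
    · intro l _
      have : Integrable (fun z' => (f z' : ℂ) * ek (-l) z') (volume.restrict Dom) :=
        (hf1.integrable le_rfl).mul_bdd (c := 1) (by fun_prop) (by simp)
      convert this.mul_const ((m l : ℂ) * ek l z) using 2; ring
  rw [e]
  refine le_trans ?_ (mul_le_mul_of_nonneg_left (ker_bound N hN m hs b hm hd1 hd2 z) hM)
  rw [← integral_const_mul]
  have hK : Integrable (fun z' => ‖ker N m z z'‖) (volume.restrict Dom) :=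
    ((memLp_tp (box N) _ 1).integrable le_rfl).norm
  refine norm_integral_le_of_norm_le (hK.const_mul M) ?_
  filter_upwards [hfM] with z' hz'
  rw [norm_mul, Complex.norm_real, RCLike.norm_conj, Real.norm_eq_abs]
  gcongr


/-- squared length of a frequency -/
def nsq (l : ℤ × ℤ) : ℝ := (l.1 : ℝ) ^ 2 + (l.2 : ℝ) ^ 2

lemma abs_le_sq (n : ℤ) : |(n : ℝ)| ≤ (n : ℝ) ^ 2 := by
  rw [← sq_abs, ← Int.cast_abs]
  have : |n| ≤ |n| ^ 2 := by
    rcases (abs_nonneg n).eq_or_lt with h | h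
    · rw [← h]; norm_num
    · nlinarith
  exact_mod_cast this

lemma one_le_nsq {l : ℤ × ℤ} (hl : l ≠ 0) : 1 ≤ nsq l := by
  have h : 0 < l.1 ^ 2 + l.2 ^ 2 := by
    by_contra h
    have h1 : l.1 ^ 2 = 0 := by nlinarith [sq_nonneg l.1, sq_nonneg l.2]
    have h2 : l.2 ^ 2 = 0 := by nlinarith [sq_nonneg l.1, sq_nonneg l.2]
    exact hl (Prod.ext (by simpa using h1) (by simpa using h2))
  have : 1 ≤ l.1 ^ 2 + l.2 ^ 2 := h
  unfold nsq; exact_mod_cast this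

lemma nsq_nonneg (l) : 0 ≤ nsq l := by unfold nsq; positivity
lemma nsq_zero : nsq 0 = 0 := by simp [nsq]
lemma sz_pos (l) : 0 < sz l := by unfold sz; positivity

lemma quot_diff {l l' : ℤ × ℤ} (hl : l ≠ 0) (hl' : l' ≠ 0) {A A' : ℝ}
    (h : |A' * nsq l - A * nsq l'| ≤ (1 + 2 * |(l.1 : ℝ)| + 2 * |(l.2 : ℝ)|) * nsq l') :
    |A' / nsq l' - A / nsq l| ≤ 8 / sz l := by
  have h1 := one_le_nsq hl
  have h2 := one_le_nsq hl'
  have e : A' / nsq l' - A / nsq l = (A' * nsq l - A * nsq l') / (nsq l * nsq l') := by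
    field_simp
  rw [e, abs_div, abs_of_pos (by positivity : 0 < nsq l * nsq l'),
    div_le_div_iff₀ (by positivity) (sz_pos l)]
  have h3 := abs_le_sq l.1
  have h4 := abs_le_sq l.2
  have k1 := abs_nonneg (l.1 : ℝ)
  have k2 := abs_nonneg (l.2 : ℝ)
  have k3 := sq_abs (l.1 : ℝ)
  have k4 := sq_abs (l.2 : ℝ)
  calc _ ≤ (1 + 2 * |(l.1 : ℝ)| + 2 * |(l.2 : ℝ)|) * nsq l' * sz l :=
        mul_le_mul_of_nonneg_right h (sz_pos l).le
    _ = ((1 + 2 * |(l.1 : ℝ)| + 2 * |(l.2 : ℝ)|) * sz l) * nsq l' := by ring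
    _ ≤ (8 * nsq l) * nsq l' := by
        refine mul_le_mul_of_nonneg_right ?_ (nsq_nonneg l')
        unfold sz nsq at *
        nlinarith [sq_nonneg (|(l.1 : ℝ)| - |(l.2 : ℝ)|)]
    _ = _ := by ring

/-- triangular cutoff -/
def tri (N : ℕ) (n : ℤ) : ℝ := max 0 (1 - |(n : ℝ)| / N)

/-- product cutoff -/
def chi (N : ℕ) (l : ℤ × ℤ) : ℝ := tri N l.1 * tri N l.2

lemma tri_nonneg (N n) : 0 ≤ tri N n := le_max_left _ _
lemma tri_le (N n) : tri N n ≤ 1 := by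
  unfold tri
  have : 0 ≤ |(n : ℝ)| / N := by positivity
  exact max_le (by norm_num) (by linarith)
lemma tri_ge (N : ℕ) (n : ℤ) : 1 - |(n : ℝ)| / N ≤ tri N n := le_max_right _ _
lemma tri_zero {N : ℕ} (hN : 1 ≤ N) {n : ℤ} (hn : ¬ |n| < N) : tri N n = 0 := by
  have hN' : (0 : ℝ) < N := by exact_mod_cast hN
  apply max_eq_left
  have : ((N : ℤ) : ℝ) ≤ ((|n| : ℤ) : ℝ) := by exact_mod_cast not_lt.1 hn
  rw [Int.cast_abs] at this
  rw [sub_nonpos, le_div_iff₀ hN']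
  simpa using this
lemma tri_lip {N : ℕ} (hN : 1 ≤ N) (n : ℤ) : |tri N (n - 1) - tri N n| ≤ 1 / N := by
  have hN' : (0 : ℝ) < N := by exact_mod_cast hN
  unfold tri
  rw [max_comm 0, max_comm 0]
  refine (abs_max_sub_max_le_abs _ _ 0).trans ?_
  · have : 1 - |((n - 1 : ℤ) : ℝ)| / N - (1 - |(n : ℝ)| / N) = (|(n : ℝ)| - |((n - 1 : ℤ) : ℝ)|) / N := by ring
    rw [this, abs_div, abs_of_pos hN']
    gcongr
    refine (abs_abs_sub_abs_le _ _).trans ?_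
    simp

lemma chi_nonneg (N l) : 0 ≤ chi N l := mul_nonneg (tri_nonneg _ _) (tri_nonneg _ _)
lemma chi_le (N l) : chi N l ≤ 1 := mul_le_one₀ (tri_le _ _) (tri_nonneg _ _) (tri_le _ _)
lemma chi_zero {N : ℕ} (hN : 1 ≤ N) {l : ℤ × ℤ} (hl : ¬(|l.1| < N ∧ |l.2| < N)) : chi N l = 0 := by
  unfold chi
  by_cases h : |l.1| < N
  · rw [tri_zero hN (n := l.2) (fun h2 => hl ⟨h, h2⟩), mul_zero]
  · rw [tri_zero hN h, zero_mul]
lemma chi_at_zero (N) : chi N 0 = 1 := by simp [chi, tri]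
lemma one_sub_chi (N : ℕ) (l) : 1 - chi N l ≤ (|(l.1 : ℝ)| + |(l.2 : ℝ)|) / N := by
  have h1 := tri_nonneg N l.1
  have h2 := tri_nonneg N l.2
  have h3 := tri_le N l.1
  have h4 := tri_le N l.2
  have h5 := tri_ge N l.1
  have h6 := tri_ge N l.2
  rw [add_div]; unfold chi
  nlinarith [mul_nonneg (sub_nonneg.2 h3) (sub_nonneg.2 h4)]

lemma chi_lip {N : ℕ} (hN : 1 ≤ N) (l e : ℤ × ℤ) (he : e = (1, 0) ∨ e = (0, 1)) :
    |chi N (l - e) - chi N l| ≤ 3 / sz l := by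
  have hN' : (1 : ℝ) ≤ N := by exact_mod_cast hN
  by_cases hl : |l.1| ≤ N ∧ |l.2| ≤ N
  · have h1 : |chi N (l - e) - chi N l| ≤ 1 / N := by
      unfold chi
      rcases he with rfl | rfl
      · simp only [Prod.fst_sub, Prod.snd_sub, sub_zero]
        rw [← sub_mul, abs_mul, abs_of_nonneg (tri_nonneg N l.2)]
        have := mul_le_mul (tri_lip hN l.1) (tri_le N l.2) (tri_nonneg _ _) (by positivity)
        simpa using this
      · simp only [Prod.fst_sub, Prod.snd_sub, sub_zero]
        rw [← mul_sub, abs_mul, abs_of_nonneg (tri_nonneg N l.1)]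
        have := mul_le_mul (tri_le N l.1) (tri_lip hN l.2) (abs_nonneg _) (by positivity)
        simpa using this
    refine h1.trans ?_
    rw [div_le_div_iff₀ (by positivity) (sz_pos l)]
    have a : |(l.1 : ℝ)| ≤ N := by exact_mod_cast hl.1
    have b : |(l.2 : ℝ)| ≤ N := by exact_mod_cast hl.2
    unfold sz; linarith
  · have h0 : chi N l = 0 := chi_zero hN (fun h => hl ⟨h.1.le, h.2.le⟩)
    have h1 : chi N (l - e) = 0 := by
      apply chi_zero hN
      rintro ⟨h1, h2⟩
      apply hl
      rcases he with rfl | rfl <;> simp only [Prod.fst_sub, Prod.snd_sub, sub_zero] at h1 h2 <;>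
        rw [abs_lt] at h1 h2 <;> rw [abs_le, abs_le] <;> omega
    rw [h0, h1]; simp; have := sz_pos l; positivity

lemma mult_diff {N : ℕ} (hN : 1 ≤ N) (A : ℤ × ℤ → ℝ) (hA : ∀ l, |A l| ≤ nsq l) (e : ℤ × ℤ)
    (he : e = (1, 0) ∨ e = (0, 1))
    (hd : ∀ l, |A (l - e) * nsq l - A l * nsq (l - e)|
      ≤ (1 + 2 * |(l.1 : ℝ)| + 2 * |(l.2 : ℝ)|) * nsq (l - e)) (l : ℤ × ℤ) :
    |chi N (l - e) * (A (l - e) / nsq (l - e)) - chi N l * (A l / nsq l)| ≤ 11 / sz l := by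
  have hg : ∀ l, |A l / nsq l| ≤ 1 := fun l => by
    rw [abs_div, abs_of_nonneg (nsq_nonneg l)]
    exact div_le_one_of_le₀ (hA l) (nsq_nonneg l)
  have hG : |A (l - e) / nsq (l - e) - A l / nsq l| ≤ 8 / sz l := by
    by_cases h0 : l = 0
    · subst h0
      rw [nsq_zero, div_zero, sub_zero]
      refine (hg _).trans ?_
      simp [sz]
    by_cases h1 : l - e = 0
    · rw [h1, nsq_zero, div_zero, zero_sub, abs_neg]
      refine (hg _).trans ?_
      rw [sub_eq_zero.1 h1]
      rcases he with rfl | rfl <;> norm_num [sz]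
    exact quot_diff h0 h1 (hd l)
  have e1 : chi N (l - e) * (A (l - e) / nsq (l - e)) - chi N l * (A l / nsq l)
    = chi N (l - e) * (A (l - e) / nsq (l - e) - A l / nsq l) + (chi N (l - e) - chi N l) * (A l / nsq l) := by
    ring
  rw [e1]
  refine (abs_add_le _ _).trans ?_
  rw [abs_mul, abs_mul, abs_of_nonneg (chi_nonneg _ _)]
  have h1 := mul_le_mul (chi_le N (l - e)) hG (abs_nonneg _) (by norm_num)
  have h2 := mul_le_mul (chi_lip hN l e he) (hg l) (abs_nonneg _) (by have := sz_pos l; positivity)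
  have : (11 : ℝ) / sz l = 1 * (8 / sz l) + 3 / sz l * 1 := by ring
  linarith

lemma riesz_bound {N : ℕ} (hN : 1 ≤ N) (A : ℤ × ℤ → ℝ) (hA : ∀ l, |A l| ≤ nsq l) 
    (hd : ∀ e : ℤ × ℤ, (e = (1, 0) ∨ e = (0, 1)) → ∀ l, |A (l - e) * nsq l - A l * nsq (l - e)|
      ≤ (1 + 2 * |(l.1 : ℝ)| + 2 * |(l.2 : ℝ)|) * nsq (l - e))
    (f : ℝ × ℝ → ℝ) (hf : AEStronglyMeasurable f (volume.restrict Dom)) (M : ℝ) (hM : 0 ≤ M)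
    (hfM : ∀ᵐ z ∂(volume.restrict Dom), |f z| ≤ M) (z : ℝ × ℝ) :
    ‖tp (box N) (fun l => (chi N l * (A l / nsq l) : ℝ) * cr f l) z‖
      ≤ M * ((48 + 18 * π ^ 2 * (1 + 2 * 11 ^ 2)) * (1 + Real.log N)) := by
  refine mult_bound N hN (fun l => chi N l * (A l / nsq l)) ?_ 11 ?_ ?_ ?_ f hf M hM hfM z
  · intro l hl; rw [chi_zero hN hl, zero_mul]
  · intro l
    rw [abs_mul, abs_of_nonneg (chi_nonneg _ _), abs_div, abs_of_nonneg (nsq_nonneg l)]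
    exact mul_le_one₀ (chi_le _ _) (by have := nsq_nonneg l; positivity) (div_le_one_of_le₀ (hA l) (nsq_nonneg l))
  · exact mult_diff hN A hA _ (Or.inl rfl) (hd _ (Or.inl rfl))
  · exact mult_diff hN A hA _ (Or.inr rfl) (hd _ (Or.inr rfl))

/-- constant in the log-Lipschitz estimate -/
def CK : ℝ := 48 + 18 * π ^ 2 * (1 + 2 * 11 ^ 2)

lemma CK_nonneg : 0 ≤ CK := by unfold CK; positivity

lemma aux_shift1 (x y : ℝ) : |y| ^ 2 * (1 + 2 * |x|) ≤ (1 + 2 * |x| + 2 * |y|) * ((x - 1) ^ 2 + y ^ 2) := by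
  have := abs_nonneg x
  have := abs_nonneg y
  rw [← sq_abs y]
  nlinarith [mul_nonneg (abs_nonneg x) (sq_nonneg (x-1)), mul_nonneg (abs_nonneg y) (sq_nonneg (x-1)),
    mul_nonneg (abs_nonneg y) (sq_nonneg (|y|)), sq_nonneg (x-1)]

lemma aux_shift2 (x y : ℝ) : |y * (x * (x - 1) - y ^ 2)| ≤ (1 + 2 * |x| + 2 * |y|) * ((x - 1) ^ 2 + y ^ 2) := by
  have h1 : |y * (x * (x - 1) - y ^ 2)| ≤ |x| * (|y| * |x - 1|) + |y| * y ^ 2 := by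
    have e : y * (x * (x - 1) - y ^ 2) = x * (y * (x - 1)) - y * y ^ 2 := by ring
    rw [e]; refine (abs_sub _ _).trans ?_
    simp only [abs_mul, abs_pow, sq_abs]; exact le_rfl
  have h2 : |y| * |x - 1| ≤ (x - 1) ^ 2 + y ^ 2 := by
    rw [← sq_abs y, ← sq_abs (x - 1)]
    nlinarith [sq_nonneg (|y| - |x - 1|), sq_nonneg (|y|), sq_nonneg (|x - 1|)]
  have h3 := mul_le_mul_of_nonneg_left h2 (abs_nonneg x)
  nlinarith [mul_nonneg (abs_nonneg x) (sq_nonneg (x-1)), mul_nonneg (abs_nonneg y) (sq_nonneg (x-1)),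
    mul_nonneg (abs_nonneg y) (sq_nonneg y), sq_nonneg (x-1), mul_nonneg (abs_nonneg x) (sq_nonneg y), sq_nonneg y]

lemma aux_abs (x y : ℝ) : |y ^ 2 * (1 - 2 * x)| ≤ |y| ^ 2 * (1 + 2 * |x|) := by
  rw [abs_mul, abs_pow]
  gcongr
  refine (abs_sub _ _).trans ?_
  simp [abs_mul]


lemma riesz11 {N : ℕ} (hN : 1 ≤ N) (f : ℝ × ℝ → ℝ) (hf : AEStronglyMeasurable f (volume.restrict Dom))
    (M : ℝ) (hM : 0 ≤ M) (hfM : ∀ᵐ z ∂(volume.restrict Dom), |f z| ≤ M) (z : ℝ × ℝ) :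
    ‖tp (box N) (fun l => (chi N l * ((l.1 : ℝ) * l.1 / nsq l) : ℝ) * cr f l) z‖
      ≤ M * (CK * (1 + Real.log N)) := by
  refine riesz_bound hN (fun l => (l.1 : ℝ) * l.1) ?_ ?_ f hf M hM hfM z
  · intro l; rw [abs_of_nonneg (mul_self_nonneg _)]; unfold nsq; nlinarith [sq_nonneg (l.2 : ℝ)]
  · rintro e (rfl | rfl) l
    · refine le_trans (le_of_eq ?_) ((aux_abs l.1 l.2).trans ((aux_shift1 l.1 l.2).trans (le_of_eq ?_)))
      · simp only [nsq, Prod.fst_sub, Prod.snd_sub]; push_cast; congr 1; ring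
      · simp only [nsq, Prod.fst_sub, Prod.snd_sub]; push_cast; ring
    · refine le_trans (le_of_eq ?_) ((aux_abs l.2 l.1).trans ((aux_shift1 l.2 l.1).trans (le_of_eq ?_)))
      · simp only [nsq, Prod.fst_sub, Prod.snd_sub]; push_cast; rw [← abs_neg]; congr 1; ring
      · simp only [nsq, Prod.fst_sub, Prod.snd_sub]; push_cast; ring

lemma riesz22 {N : ℕ} (hN : 1 ≤ N) (f : ℝ × ℝ → ℝ) (hf : AEStronglyMeasurable f (volume.restrict Dom))
    (M : ℝ) (hM : 0 ≤ M) (hfM : ∀ᵐ z ∂(volume.restrict Dom), |f z| ≤ M) (z : ℝ × ℝ) :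
    ‖tp (box N) (fun l => (chi N l * ((l.2 : ℝ) * l.2 / nsq l) : ℝ) * cr f l) z‖
      ≤ M * (CK * (1 + Real.log N)) := by
  refine riesz_bound hN (fun l => (l.2 : ℝ) * l.2) ?_ ?_ f hf M hM hfM z
  · intro l; rw [abs_of_nonneg (mul_self_nonneg _)]; unfold nsq; nlinarith [sq_nonneg (l.1 : ℝ)]
  · rintro e (rfl | rfl) l
    · refine le_trans (le_of_eq ?_) ((aux_abs l.1 l.2).trans ((aux_shift1 l.1 l.2).trans (le_of_eq ?_)))
      · simp only [nsq, Prod.fst_sub, Prod.snd_sub]; push_cast; rw [← abs_neg]; congr 1; ring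
      · simp only [nsq, Prod.fst_sub, Prod.snd_sub]; push_cast; ring
    · refine le_trans (le_of_eq ?_) ((aux_abs l.2 l.1).trans ((aux_shift1 l.2 l.1).trans (le_of_eq ?_)))
      · simp only [nsq, Prod.fst_sub, Prod.snd_sub]; push_cast; congr 1; ring
      · simp only [nsq, Prod.fst_sub, Prod.snd_sub]; push_cast; ring

lemma riesz12 {N : ℕ} (hN : 1 ≤ N) (f : ℝ × ℝ → ℝ) (hf : AEStronglyMeasurable f (volume.restrict Dom))
    (M : ℝ) (hM : 0 ≤ M) (hfM : ∀ᵐ z ∂(volume.restrict Dom), |f z| ≤ M) (z : ℝ × ℝ) :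
    ‖tp (box N) (fun l => (chi N l * ((l.1 : ℝ) * l.2 / nsq l) : ℝ) * cr f l) z‖
      ≤ M * (CK * (1 + Real.log N)) := by
  refine riesz_bound hN (fun l => (l.1 : ℝ) * l.2) ?_ ?_ f hf M hM hfM z
  · intro l; unfold nsq; rw [abs_le]
    constructor <;> nlinarith [sq_nonneg ((l.1 : ℝ) + l.2), sq_nonneg ((l.1 : ℝ) - l.2)]
  · rintro e (rfl | rfl) l
    · refine le_trans (le_of_eq ?_) ((aux_shift2 l.1 l.2).trans (le_of_eq ?_))
      · simp only [nsq, Prod.fst_sub, Prod.snd_sub]; push_cast; congr 1; ring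
      · simp only [nsq, Prod.fst_sub, Prod.snd_sub]; push_cast; ring
    · refine le_trans (le_of_eq ?_) ((aux_shift2 l.2 l.1).trans (le_of_eq ?_))
      · simp only [nsq, Prod.fst_sub, Prod.snd_sub]; push_cast; congr 1; ring
      · simp only [nsq, Prod.fst_sub, Prod.snd_sub]; push_cast; ring


lemma memLp_mul_int {f g : ℝ × ℝ → ℝ} (hf : MemLp f 2 (volume.restrict Dom))
    (hg : MemLp g 2 (volume.restrict Dom)) : Integrable (fun z => f z * g z) (volume.restrict Dom) :=
  hf.integrable_mul hg

lemma int_mul_cont {f g : ℝ × ℝ → ℝ} (hf : MemLp f 2 (volume.restrict Dom))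
    (hg : MemLp g 2 (volume.restrict Dom)) {k : ℝ × ℝ → ℂ} (hk : Continuous k) (B : ℝ)
    (hB : ∀ z, ‖k z‖ ≤ B) :
    Integrable (fun z => (f z * g z : ℂ) * k z) (volume.restrict Dom) := by
  have : Integrable (fun z => ((f z * g z : ℝ) : ℂ)) (volume.restrict Dom) := (memLp_mul_int hf hg).ofReal
  have := this.mul_bdd (c := B) (g := k) hk.aestronglyMeasurable (by simp [hB])
  simpa using this

lemma flip_zero {T : ℤ × ℤ → ℂ} {S : ℂ} (l : ℤ × ℤ) (hT : HasSum T S)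
    (h : ∀ n, T n + T (-l - n) = 0) : S = 0 := by
  have h' : HasSum (fun n => T (-l - n)) S := (Equiv.subLeft (-l)).hasSum_iff.2 hT
  have := hT.add h'
  simp only [h] at this
  have := this.unique hasSum_zero
  linear_combination this / 2

lemma key1 {w p1 p2 : ℝ × ℝ → ℝ} (hw : MemLp w 2 (volume.restrict Dom))
    (h1 : MemLp p1 2 (volume.restrict Dom)) (h2 : MemLp p2 2 (volume.restrict Dom))
    (hdiv : ∀ n : ℤ × ℤ, cr w n = Complex.I * (n.1 * cr p1 n + n.2 * cr p2 n))
    (hcurl : ∀ n : ℤ × ℤ, (n.1 : ℂ) * cr p2 n = n.2 * cr p1 n)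
    (l : ℤ × ℤ) :
    (∫ z in Dom, (w z * p1 z : ℂ) * ek l z)
      + Complex.I * l.1 / 2 * ((∫ z in Dom, (p1 z * p1 z : ℂ) * ek l z) - ∫ z in Dom, (p2 z * p2 z : ℂ) * ek l z)
      + Complex.I * l.2 * (∫ z in Dom, (p1 z * p2 z : ℂ) * ek l z) = 0 := by
  have hpi : (4 * π ^ 2 : ℂ) ≠ 0 := by exact_mod_cast (by positivity : (4 * π ^ 2 : ℝ) ≠ 0)
  have e : ∫ z in Dom, (p2 z * p1 z : ℂ) * ek l z = ∫ z in Dom, (p1 z * p2 z : ℂ) * ek l z := by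
    congr 1; ext z; ring
  have a1 := parseval_real hw h1 l
  have a2 := parseval_real h1 h1 l
  have a3 := parseval_real h2 h2 l
  have a4 := parseval_real h1 h2 l
  have a5 := parseval_real h2 h1 l
  rw [e] at a5
  have := (a1.add ((a2.sub a3).mul_left (Complex.I * l.1 / 2))).add ((a4.add a5).mul_left (Complex.I * l.2 / 2))
  have := flip_zero l this ?_
  · apply mul_left_cancel₀ hpi
    linear_combination this
  · intro n
    have hn : -l - (-l - n) = n := by ring
    have c1 := hcurl n
    have c2 := hcurl (-l - n)
    simp only [hn, hdiv]
    simp only [Prod.fst_sub, Prod.snd_sub, Prod.fst_neg, Prod.snd_neg, Int.cast_sub, Int.cast_neg] at *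
    linear_combination Complex.I * cr p2 (-l - n) * c1 + Complex.I * cr p2 n * c2

lemma key2 {w p1 p2 : ℝ × ℝ → ℝ} (hw : MemLp w 2 (volume.restrict Dom))
    (h1 : MemLp p1 2 (volume.restrict Dom)) (h2 : MemLp p2 2 (volume.restrict Dom))
    (hdiv : ∀ n : ℤ × ℤ, cr w n = Complex.I * (n.1 * cr p1 n + n.2 * cr p2 n))
    (hcurl : ∀ n : ℤ × ℤ, (n.1 : ℂ) * cr p2 n = n.2 * cr p1 n)
    (l : ℤ × ℤ) :
    (∫ z in Dom, (w z * p2 z : ℂ) * ek l z)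
      + Complex.I * l.2 / 2 * ((∫ z in Dom, (p2 z * p2 z : ℂ) * ek l z) - ∫ z in Dom, (p1 z * p1 z : ℂ) * ek l z)
      + Complex.I * l.1 * (∫ z in Dom, (p1 z * p2 z : ℂ) * ek l z) = 0 := by
  have hpi : (4 * π ^ 2 : ℂ) ≠ 0 := by exact_mod_cast (by positivity : (4 * π ^ 2 : ℝ) ≠ 0)
  have e : ∫ z in Dom, (p2 z * p1 z : ℂ) * ek l z = ∫ z in Dom, (p1 z * p2 z : ℂ) * ek l z := by
    congr 1; ext z; ring
  have a1 := parseval_real hw h2 l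
  have a2 := parseval_real h1 h1 l
  have a3 := parseval_real h2 h2 l
  have a4 := parseval_real h1 h2 l
  have a5 := parseval_real h2 h1 l
  rw [e] at a5
  have := (a1.add ((a3.sub a2).mul_left (Complex.I * l.2 / 2))).add ((a4.add a5).mul_left (Complex.I * l.1 / 2))
  have := flip_zero l this ?_
  · apply mul_left_cancel₀ hpi
    linear_combination this
  · intro n
    have hn : -l - (-l - n) = n := by ring
    have c1 := hcurl n
    have c2 := hcurl (-l - n)
    simp only [hn, hdiv]
    simp only [Prod.fst_sub, Prod.snd_sub, Prod.fst_neg, Prod.snd_neg, Int.cast_sub, Int.cast_neg] at *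
    linear_combination -Complex.I * cr p1 (-l - n) * c1 - Complex.I * cr p1 n * c2

lemma int_tp {p1 p2 : ℝ × ℝ → ℝ} (h1 : MemLp p1 2 (volume.restrict Dom))
    (h2 : MemLp p2 2 (volume.restrict Dom))
    (S : Finset (ℤ × ℤ)) (c : ℤ × ℤ → ℂ) :
    ∫ z in Dom, (p1 z * p2 z : ℂ) * tp S c z = ∑ l ∈ S, c l * ∫ z in Dom, (p1 z * p2 z : ℂ) * ek l z := by
  simp only [tp, Finset.mul_sum]
  rw [integral_finsetSum]
  · refine Finset.sum_congr rfl fun l _ => ?_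
    rw [← integral_const_mul]; congr 1; ext z; ring
  · intro l _
    exact int_mul_cont h1 h2 (by fun_prop) ‖c l‖ (by simp)

lemma key_id {w p1 p2 : ℝ × ℝ → ℝ} (hw : MemLp w 2 (volume.restrict Dom))
    (h1 : MemLp p1 2 (volume.restrict Dom)) (h2 : MemLp p2 2 (volume.restrict Dom))
    (hdiv : ∀ n : ℤ × ℤ, cr w n = Complex.I * (n.1 * cr p1 n + n.2 * cr p2 n))
    (hcurl : ∀ n : ℤ × ℤ, (n.1 : ℂ) * cr p2 n = n.2 * cr p1 n)
    (S : Finset (ℤ × ℤ)) (c1 c2 : ℤ × ℤ → ℂ) :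
    (∫ z in Dom, (w z * p1 z : ℂ) * tp S c1 z) + (∫ z in Dom, (w z * p2 z : ℂ) * tp S c2 z)
     = -(Complex.I / 2) * ((∫ z in Dom, (p1 z * p1 z : ℂ) * tp S (fun l => l.1 * c1 l) z)
        - (∫ z in Dom, (p2 z * p2 z : ℂ) * tp S (fun l => l.1 * c1 l) z)
        + (∫ z in Dom, (p2 z * p2 z : ℂ) * tp S (fun l => l.2 * c2 l) z)
        - (∫ z in Dom, (p1 z * p1 z : ℂ) * tp S (fun l => l.2 * c2 l) z))
       - Complex.I * ((∫ z in Dom, (p1 z * p2 z : ℂ) * tp S (fun l => l.2 * c1 l) z)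
        + ∫ z in Dom, (p1 z * p2 z : ℂ) * tp S (fun l => l.1 * c2 l) z) := by
  rw [int_tp hw h1, int_tp hw h2, int_tp h1 h1, int_tp h2 h2, int_tp h2 h2, int_tp h1 h1, int_tp h1 h2,
    int_tp h1 h2]
  simp only [← Finset.sum_add_distrib, ← Finset.sum_sub_distrib, Finset.mul_sum]
  refine Finset.sum_congr rfl fun l _ => ?_
  have k1 := key1 hw h1 h2 hdiv hcurl l
  have k2 := key2 hw h1 h2 hdiv hcurl l
  linear_combination c1 l * k1 + c2 l * k2

lemma int_tp_bound {p1 p2 : ℝ × ℝ → ℝ} (h1 : MemLp p1 2 (volume.restrict Dom))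
    (h2 : MemLp p2 2 (volume.restrict Dom))
    {S : Finset (ℤ × ℤ)} {c : ℤ × ℤ → ℂ} {L : ℝ} (hL : ∀ z, ‖tp S c z‖ ≤ L) :
    ‖∫ z in Dom, (p1 z * p2 z : ℂ) * tp S c z‖ ≤ L / 2 * ∫ z in Dom, (p1 z * p1 z + p2 z * p2 z) := by
  rw [← integral_const_mul]
  refine norm_integral_le_of_norm_le (((memLp_mul_int h1 h1).add (memLp_mul_int h2 h2)).const_mul _) ?_
  refine Filter.Eventually.of_forall fun z => ?_
  have hL0 : 0 ≤ L := (norm_nonneg _).trans (hL z)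
  rw [norm_mul, norm_mul, Complex.norm_real, Complex.norm_real, Real.norm_eq_abs, Real.norm_eq_abs]
  calc |p1 z| * |p2 z| * ‖tp S c z‖ ≤ ((p1 z * p1 z + p2 z * p2 z) / 2) * L := by
        gcongr
        · have := mul_self_nonneg (p1 z)
          have := mul_self_nonneg (p2 z)
          positivity
        · rw [← abs_mul_abs_self (p1 z), ← abs_mul_abs_self (p2 z)]
          nlinarith [sq_nonneg (|p1 z| - |p2 z|)]
        · exact hL z
    _ = _ := by ring

lemma key_bound {w p1 p2 : ℝ × ℝ → ℝ} (hw : MemLp w 2 (volume.restrict Dom))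
    (h1 : MemLp p1 2 (volume.restrict Dom)) (h2 : MemLp p2 2 (volume.restrict Dom))
    (hdiv : ∀ n : ℤ × ℤ, cr w n = Complex.I * (n.1 * cr p1 n + n.2 * cr p2 n))
    (hcurl : ∀ n : ℤ × ℤ, (n.1 : ℂ) * cr p2 n = n.2 * cr p1 n)
    (S : Finset (ℤ × ℤ)) (c1 c2 : ℤ × ℤ → ℂ) (L : ℝ)
    (l11 : ∀ z, ‖tp S (fun l => l.1 * c1 l) z‖ ≤ L) (l21 : ∀ z, ‖tp S (fun l => l.2 * c1 l) z‖ ≤ L)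
    (l12 : ∀ z, ‖tp S (fun l => l.1 * c2 l) z‖ ≤ L) (l22 : ∀ z, ‖tp S (fun l => l.2 * c2 l) z‖ ≤ L) :
    ‖(∫ z in Dom, (w z * p1 z : ℂ) * tp S c1 z) + (∫ z in Dom, (w z * p2 z : ℂ) * tp S c2 z)‖
      ≤ 2 * L * ∫ z in Dom, (p1 z * p1 z + p2 z * p2 z) := by
  rw [key_id hw h1 h2 hdiv hcurl]
  have b1 := int_tp_bound h1 h1 l11
  have b2 := int_tp_bound h2 h2 l11
  have b3 := int_tp_bound h2 h2 l22
  have b4 := int_tp_bound h1 h1 l22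
  have b5 := int_tp_bound h1 h2 l21
  have b6 := int_tp_bound h1 h2 l12
  have i1 := memLp_mul_int h1 h1
  have i2 := memLp_mul_int h2 h2
  rw [integral_add i1 i2] at *
  rw [integral_add i1 i1] at b1 b4
  rw [integral_add i2 i2] at b2 b3
  refine (norm_sub_le _ _).trans ?_
  rw [norm_mul, norm_mul, norm_neg, norm_div, Complex.norm_I, RCLike.norm_two]
  have n1 : ∀ a b c d : ℂ, ‖a - b + c - d‖ ≤ ‖a‖ + ‖b‖ + ‖c‖ + ‖d‖ := by
    intro a b c d
    have := norm_sub_le (a - b + c) d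
    have := norm_add_le (a - b) c
    have := norm_sub_le a b
    linarith
  refine (add_le_add (mul_le_mul_of_nonneg_left (n1 _ _ _ _) (by norm_num))
    (mul_le_mul_of_nonneg_left (norm_add_le _ _) (by norm_num))).trans ?_
  linarith


lemma ek_split (j k : ℤ) (z : ℝ × ℝ) :
    ek (-(j, k)) z = Complex.exp (-(Complex.I * (j : ℂ) * (z.1 : ℂ))) *
      ((Real.cos ((k.natAbs : ℝ) * z.2) : ℂ) - Complex.I * (k.sign : ℂ) * (Real.sin ((k.natAbs : ℝ) * z.2) : ℂ)) := by
  have h : ((Real.cos ((k.natAbs : ℝ) * z.2) : ℂ) - Complex.I * (k.sign : ℂ) * (Real.sin ((k.natAbs : ℝ) * z.2) : ℂ))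
     = Complex.exp (-(Complex.I * (k : ℂ) * (z.2 : ℂ))) := by
    have e : Complex.exp (-(Complex.I * (k : ℂ) * (z.2 : ℂ)))
      = (Real.cos (k * z.2) : ℂ) - Complex.I * (Real.sin (k * z.2) : ℂ) := by
      rw [show -(Complex.I * (k : ℂ) * (z.2 : ℂ)) = ((-(k * z.2) : ℝ) : ℂ) * Complex.I by push_cast; ring,
        Complex.exp_mul_I, ← Complex.ofReal_cos, ← Complex.ofReal_sin, Real.cos_neg, Real.sin_neg]
      push_cast; ring
    rw [e]
    rcases lt_trichotomy k 0 with hk | hk | hk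
    · have hn : (k.natAbs : ℝ) = -(k : ℝ) := by
        rw [Nat.cast_natAbs, abs_of_neg hk]; push_cast; ring
      rw [hn, Int.sign_eq_neg_one_of_neg hk, neg_mul, Real.cos_neg, Real.sin_neg]
      push_cast; ring
    · subst hk; simp
    · have hn : (k.natAbs : ℝ) = (k : ℝ) := by
        rw [Nat.cast_natAbs, abs_of_pos hk]
      rw [hn, Int.sign_eq_one_of_pos hk]
      push_cast; ring
  rw [h, ek, ← Complex.exp_add]
  congr 1
  simp; ring

lemma int_mode {f : ℝ × ℝ → ℝ} (hf : Integrable f (volume.restrict Dom)) (j : ℤ) (g : ℝ → ℝ)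
    (hg : Continuous g) (hb : ∀ x, |g x| ≤ 1) :
    Integrable (fun z : ℝ × ℝ => (f z : ℂ) * Complex.exp (-(Complex.I * (j : ℂ) * (z.1 : ℂ))) / (2 * π)
      * (g z.2 : ℂ)) (volume.restrict Dom) := by
  have := hf.ofReal (𝕜 := ℂ)
  have h2 := this.mul_bdd (c := 1) (g := fun z : ℝ × ℝ =>
    Complex.exp (-(Complex.I * (j : ℂ) * (z.1 : ℂ))) * (g z.2 : ℂ)) 
    (by apply Continuous.aestronglyMeasurable; fun_prop) (by
      refine Filter.Eventually.of_forall fun z => ?_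
      rw [norm_mul, show -(Complex.I * (j : ℂ) * (z.1 : ℂ)) = ((-(j * z.1) : ℝ) : ℂ) * Complex.I by push_cast; ring,
        Complex.norm_exp_ofReal_mul_I, one_mul, Complex.norm_real]
      exact hb _)
  convert h2.div_const (2 * π : ℂ) using 2
  simp; ring

lemma cr_eq {f : ℝ × ℝ → ℝ} (hf : Integrable f (volume.restrict Dom)) (j k : ℤ) :
    cr f (j, k) = 2 * π * (chat f j k.natAbs - Complex.I * k.sign * fhat f j k.natAbs) := by
  have hpi : (π : ℂ) ≠ 0 := by exact_mod_cast Real.pi_ne_zero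
  have i1 := int_mode hf j (fun y => Real.cos (k.natAbs * y)) (by fun_prop) (fun x => Real.abs_cos_le_one _)
  have i2 := int_mode hf j (fun y => Real.sin (k.natAbs * y)) (by fun_prop) (fun x => Real.abs_sin_le_one _)
  unfold cr co chat fhat
  rw [← integral_const_mul, ← integral_sub i1 (i2.const_mul _), ← integral_const_mul]
  congr 1; ext z
  rw [ek_split]
  field_simp

lemma chat_y (j : ℤ) (k : ℕ) (β : ℝ) : chat (fun z => β * z.2) j k = 0 := by
  have hpi := Real.pi_pos
  unfold chat
  rw [Dom, Measure.volume_eq_prod, setIntegral_prod]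
  · have : ∀ x : ℝ, ∫ y in Ioc (-π) π, (((β * y : ℝ) : ℂ) * Complex.exp (-(Complex.I * (j : ℂ) * (x : ℂ))) / (2 * π)
      * (Real.cos ((k : ℝ) * y) : ℂ)) = 0 := by
      intro x
      rw [← intervalIntegral.integral_of_le (by linarith)]
      set F : ℝ → ℂ := fun y => (((β * y : ℝ) : ℂ) * Complex.exp (-(Complex.I * (j : ℂ) * (x : ℂ))) / (2 * π)
        * (Real.cos ((k : ℝ) * y) : ℂ)) with hF
      have h1 := intervalIntegral.integral_comp_neg (a := -π) (b := π) F
      have h2 : ∀ y, F (-y) = - F y := by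
        intro y; simp only [hF]; rw [mul_neg, mul_neg, Real.cos_neg]; push_cast; ring
      simp only [h2, intervalIntegral.integral_neg, neg_neg] at h1
      have : (∫ y in (-π)..π, F y) = 0 := by linear_combination -(h1 / 2)
      exact this
    simp only [this, integral_zero]
  · rw [← Measure.volume_eq_prod]
    apply int_mode (f := fun z => β * z.2) _ j (fun y => Real.cos (k * y)) (by fun_prop) (fun x => Real.abs_cos_le_one _)
    have : IntegrableOn (fun z : ℝ × ℝ => β * z.2) (Icc (-π) π ×ˢ Icc (-π) π) :=
      (by fun_prop : Continuous fun z : ℝ × ℝ => β * z.2).continuousOn.integrableOn_compact (isCompact_Icc.prod isCompact_Icc)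
    exact this.mono_set (prod_mono Ioc_subset_Icc_self Ioc_subset_Icc_self)

lemma int_y (β : ℝ) : Integrable (fun z : ℝ × ℝ => β * z.2) (volume.restrict Dom) := by
  have : IntegrableOn (fun z : ℝ × ℝ => β * z.2) (Icc (-π) π ×ˢ Icc (-π) π) :=
    (by fun_prop : Continuous fun z : ℝ × ℝ => β * z.2).continuousOn.integrableOn_compact (isCompact_Icc.prod isCompact_Icc)
  exact this.mono_set (prod_mono Ioc_subset_Icc_self Ioc_subset_Icc_self)

lemma chat_sub {f g : ℝ × ℝ → ℝ} (hf : Integrable f (volume.restrict Dom))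
    (hg : Integrable g (volume.restrict Dom)) (j k) :
    chat (fun z => f z - g z) j k = chat f j k - chat g j k := by
  unfold chat
  rw [← integral_sub]
  · congr 1; ext z; push_cast; ring
  · exact int_mode hf j (fun y => Real.cos (k * y)) (by fun_prop) (fun x => Real.abs_cos_le_one _)
  · exact int_mode hg j (fun y => Real.cos (k * y)) (by fun_prop) (fun x => Real.abs_cos_le_one _)

lemma odd_f {q h : ℝ × ℝ → ℝ} (hq : Integrable q (volume.restrict Dom))
    (hh : Integrable h (volume.restrict Dom)) (β : ℝ) (oq : OddInY q) (oh : OddInY h) :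
    OddInY (fun z => q z - h z - β * z.2) := by
  intro j k
  rw [chat_sub (f := fun z => q z - h z) (hq.sub hh) (int_y β), chat_sub hq hh, oq, oh, chat_y]
  simp

lemma vel_cr {f : ℝ × ℝ → ℝ} {V : ℝ} {u : ℝ × ℝ → ℝ × ℝ} (hf : Integrable f (volume.restrict Dom))
    (ho : OddInY f) (hv : IsVelocity f V u) :
    (∀ n : ℤ × ℤ, cr (fun z => (u z).1) n = (if n = 0 then (4 * π ^ 2 * V : ℂ) else 0)
      + Complex.I * n.2 * cr f n / (2 * nsq n)) ∧
    (∀ n : ℤ × ℤ, cr (fun z => (u z).2) n = - (Complex.I * n.1 * cr f n / (2 * nsq n))) ∧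
    cr f 0 = 0 := by
  obtain ⟨hu, v1, v2, v3, v4⟩ := hv
  have hu1 : Integrable (fun z => (u z).1) (volume.restrict Dom) := (hu.integrable (by norm_num)).fst
  have hu2 : Integrable (fun z => (u z).2) (volume.restrict Dom) := (hu.integrable (by norm_num)).snd
  have c0 : ∀ j : ℤ, cr f (j, 0) = 0 := fun j => by rw [cr_eq hf, ho]; simp
  have hpi : (π : ℂ) ≠ 0 := by exact_mod_cast Real.pi_ne_zero
  refine ⟨?_, ?_, c0 0⟩
  · rintro ⟨j, k⟩
    rw [cr_eq hu1, v1, cr_eq hf, ho]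
    by_cases hk : k = 0
    · subst hk
      by_cases hj : j = 0
      · subst hj; simp; ring
      · simp [hj]
    · have hk' : 1 ≤ k.natAbs := by omega
      rw [v2 _ _ hk']
      have hs : (k : ℂ) = k.sign * (k.natAbs : ℂ) := by
        have := congrArg (Int.cast (R := ℂ)) (Int.sign_mul_natAbs k)
        rw [Int.cast_mul, Int.cast_natCast] at this
        exact this.symm
      have hs2 : (k.sign : ℂ) * k.sign = 1 := by
        rcases lt_or_gt_of_ne hk with h | h
        · rw [Int.sign_eq_neg_one_of_neg h]; norm_num
        · rw [Int.sign_eq_one_of_pos h]; norm_num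
      have hn : ((nsq (j, k) : ℝ) : ℂ) = (j : ℂ) ^ 2 + (k.natAbs : ℂ) ^ 2 := by
        simp only [nsq]; push_cast
        rw [hs]; linear_combination (k.natAbs : ℂ) ^ 2 * hs2
      have hne : (j : ℂ) ^ 2 + (k.natAbs : ℂ) ^ 2 ≠ 0 := by
        rw [← hn]; have := one_le_nsq (l := (j, k)) (by simp [hk]); exact_mod_cast (by positivity)
      rw [hn]
      simp only [hk, hk', Prod.mk_eq_zero, invLapCoeff, if_true, if_false, and_false]
      have h0 : ¬ (k.natAbs = 0) := by omega
      simp only [h0, and_false, if_false]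
      rw [hs]
      field_simp
      ring_nf
      rw [Complex.I_sq]
      linear_combination (-(π * fhat f j k.natAbs * k.natAbs)) * hs2
  · rintro ⟨j, k⟩
    rw [cr_eq hu2, v4]
    by_cases hk : k = 0
    · subst hk
      rw [c0]; simp
    · have hk' : 1 ≤ k.natAbs := by omega
      rw [v3 _ _ hk', cr_eq hf, ho]
      have hs : (k : ℂ) = k.sign * (k.natAbs : ℂ) := by
        have := congrArg (Int.cast (R := ℂ)) (Int.sign_mul_natAbs k)
        rw [Int.cast_mul, Int.cast_natCast] at this
        exact this.symm
      have hs2 : (k.sign : ℂ) * k.sign = 1 := by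
        rcases lt_or_gt_of_ne hk with h | h
        · rw [Int.sign_eq_neg_one_of_neg h]; norm_num
        · rw [Int.sign_eq_one_of_pos h]; norm_num
      have hn : ((nsq (j, k) : ℝ) : ℂ) = (j : ℂ) ^ 2 + (k.natAbs : ℂ) ^ 2 := by
        simp only [nsq]; push_cast
        rw [hs]; linear_combination (k.natAbs : ℂ) ^ 2 * hs2
      have hne : (j : ℂ) ^ 2 + (k.natAbs : ℂ) ^ 2 ≠ 0 := by
        rw [← hn]; have := one_le_nsq (l := (j, k)) (by simp [hk]); exact_mod_cast (by positivity)
      rw [hn]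
      simp only [invLapCoeff]
      field_simp
      ring_nf


/-- the velocity relation in exponential Fourier coefficients -/
structure Vel (f : ℝ × ℝ → ℝ) (V : ℝ) (a1 a2 : ℝ × ℝ → ℝ) : Prop where
  m1 : MemLp a1 2 (volume.restrict Dom)
  m2 : MemLp a2 2 (volume.restrict Dom)
  c1 : ∀ n : ℤ × ℤ, cr a1 n = (if n = 0 then (4 * π ^ 2 * V : ℂ) else 0)
      + Complex.I * n.2 * cr f n / (2 * nsq n)
  c2 : ∀ n : ℤ × ℤ, cr a2 n = - (Complex.I * n.1 * cr f n / (2 * nsq n))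
  c0 : cr f 0 = 0

lemma Vel.of {f : ℝ × ℝ → ℝ} {V : ℝ} {u : ℝ × ℝ → ℝ × ℝ} (hf : Integrable f (volume.restrict Dom))
    (ho : OddInY f) (hv : IsVelocity f V u) : Vel f V (fun z => (u z).1) (fun z => (u z).2) := by
  obtain ⟨h1, h2, h3⟩ := vel_cr hf ho hv
  exact ⟨hv.1.fst, hv.1.snd, h1, h2, h3⟩

lemma cr_sub {f g : ℝ × ℝ → ℝ} (hf : Integrable f (volume.restrict Dom))
    (hg : Integrable g (volume.restrict Dom)) (n) : cr (fun z => f z - g z) n = cr f n - cr g n := by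
  have i : ∀ f : ℝ × ℝ → ℝ, Integrable f (volume.restrict Dom) →
      Integrable (fun z => (f z : ℂ) * ek (-n) z) (volume.restrict Dom) := fun f hf =>
    (hf.ofReal (𝕜 := ℂ)).mul_bdd (c := 1) (by fun_prop) (by simp)
  unfold cr co
  rw [← integral_sub (i f hf) (i g hg)]
  congr 1; ext z; push_cast; ring

lemma cr_mul_left (c : ℝ) (f : ℝ × ℝ → ℝ) (n) : cr (fun z => c * f z) n = c * cr f n := by
  unfold cr co
  rw [← integral_const_mul]
  congr 1; ext z; push_cast; ring

lemma cr_const (c : ℝ) (n) : cr (fun _ => c) n = if n = 0 then (4 * π ^ 2 * c : ℂ) else 0 := by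
  unfold cr co
  rw [integral_const_mul, int_ek]
  simp only [neg_eq_zero]
  split_ifs <;> ring

lemma p_cr {f g w p1 p2 a1 a2 b1 b2 : ℝ × ℝ → ℝ} {V W : ℝ} (hA : Vel f V a1 a2) (hB : Vel g W b1 b2)
    (hf : Integrable f (volume.restrict Dom)) (hg : Integrable g (volume.restrict Dom))
    (hw : ∀ z, w z = f z - g z) (hp1 : ∀ z, p1 z = 2 * (a2 z - b2 z))
    (hp2 : ∀ z, p2 z = -2 * (a1 z - b1 z - (V - W))) :
    (∀ n : ℤ × ℤ, cr p1 n = -(Complex.I * n.1 * cr w n / nsq n)) ∧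
    (∀ n : ℤ × ℤ, cr p2 n = -(Complex.I * n.2 * cr w n / nsq n)) ∧ cr w 0 = 0 := by
  have i := fun {f : ℝ × ℝ → ℝ} (h : MemLp f 2 (volume.restrict Dom)) => h.integrable (by norm_num)
  have cw : ∀ n, cr w n = cr f n - cr g n := fun n => by rw [← cr_sub hf hg, ← funext hw]
  refine ⟨fun n => ?_, fun n => ?_, ?_⟩
  · rw [funext hp1, cr_mul_left, cr_sub (i hA.m2) (i hB.m2), hA.c2, hB.c2, cw]
    push_cast
    by_cases hn : n = 0
    · subst hn; simp
    · have := one_le_nsq hn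
      have hne : (nsq n : ℂ) ≠ 0 := by exact_mod_cast (by positivity : nsq n ≠ 0)
      field_simp; ring
  · rw [funext hp2, cr_mul_left, cr_sub (f := fun z => a1 z - b1 z) ((i hA.m1).sub (i hB.m1)) (integrable_const _),
      cr_sub (i hA.m1) (i hB.m1), hA.c1, hB.c1, cw, cr_const]
    by_cases hn : n = 0
    · subst hn; simp; ring
    · have := one_le_nsq hn
      have hne : (nsq n : ℂ) ≠ 0 := by exact_mod_cast (by positivity : nsq n ≠ 0)
      simp only [hn, if_false]
      push_cast
      field_simp; ring
  · rw [cw, hA.c0, hB.c0, sub_zero]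

lemma p_memLp {f g p1 p2 a1 a2 b1 b2 : ℝ × ℝ → ℝ} {V W : ℝ} (hA : Vel f V a1 a2) (hB : Vel g W b1 b2)
    (hp1 : ∀ z, p1 z = 2 * (a2 z - b2 z)) (hp2 : ∀ z, p2 z = -2 * (a1 z - b1 z - (V - W))) :
    MemLp p1 2 (volume.restrict Dom) ∧ MemLp p2 2 (volume.restrict Dom) := by
  rw [funext hp1, funext hp2]
  exact ⟨(hA.m2.sub hB.m2).const_mul 2, ((hA.m1.sub hB.m1).sub (memLp_const _)).const_mul (-2)⟩

lemma div_curl {w p1 p2 : ℝ × ℝ → ℝ} (h1 : ∀ n : ℤ × ℤ, cr p1 n = -(Complex.I * n.1 * cr w n / nsq n))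
    (h2 : ∀ n : ℤ × ℤ, cr p2 n = -(Complex.I * n.2 * cr w n / nsq n)) (h0 : cr w 0 = 0) :
    (∀ n : ℤ × ℤ, cr w n = Complex.I * (n.1 * cr p1 n + n.2 * cr p2 n)) ∧
    (∀ n : ℤ × ℤ, (n.1 : ℂ) * cr p2 n = n.2 * cr p1 n) := by
  refine ⟨fun n => ?_, fun n => ?_⟩
  · by_cases hn : n = 0
    · subst hn; simp [h0]
    · have := one_le_nsq hn
      have hne : (nsq n : ℂ) ≠ 0 := by exact_mod_cast (by positivity : nsq n ≠ 0)
      rw [h1, h2]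
      have e : (nsq n : ℂ) = (n.1 : ℂ) ^ 2 + (n.2 : ℂ) ^ 2 := by simp [nsq]
      field_simp
      rw [e]
      linear_combination cr w n * ((n.1 : ℂ) ^ 2 + (n.2 : ℂ) ^ 2) * Complex.I_sq
  · rw [h1, h2]; ring

/-- smoothing of a velocity component -/
def sm (N : ℕ) (a : ℝ × ℝ → ℝ) : ℤ × ℤ → ℂ := fun l => 1 / (4 * π ^ 2) * (chi N l * cr a l)

lemma co_rem (N : ℕ) (hN : 1 ≤ N) {a : ℝ × ℝ → ℝ} (ha : MemLp a 2 (volume.restrict Dom)) (n) :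
    co (fun z => (a z : ℂ) - tp (box N) (sm N a) z) n = (1 - chi N n : ℝ) * cr a n := by
  have hpi : (π : ℂ) ≠ 0 := by exact_mod_cast Real.pi_ne_zero
  have : co (fun z => (a z : ℂ) - tp (box N) (sm N a) z) n = cr a n - co (tp (box N) (sm N a)) n := by
    unfold cr co
    rw [← integral_sub]
    · congr 1; ext z; ring
    · exact ((memC ha).integrable (by norm_num)).mul_bdd (c := 1) (by fun_prop) (by simp)
    · exact ((memLp_tp _ _ 1).integrable (by norm_num)).mul_bdd (c := 1) (by fun_prop) (by simp)
  rw [this, co_tp]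
  by_cases h : n ∈ box N
  · rw [if_pos h]; unfold sm; push_cast; field_simp
  · rw [if_neg h, chi_zero hN]
    · simp
    · rintro ⟨h1, h2⟩; exact h (mem_box.2 ⟨h1.le, h2.le⟩)

lemma rem_bound (N : ℕ) (hN : 1 ≤ N) {a f : ℝ × ℝ → ℝ} (ha : MemLp a 2 (volume.restrict Dom))
    (hf : MemLp f 2 (volume.restrict Dom)) 
    (hc : ∀ n : ℤ × ℤ, n ≠ 0 → ‖cr a n‖ ^ 2 * (4 * nsq n) ≤ ‖cr f n‖ ^ 2) :
    ∫ z in Dom, ‖(a z : ℂ) - tp (box N) (sm N a) z‖ ^ 2 ≤ 1 / (2 * (N : ℝ) ^ 2) * ∫ z in Dom, f z ^ 2 := by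
  have hN' : (0 : ℝ) < N := by exact_mod_cast hN
  have hpi := Real.pi_pos
  have h1 := parseval_norm ((memC ha).sub (memLp_tp (box N) (sm N a) 2))
  have h2 := (parseval_cr_norm hf).mul_left (1 / (2 * (N : ℝ) ^ 2))
  have := hasSum_le (fun n => ?_) h1 h2
  · simp only [Pi.sub_apply] at this
    have e : 1 / (2 * (N : ℝ) ^ 2) * (4 * π ^ 2 * ∫ z in Dom, f z ^ 2)
      = 4 * π ^ 2 * (1 / (2 * (N : ℝ) ^ 2) * ∫ z in Dom, f z ^ 2) := by ring
    rw [e] at this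
    exact le_of_mul_le_mul_left this (by positivity)
  · change ‖co (fun z => (a z : ℂ) - tp (box N) (sm N a) z) n‖ ^ 2 ≤ _
    rw [co_rem N hN ha]
    by_cases hn : n = 0
    · subst hn; rw [chi_at_zero]; simp; positivity
    · have h3 := one_le_nsq hn
      have h4 := hc n hn
      have h5 := one_sub_chi N n
      have h6 : 0 ≤ 1 - chi N n := sub_nonneg.2 (chi_le _ _)
      rw [norm_mul, Complex.norm_real, Real.norm_of_nonneg h6, mul_pow]
      have h7 : (1 - chi N n) ^ 2 ≤ 2 * nsq n / (N : ℝ) ^ 2 := by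
        calc (1 - chi N n) ^ 2 ≤ ((|(n.1 : ℝ)| + |(n.2 : ℝ)|) / N) ^ 2 := by gcongr
          _ = (|(n.1 : ℝ)| + |(n.2 : ℝ)|) ^ 2 / (N : ℝ) ^ 2 := by rw [div_pow]
          _ ≤ _ := by
            gcongr
            unfold nsq
            rw [← sq_abs (n.1 : ℝ), ← sq_abs (n.2 : ℝ)]
            nlinarith [sq_nonneg (|(n.1 : ℝ)| - |(n.2 : ℝ)|)]
      calc _ ≤ 2 * nsq n / (N : ℝ) ^ 2 * ‖cr a n‖ ^ 2 := by gcongr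
        _ = 1 / (2 * (N : ℝ) ^ 2) * (‖cr a n‖ ^ 2 * (4 * nsq n)) := by field_simp; ring
        _ ≤ _ := by gcongr

lemma Vel.dec {f a1 a2 : ℝ × ℝ → ℝ} {V : ℝ} (hA : Vel f V a1 a2) :
    (∀ n : ℤ × ℤ, n ≠ 0 → ‖cr a1 n‖ ^ 2 * (4 * nsq n) ≤ ‖cr f n‖ ^ 2) ∧
    (∀ n : ℤ × ℤ, n ≠ 0 → ‖cr a2 n‖ ^ 2 * (4 * nsq n) ≤ ‖cr f n‖ ^ 2) := by
  have key : ∀ (x : ℤ) (n : ℤ × ℤ), n ≠ 0 → (x : ℝ) ^ 2 ≤ nsq n →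
      ‖Complex.I * x * cr f n / (2 * nsq n)‖ ^ 2 * (4 * nsq n) ≤ ‖cr f n‖ ^ 2 := by
    intro x n hn hx
    have h3 := one_le_nsq hn
    rw [norm_div, norm_mul, norm_mul, norm_mul, Complex.norm_I, Complex.norm_real, 
      Real.norm_of_nonneg (nsq_nonneg n), RCLike.norm_two, Complex.norm_intCast]
    have : (1 * |(x : ℝ)| * ‖cr f n‖ / (2 * nsq n)) ^ 2 * (4 * nsq n) = (x : ℝ) ^ 2 / nsq n * ‖cr f n‖ ^ 2 := by
      rw [← sq_abs (x : ℝ)]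
      field_simp; norm_num
    rw [this]
    exact mul_le_of_le_one_left (by positivity) (div_le_one_of_le₀ hx (by positivity))
  refine ⟨fun n hn => ?_, fun n hn => ?_⟩
  · rw [hA.c1, if_neg hn, zero_add]
    exact key _ n hn (by unfold nsq; nlinarith [sq_nonneg (n.1 : ℝ)])
  · rw [hA.c2, norm_neg]
    exact key _ n hn (by unfold nsq; nlinarith [sq_nonneg (n.2 : ℝ)])



lemma tp_smul (S : Finset (ℤ × ℤ)) (c : ℂ) (g : ℤ × ℤ → ℂ) (z) :
    tp S (fun l => c * g l) z = c * tp S g z := by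
  simp only [tp, Finset.mul_sum, mul_assoc]

lemma sm_eq1 {f a1 a2 : ℝ × ℝ → ℝ} {V : ℝ} (hA : Vel f V a1 a2) (N : ℕ) (l : ℤ × ℤ) (x : ℤ) (hx : l = 0 → x = 0) :
    (x : ℂ) * sm N a1 l = (Complex.I / (8 * π ^ 2)) * (((chi N l * ((x : ℝ) * l.2 / nsq l) : ℝ) : ℂ) * cr f l) := by
  have hpi : (π : ℂ) ≠ 0 := by exact_mod_cast Real.pi_ne_zero
  by_cases hn : l = 0
  · rw [hx hn]; simp
  · have := one_le_nsq hn
    have hne : (nsq l : ℂ) ≠ 0 := by exact_mod_cast (by positivity : nsq l ≠ 0)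
    rw [sm, hA.c1, if_neg hn]
    push_cast; field_simp; ring

lemma sm_eq2 {f a1 a2 : ℝ × ℝ → ℝ} {V : ℝ} (hA : Vel f V a1 a2) (N : ℕ) (l : ℤ × ℤ) (x : ℤ) :
    (x : ℂ) * sm N a2 l = (-Complex.I / (8 * π ^ 2)) * (((chi N l * ((l.1 : ℝ) * x / nsq l) : ℝ) : ℂ) * cr f l) := by
  have hpi : (π : ℂ) ≠ 0 := by exact_mod_cast Real.pi_ne_zero
  by_cases hn : l = 0
  · subst hn; simp [sm, hA.c2]
  · have := one_le_nsq hn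
    have hne : (nsq l : ℂ) ≠ 0 := by exact_mod_cast (by positivity : nsq l ≠ 0)
    rw [sm, hA.c2]
    push_cast; field_simp; ring

lemma sm_bounds {f a1 a2 : ℝ × ℝ → ℝ} {V : ℝ} (hA : Vel f V a1 a2) {N : ℕ} (hN : 1 ≤ N)
    (hf : AEStronglyMeasurable f (volume.restrict Dom)) (M : ℝ) (hM : 0 ≤ M)
    (hfM : ∀ᵐ z ∂(volume.restrict Dom), |f z| ≤ M) (z : ℝ × ℝ) :
    ‖tp (box N) (fun l => l.1 * sm N a1 l) z‖ ≤ M * (CK * (1 + Real.log N)) ∧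
    ‖tp (box N) (fun l => l.2 * sm N a1 l) z‖ ≤ M * (CK * (1 + Real.log N)) ∧
    ‖tp (box N) (fun l => l.1 * sm N a2 l) z‖ ≤ M * (CK * (1 + Real.log N)) ∧
    ‖tp (box N) (fun l => l.2 * sm N a2 l) z‖ ≤ M * (CK * (1 + Real.log N)) := by
  have hn : ‖(Complex.I / (8 * π ^ 2))‖ ≤ 1 := by
    rw [norm_div, Complex.norm_I, norm_mul, norm_pow, Complex.norm_real, Real.norm_of_nonneg Real.pi_pos.le]
    norm_num
    have := Real.pi_gt_three
    have h1 : (π ^ 2)⁻¹ ≤ 1 := inv_le_one_of_one_le₀ (by nlinarith)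
    linarith
  have hn' : ‖(-Complex.I / (8 * π ^ 2))‖ ≤ 1 := by rwa [neg_div, norm_neg]
  have m : ∀ (c X : ℂ) (Y : ℝ), ‖c‖ ≤ 1 → ‖X‖ ≤ Y → ‖c * X‖ ≤ Y := by
    intro c X Y hc hX
    rw [norm_mul]
    exact (mul_le_of_le_one_left (norm_nonneg _) hc).trans hX
  refine ⟨?_, ?_, ?_, ?_⟩
  · rw [show (fun l : ℤ × ℤ => (l.1 : ℂ) * sm N a1 l) = _ from
      funext fun l => sm_eq1 hA N l l.1 (fun h => by rw [h]; rfl), tp_smul]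
    exact m _ _ _ hn (riesz12 hN f hf M hM hfM z)
  · rw [show (fun l : ℤ × ℤ => (l.2 : ℂ) * sm N a1 l) = _ from
      funext fun l => sm_eq1 hA N l l.2 (fun h => by rw [h]; rfl), tp_smul]
    exact m _ _ _ hn (riesz22 hN f hf M hM hfM z)
  · rw [show (fun l : ℤ × ℤ => (l.1 : ℂ) * sm N a2 l) = _ from
      funext fun l => sm_eq2 hA N l l.1, tp_smul]
    exact m _ _ _ hn' (riesz11 hN f hf M hM hfM z)
  · rw [show (fun l : ℤ × ℤ => (l.2 : ℂ) * sm N a2 l) = _ from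
      funext fun l => sm_eq2 hA N l l.2, tp_smul]
    exact m _ _ _ hn' (riesz12 hN f hf M hM hfM z)

lemma bdd_memLp {f : ℝ × ℝ → ℝ} {M : ℝ} (hf : AEStronglyMeasurable f (volume.restrict Dom))
    (hfM : ∀ᵐ z ∂(volume.restrict Dom), |f z| ≤ M) : MemLp f 2 (volume.restrict Dom) :=
  MemLp.of_bound hf M hfM

lemma bdd_sq {f : ℝ × ℝ → ℝ} {M : ℝ} (hf : AEStronglyMeasurable f (volume.restrict Dom))
    (hfM : ∀ᵐ z ∂(volume.restrict Dom), |f z| ≤ M) : ∫ z in Dom, f z ^ 2 ≤ 4 * π ^ 2 * M ^ 2 := by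
  have := integral_mono_ae (μ := volume.restrict Dom) (f := fun z => f z ^ 2) (g := fun _ => M ^ 2)
    (bdd_memLp hf hfM).integrable_sq (integrable_const _) (by
      filter_upwards [hfM] with z hz
      rw [← sq_abs]; gcongr)
  refine this.trans_eq ?_
  rw [integral_const, measureReal_restrict_apply_univ, vol_dom, smul_eq_mul]

lemma wpr_bound {w p : ℝ × ℝ → ℝ} {R : ℝ × ℝ → ℂ} {M : ℝ} (hM : 0 ≤ M)
    (hwM : ∀ᵐ z ∂(volume.restrict Dom), |w z| ≤ 2 * M) (hp : MemLp p 2 (volume.restrict Dom))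
    (hR : MemLp R 2 (volume.restrict Dom)) :
    ‖∫ z in Dom, (w z * p z : ℂ) * R z‖ ≤ M * (∫ z in Dom, p z ^ 2) + M * ∫ z in Dom, ‖R z‖ ^ 2 := by
  have i1 := hp.integrable_sq
  have i2 := hR.integrable_norm_pow (by norm_num)
  rw [← integral_const_mul, ← integral_const_mul, ← integral_add (i1.const_mul _) (i2.const_mul _)]
  refine norm_integral_le_of_norm_le ((i1.const_mul _).add (i2.const_mul _)) ?_
  filter_upwards [hwM] with z hz
  rw [norm_mul, norm_mul, Complex.norm_real, Complex.norm_real, Real.norm_eq_abs, Real.norm_eq_abs]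
  calc |w z| * |p z| * ‖R z‖ = |w z| * (|p z| * ‖R z‖) := by ring
    _ ≤ (2 * M) * ((|p z| ^ 2 + ‖R z‖ ^ 2) / 2) := by
        gcongr
        nlinarith [sq_nonneg (|p z| - ‖R z‖)]
    _ = _ := by rw [sq_abs]; ring

/-- The rate estimate at a fixed time. -/
lemma rate {f g w p1 p2 a1 a2 b1 b2 q1 q2 : ℝ × ℝ → ℝ} {V W M : ℝ} (hM : 0 ≤ M)
    (hA : Vel f V a1 a2) (hB : Vel g W b1 b2)
    (hf : AEStronglyMeasurable f (volume.restrict Dom)) (hfM : ∀ᵐ z ∂(volume.restrict Dom), |f z| ≤ M)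
    (hg : AEStronglyMeasurable g (volume.restrict Dom)) (hgM : ∀ᵐ z ∂(volume.restrict Dom), |g z| ≤ M)
    (hq1 : AEStronglyMeasurable q1 (volume.restrict Dom)) (hq1M : ∀ᵐ z ∂(volume.restrict Dom), |q1 z| ≤ M)
    (hq2 : AEStronglyMeasurable q2 (volume.restrict Dom)) (hq2M : ∀ᵐ z ∂(volume.restrict Dom), |q2 z| ≤ M)
    (hw : ∀ z, w z = f z - g z) (hwq : ∀ z, w z = q1 z - q2 z)
    (hp1 : ∀ z, p1 z = 2 * (a2 z - b2 z))
    (hp2 : ∀ z, p2 z = -2 * (a1 z - b1 z - (V - W))) (N : ℕ) (hN : 1 ≤ N) :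
    |∫ z in Dom, (p1 z * (a1 z * q1 z - b1 z * q2 z) + p2 z * (a2 z * q1 z - b2 z * q2 z))|
      ≤ (2 * M * CK + 2 * M) * (1 + Real.log N) * (∫ z in Dom, (p1 z ^ 2 + p2 z ^ 2))
        + 4 * π ^ 2 * M ^ 3 * (1 / (N : ℝ) ^ 2) + 2 * π ^ 2 * M * (V - W) ^ 2 := by
  have hN' : (1 : ℝ) ≤ N := by exact_mod_cast hN
  have hlog := Real.log_nonneg hN'
  have hpi := Real.pi_pos
  have hf2 := bdd_memLp hf hfM
  have hg2 := bdd_memLp hg hgM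
  have i := fun {f : ℝ × ℝ → ℝ} (h : MemLp f 2 (volume.restrict Dom)) => h.integrable (by norm_num)
  obtain ⟨m1, m2⟩ := p_memLp hA hB hp1 hp2
  obtain ⟨c1, c2, c0⟩ := p_cr hA hB (i hf2) (i hg2) hw hp1 hp2
  obtain ⟨hdiv, hcurl⟩ := div_curl c1 c2 c0
  have mw : MemLp w 2 (volume.restrict Dom) := by rw [funext hw]; exact hf2.sub hg2
  have hwM : ∀ᵐ z ∂(volume.restrict Dom), |w z| ≤ 2 * M := by
    filter_upwards [hfM, hgM] with z h1 h2
    rw [hw]; have := abs_sub (f z) (g z); linarith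
  have kb := key_bound mw m1 m2 hdiv hcurl (box N) (sm N a1) (sm N a2) (M * (CK * (1 + Real.log N)))
    (fun z => (sm_bounds hA hN hf M hM hfM z).1) (fun z => (sm_bounds hA hN hf M hM hfM z).2.1)
    (fun z => (sm_bounds hA hN hf M hM hfM z).2.2.1) (fun z => (sm_bounds hA hN hf M hM hfM z).2.2.2)
  have hF2 := bdd_sq hf hfM
  have r1 := rem_bound N hN hA.m1 hf2 hA.dec.1
  have r2 := rem_bound N hN hA.m2 hf2 hA.dec.2
  have mR1 : MemLp (fun z => (a1 z : ℂ) - tp (box N) (sm N a1) z) 2 (volume.restrict Dom) :=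
    (memC hA.m1).sub (memLp_tp (box N) (sm N a1) 2)
  have mR2 : MemLp (fun z => (a2 z : ℂ) - tp (box N) (sm N a2) z) 2 (volume.restrict Dom) :=
    (memC hA.m2).sub (memLp_tp (box N) (sm N a2) 2)
  have w1 := wpr_bound hM hwM m1 mR1
  have w2 := wpr_bound hM hwM m2 mR2
  have hR : (1 : ℝ) / (2 * (N : ℝ) ^ 2) * (4 * π ^ 2 * M ^ 2) = 2 * π ^ 2 * M ^ 2 * (1 / (N : ℝ) ^ 2) := by
    field_simp; ring
  have r1' : ∫ z in Dom, ‖(a1 z : ℂ) - tp (box N) (sm N a1) z‖ ^ 2 ≤ 2 * π ^ 2 * M ^ 2 * (1 / (N : ℝ) ^ 2) :=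
    r1.trans (by rw [← hR]; gcongr)
  have r2' : ∫ z in Dom, ‖(a2 z : ℂ) - tp (box N) (sm N a2) z‖ ^ 2 ≤ 2 * π ^ 2 * M ^ 2 * (1 / (N : ℝ) ^ 2) :=
    r2.trans (by rw [← hR]; gcongr)
  -- integrability
  have bw : ∀ {p a : ℝ × ℝ → ℝ}, MemLp p 2 (volume.restrict Dom) → MemLp a 2 (volume.restrict Dom) →
      Integrable (fun z => w z * p z * a z) (volume.restrict Dom) := by
    intro p a hp ha
    have := (memLp_mul_int hp ha).bdd_mul (c := 2 * M) (f := w) mw.aestronglyMeasurable hwM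
    simpa [mul_assoc] using this
  have i1 := bw m1 hA.m1
  have i2 := bw m2 hA.m2
  have i3 : Integrable (fun z => q2 z * (V - W) * p1 z) (volume.restrict Dom) := by
    have := ((i m1).bdd_mul (c := M) (f := q2) hq2 hq2M).const_mul (V - W)
    refine this.congr (Filter.Eventually.of_forall fun z => by simp only; ring)
  have split : ∫ z in Dom, (p1 z * (a1 z * q1 z - b1 z * q2 z) + p2 z * (a2 z * q1 z - b2 z * q2 z))
      = (∫ z in Dom, w z * p1 z * a1 z) + (∫ z in Dom, w z * p2 z * a2 z) + ∫ z in Dom, q2 z * (V - W) * p1 z := by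
    rw [← integral_add i1 i2, ← integral_add (f := fun z => w z * p1 z * a1 z + w z * p2 z * a2 z) (i1.add i2) i3]
    congr 1; ext z
    rw [hwq, hp1, hp2]; ring
  have cplx : ∀ {p a : ℝ × ℝ → ℝ}, MemLp p 2 (volume.restrict Dom) → MemLp a 2 (volume.restrict Dom) →
      ((∫ z in Dom, w z * p z * a z : ℝ) : ℂ) = (∫ z in Dom, (w z * p z : ℂ) * tp (box N) (sm N a) z)
        + ∫ z in Dom, (w z * p z : ℂ) * ((a z : ℂ) - tp (box N) (sm N a) z) := by
    intro p a hp ha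
    obtain ⟨B, hB⟩ := tp_bound (box N) (sm N a)
    have j1 := int_mul_cont mw hp (continuous_tp (box N) (sm N a)) B hB
    have j2 : Integrable (fun z => (w z * p z : ℂ) * a z) (volume.restrict Dom) := by
      simpa using (bw hp ha).ofReal (𝕜 := ℂ)
    rw [← integral_add j1]
    · rw [← integral_complex_ofReal]; congr 1; ext z; push_cast; ring
    · refine (j2.sub j1).congr (Filter.Eventually.of_forall fun z => by simp only [Pi.sub_apply]; ring)
  have hfirst : |(∫ z in Dom, w z * p1 z * a1 z) + (∫ z in Dom, w z * p2 z * a2 z)|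
      ≤ ‖(∫ z in Dom, (w z * p1 z : ℂ) * tp (box N) (sm N a1) z) + (∫ z in Dom, (w z * p2 z : ℂ) * tp (box N) (sm N a2) z)‖
      + ‖∫ z in Dom, (w z * p1 z : ℂ) * ((a1 z : ℂ) - tp (box N) (sm N a1) z)‖
      + ‖∫ z in Dom, (w z * p2 z : ℂ) * ((a2 z : ℂ) - tp (box N) (sm N a2) z)‖ := by
    rw [← Real.norm_eq_abs, ← Complex.norm_real, Complex.ofReal_add, cplx m1 hA.m1, cplx m2 hA.m2]
    rw [add_add_add_comm]
    refine (norm_add_le _ _).trans ?_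
    rw [add_assoc]
    gcongr
    exact norm_add_le _ _
  have s1 := m1.integrable_sq
  have s2 := m2.integrable_sq
  have hlast : |∫ z in Dom, q2 z * (V - W) * p1 z| ≤ 2 * π ^ 2 * M * (V - W) ^ 2 + M / 2 * ∫ z in Dom, p1 z ^ 2 := by
    have e : 2 * π ^ 2 * M * (V - W) ^ 2 = ∫ z in Dom, M / 2 * (V - W) ^ 2 := by
      rw [integral_const, measureReal_restrict_apply_univ, vol_dom, smul_eq_mul]; ring
    rw [e, ← integral_const_mul, ← integral_add (integrable_const _) (s1.const_mul _), ← Real.norm_eq_abs]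
    refine norm_integral_le_of_norm_le ((integrable_const _).add (s1.const_mul _)) ?_
    filter_upwards [hq2M] with z hz
    rw [Real.norm_eq_abs, mul_assoc, abs_mul, abs_mul]
    calc |q2 z| * (|V - W| * |p1 z|) ≤ M * ((|V - W| ^ 2 + |p1 z| ^ 2) / 2) := by
          gcongr
          nlinarith [sq_nonneg (|V - W| - |p1 z|)]
      _ = _ := by rw [sq_abs, sq_abs]; ring
  rw [split]
  refine (abs_add_le _ _).trans ?_
  have eE : ∫ z in Dom, (p1 z * p1 z + p2 z * p2 z) = ∫ z in Dom, (p1 z ^ 2 + p2 z ^ 2) := by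
    congr 1; ext z; ring
  rw [eE] at kb
  rw [integral_add s1 s2] at *
  set E1 := ∫ z in Dom, p1 z ^ 2
  set E2 := ∫ z in Dom, p2 z ^ 2
  have hE1 : 0 ≤ E1 := integral_nonneg fun z => sq_nonneg _
  have hE2 : 0 ≤ E2 := integral_nonneg fun z => sq_nonneg _
  have t1 := mul_le_mul_of_nonneg_left r1' hM
  have t2 := mul_le_mul_of_nonneg_left r2' hM
  have t3 : 0 ≤ M * Real.log N * (E1 + E2) := by positivity
  have t4 : 0 ≤ M * E1 := by positivity
  have t5 : 0 ≤ M * E2 := by positivity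
  have goal_eq : (2 * M * CK + 2 * M) * (1 + Real.log N) * (E1 + E2)
      = 2 * (M * (CK * (1 + Real.log N))) * (E1 + E2) + 2 * (M * Real.log N * (E1 + E2)) + 2 * (M * E1) + 2 * (M * E2) := by
    ring
  have t6 : M * (2 * π ^ 2 * M ^ 2 * (1 / (N : ℝ) ^ 2)) = 2 * π ^ 2 * M ^ 3 * (1 / (N : ℝ) ^ 2) := by ring
  linarith


/-- product rule for two primitives -/
lemma prim_mul {T c : ℝ} (hT : 0 ≤ T) (hc : c ∈ uIcc 0 T) {a b : ℝ → ℝ} (ha : IntervalIntegrable a volume 0 T)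
    (hb : IntervalIntegrable b volume 0 T) :
    ∫ s in (0)..T, (a s * (∫ r in (0)..s, b r) + (∫ r in c..s, a r) * b s)
      = (∫ r in c..T, a r) * (∫ r in (0)..T, b r) := by
  have h0 : (0 : ℝ) ∈ uIcc 0 T := left_mem_uIcc
  have h := AbsolutelyContinuousOnInterval.integral_deriv_mul_eq_sub
    (ha.absolutelyContinuousOnInterval_intervalIntegral hc)
    (hb.absolutelyContinuousOnInterval_intervalIntegral h0)
  simp only [intervalIntegral.integral_same, mul_zero, sub_zero] at h
  rw [← h]
  apply intervalIntegral.integral_congr_ae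
  filter_upwards [ha.ae_hasDerivAt_integral, hb.ae_hasDerivAt_integral] with x h1 h2 hx
  have hx' : x ∈ uIcc 0 T := uIoc_subset_uIcc hx
  rw [(h1 hx' c hc).deriv, (h2 hx' 0 h0).deriv]

lemma prim_sq {T : ℝ} (hT : 0 ≤ T) {b : ℝ → ℝ} (hb : IntervalIntegrable b volume 0 T) :
    ∫ s in (0)..T, 2 * ((∫ r in (0)..s, b r) * b s) = (∫ r in (0)..T, b r) ^ 2 := by
  rw [sq, ← prim_mul hT left_mem_uIcc hb hb]
  congr 1; ext s; ring

/-- du Bois-Reymond -/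
lemma dbr {T : ℝ} (hT : 0 < T) {A B : ℝ → ℝ} (hA : ContinuousOn A (Icc 0 T))
    (hB : IntervalIntegrable B volume 0 T)
    (hw : ∀ η : ℝ → ℝ, ContDiff ℝ 1 η → η T = 0 →
      ∫ s in (0)..T, (deriv η s * A s + η s * B s) = 0) :
    ∀ t ∈ Icc 0 T, A t = ∫ s in (0)..t, B s := by
  have hK : ContinuousOn (fun t => ∫ s in (0)..t, B s) (Icc 0 T) := by
    have := (hB.absolutelyContinuousOnInterval_intervalIntegral left_mem_uIcc).continuousOn
    rwa [uIcc_of_le hT.le] at this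
  set H : ℝ → ℝ := fun t => A t - ∫ s in (0)..t, B s with hH
  have hHc : ContinuousOn H (Icc 0 T) := hA.sub hK
  set ρ : ℝ → ℝ := IccExtend hT.le ((Icc 0 T).domRestrict H) with hρ
  have hρc : Continuous ρ := (continuousOn_iff_continuous_domRestrict.1 hHc).Icc_extend'
  have hρe : ∀ t ∈ Icc 0 T, ρ t = H t := fun t ht => by
    rw [hρ, IccExtend_of_mem _ _ ht]; rfl
  set η : ℝ → ℝ := fun t => ∫ s in T..t, ρ s with hη
  have hd : ∀ t, HasDerivAt η (ρ t) t := fun t =>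
    hρc.integral_hasStrictDerivAt T t |>.hasDerivAt
  have hdd : deriv η = ρ := funext fun t => (hd t).deriv
  have hC : ContDiff ℝ 1 η := by
    rw [contDiff_one_iff_deriv]
    exact ⟨fun t => (hd t).differentiableAt, hdd ▸ hρc⟩
  have h1 := hw η hC (by simp [hη])
  have hρi : IntervalIntegrable ρ volume 0 T := hρc.intervalIntegrable _ _
  have h2 := prim_mul hT.le (right_mem_uIcc) hρi hB
  rw [intervalIntegral.integral_same, zero_mul] at h2
  have iA : IntervalIntegrable (fun s => ρ s * A s) volume 0 T :=
    ContinuousOn.intervalIntegrable_of_Icc hT.le (hρc.continuousOn.mul hA)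
  have iK : IntervalIntegrable (fun s => ρ s * ∫ r in (0)..s, B r) volume 0 T :=
    ContinuousOn.intervalIntegrable_of_Icc hT.le (hρc.continuousOn.mul hK)
  have iB : IntervalIntegrable (fun s => η s * B s) volume 0 T :=
    hB.continuousOn_mul hC.continuous.continuousOn
  have h3 : ∫ s in (0)..T, ρ s ^ 2 = 0 := by
    rw [hdd, intervalIntegral.integral_add iA iB] at h1
    rw [intervalIntegral.integral_add iK iB] at h2
    have : ∫ s in (0)..T, ρ s ^ 2 = (∫ s in (0)..T, ρ s * A s) - ∫ s in (0)..T, ρ s * ∫ r in (0)..s, B r := by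
      rw [← intervalIntegral.integral_sub iA iK]
      apply intervalIntegral.integral_congr
      intro s hs
      rw [uIcc_of_le hT.le] at hs
      have : ρ s ^ 2 = ρ s * H s := by rw [sq, hρe s hs]
      simp only [this, hH]; ring
    linarith
  intro t ht
  by_contra hne
  have : 0 < ∫ s in (0)..T, ρ s ^ 2 := by
    apply intervalIntegral.integral_pos hT (hρc.pow 2).continuousOn (fun _ _ => sq_nonneg _)
    refine ⟨t, ht, ?_⟩
    have : ρ t ≠ 0 := by rw [hρe t ht]; exact sub_ne_zero.2 hne
    exact sq_pos_iff.2 this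
  linarith

/-- one step of the Osgood argument -/
lemma osgood_step {T a C : ℝ} (ha : 0 ≤ a) (hC : 0 < C) (haT : a ≤ T) {G e : ℝ → ℝ}
    (he : IntervalIntegrable e volume 0 T)
    (hG : ∀ t ∈ Icc 0 T, G t = ∫ s in (0)..t, e s) (hGc : ContinuousOn G (Icc 0 T))
    (hG0 : ∀ t ∈ Icc 0 T, 0 ≤ G t)
    (hb : ∀ N : ℕ, 1 ≤ N → ∀ᵐ s, s ∈ Icc 0 T → e s ≤ C * (1 + Real.log N) * G s + C / (N : ℝ) ^ 2)
    (hGa : G a = 0) : ∀ t ∈ Icc a T, t ≤ a + 1 / C → G t = 0 := by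
  intro t ht htC
  have ht0 : t ∈ Icc 0 T := ⟨ha.trans ht.1, ht.2⟩
  have main : ∀ N : ℕ, 1 ≤ N → G t ≤ Real.exp 1 / N := by
    intro N hN
    have hN' : (1 : ℝ) ≤ N := by exact_mod_cast hN
    have hlog := Real.log_nonneg hN'
    set K := C * (1 + Real.log N) with hK
    have hKC : C ≤ K := by nlinarith
    set ε := C / (N : ℝ) ^ 2 with hε
    have hε0 : 0 < ε := by positivity
    -- continuous extension of G
    set γ : ℝ → ℝ := IccExtend (ha.trans haT) ((Icc 0 T).domRestrict G) with hγ
    have hγc : Continuous γ := (continuousOn_iff_continuous_domRestrict.1 hGc).Icc_extend'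
    have hγe : ∀ t ∈ Icc 0 T, γ t = G t := fun t ht => by
      rw [hγ, IccExtend_of_mem _ _ ht]; rfl
    set R : ℝ → ℝ := fun t => ∫ s in a..t, (K * γ s + ε) with hR
    have hcont : Continuous (fun s => K * γ s + ε) := by fun_prop
    have hRd : ∀ t, HasDerivAt R (K * γ t + ε) t := fun t =>
      (hcont.integral_hasStrictDerivAt a t).hasDerivAt
    have hGR : ∀ x ∈ Icc a T, G x ≤ R x := by
      intro x hx
      have hx0 : x ∈ Icc 0 T := ⟨ha.trans hx.1, hx.2⟩
      have i1 : IntervalIntegrable e volume 0 a := he.mono_set (by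
        rw [uIcc_of_le ha, uIcc_of_le (ha.trans haT)]; exact Icc_subset_Icc le_rfl haT)
      have i2 : IntervalIntegrable e volume a x := he.mono_set (by
        rw [uIcc_of_le hx.1, uIcc_of_le (ha.trans haT)]; exact Icc_subset_Icc ha hx.2)
      have : G x = ∫ s in a..x, e s := by
        rw [hG x hx0, ← intervalIntegral.integral_add_adjacent_intervals i1 i2, ← hG a ⟨ha, haT⟩, hGa, zero_add]
      rw [this]
      apply intervalIntegral.integral_mono_ae_restrict hx.1 i2 (hcont.intervalIntegrable _ _)
      rw [Filter.EventuallyLE, ae_restrict_iff' measurableSet_Icc]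
      filter_upwards [hb N hN] with s hs hsx
      have hs0 : s ∈ Icc 0 T := ⟨ha.trans hsx.1, hsx.2.trans hx.2⟩
      rw [hγe s hs0]; exact hs hs0
    have gr := norm_le_gronwallBound_of_norm_deriv_right_le (f := R) (f' := fun t => K * γ t + ε)
      (δ := 0) (K := K) (ε := ε) (a := a) (b := T)
      (fun x _ => (hRd x).continuousAt.continuousWithinAt) (fun x _ => (hRd x).hasDerivWithinAt)
      (by simp [hR]) (by
        intro x hx
        have hx0 : x ∈ Icc 0 T := ⟨ha.trans hx.1, hx.2.le⟩
        have h1 := hG0 x hx0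
        have h2 := hGR x ⟨hx.1, hx.2.le⟩
        have hK0 : 0 ≤ K := hC.le.trans hKC
        rw [hγe x hx0, Real.norm_of_nonneg (by positivity), Real.norm_of_nonneg (h1.trans h2)]
        gcongr) t ht
    have hK0 : 0 < K := hC.trans_le hKC
    rw [gronwallBound_of_K_ne_0 hK0.ne'] at gr
    have h1 := (hGR t ht).trans ((le_abs_self _).trans gr)
    simp only [zero_mul, zero_add] at h1
    have h2 : Real.exp (K * (t - a)) ≤ Real.exp 1 * N := by
      have : K * (t - a) ≤ 1 + Real.log N := by
        have : K * (t - a) ≤ K * (1 / C) := by gcongr; linarith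
        refine this.trans_eq ?_
        rw [hK]; field_simp
      calc _ ≤ Real.exp (1 + Real.log N) := Real.exp_le_exp.2 this
        _ = _ := by rw [Real.exp_add, Real.exp_log (by linarith)]
    have h3 : ε / K ≤ 1 / (N : ℝ) ^ 2 := by
      rw [div_le_div_iff₀ hK0 (by positivity), hε, div_mul_cancel₀ _ (by positivity)]; linarith
    calc G t ≤ _ := h1
      _ ≤ 1 / (N : ℝ) ^ 2 * (Real.exp 1 * N) := by
        apply mul_le_mul h3 (by linarith) _ (by positivity)
        rw [sub_nonneg]; apply Real.one_le_exp
        exact mul_nonneg hK0.le (by linarith [ht.1])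
      _ = _ := by field_simp
  have lim : Filter.Tendsto (fun N : ℕ => Real.exp 1 / (N : ℝ)) Filter.atTop (nhds 0) :=
    tendsto_const_div_atTop_nhds_zero_nat _
  refine le_antisymm (ge_of_tendsto lim ?_) (hG0 t ht0)
  filter_upwards [Filter.eventually_ge_atTop 1] with N hN using main N hN

lemma osgood {T C : ℝ} (hC : 0 < C) {G e : ℝ → ℝ}
    (he : IntervalIntegrable e volume 0 T)
    (hG : ∀ t ∈ Icc 0 T, G t = ∫ s in (0)..t, e s) (hGc : ContinuousOn G (Icc 0 T))
    (hG0 : ∀ t ∈ Icc 0 T, 0 ≤ G t)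
    (hb : ∀ N : ℕ, 1 ≤ N → ∀ᵐ s, s ∈ Icc 0 T → e s ≤ C * (1 + Real.log N) * G s + C / (N : ℝ) ^ 2) :
    ∀ t ∈ Icc 0 T, G t = 0 := by
  have : ∀ k : ℕ, ∀ t ∈ Icc 0 T, t ≤ k * (1 / C) → G t = 0 := by
    intro k
    induction k with
    | zero =>
      intro t ht h
      have : t = 0 := le_antisymm (by simpa using h) ht.1
      rw [hG t ht, this]; simp
    | succ k ih =>
      intro t ht h
      by_cases hk : t ≤ k * (1 / C)
      · exact ih t ht hk
      · push Not at hk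
        have hk0 : 0 ≤ k * (1 / C) := by positivity
        have hkT : k * (1 / C) ≤ T := hk.le.trans ht.2
        refine osgood_step hk0 hC hkT he hG hGc hG0 hb (ih _ ⟨hk0, hkT⟩ le_rfl) t ⟨hk.le, ht.2⟩ ?_
        push_cast at h; linarith
  intro t ht
  obtain ⟨k, hk⟩ := exists_nat_ge (t * C)
  exact this k t ht (by rw [mul_one_div, le_div_iff₀ hC]; exact hk)


lemma vel_sq_aux {f a : ℝ × ℝ → ℝ} {V M : ℝ} (ha : MemLp a 2 (volume.restrict Dom))
    (hf : AEStronglyMeasurable f (volume.restrict Dom)) (hfM : ∀ᵐ z ∂(volume.restrict Dom), |f z| ≤ M)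
    (hV : |V| ≤ M) (h0 : ‖cr a 0‖ ≤ 4 * π ^ 2 * |V|)
    (hd : ∀ n : ℤ × ℤ, n ≠ 0 → ‖cr a n‖ ^ 2 * (4 * nsq n) ≤ ‖cr f n‖ ^ 2) :
    ∫ z in Dom, a z ^ 2 ≤ 8 * π ^ 2 * M ^ 2 := by
  have hpi := Real.pi_pos
  have s1 := parseval_cr_norm ha
  have s2 := parseval_cr_norm (bdd_memLp hf hfM)
  have s3 := (hasSum_ite_eq (0 : ℤ × ℤ) ((4 * π ^ 2 * |V|) ^ 2)).add s2
  have := hasSum_le (fun n => ?_) s1 s3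
  · have h1 := bdd_sq hf hfM
    have h2 : |V| ^ 2 ≤ M ^ 2 := by gcongr
    have h3 : 4 * π ^ 2 * ∫ z in Dom, a z ^ 2 ≤ 4 * π ^ 2 * (4 * π ^ 2 * M ^ 2 + 4 * π ^ 2 * M ^ 2) := by
      refine this.trans ?_
      have : (4 * π ^ 2 * |V|) ^ 2 ≤ 4 * π ^ 2 * (4 * π ^ 2 * M ^ 2) := by
        rw [mul_pow]; nlinarith [sq_nonneg (4 * π ^ 2)]
      nlinarith
    have := le_of_mul_le_mul_left h3 (by positivity)
    linarith
  · by_cases hn : n = 0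
    · subst hn
      simp only [if_true]
      have : ‖cr a 0‖ ^ 2 ≤ (4 * π ^ 2 * |V|) ^ 2 := by gcongr
      nlinarith [sq_nonneg ‖cr f 0‖]
    · simp only [if_neg hn, zero_add]
      have := one_le_nsq hn
      nlinarith [hd n hn, sq_nonneg ‖cr a n‖]

lemma vel_sq {f a1 a2 : ℝ × ℝ → ℝ} {V M : ℝ} (hA : Vel f V a1 a2)
    (hf : AEStronglyMeasurable f (volume.restrict Dom)) (hfM : ∀ᵐ z ∂(volume.restrict Dom), |f z| ≤ M)
    (hV : |V| ≤ M) : ∫ z in Dom, a1 z ^ 2 ≤ 8 * π ^ 2 * M ^ 2 ∧ ∫ z in Dom, a2 z ^ 2 ≤ 8 * π ^ 2 * M ^ 2 := by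
  refine ⟨vel_sq_aux hA.m1 hf hfM hV ?_ hA.dec.1, vel_sq_aux hA.m2 hf hfM hV ?_ hA.dec.2⟩
  · rw [hA.c1]; simp [abs_of_pos Real.pi_pos]
  · rw [hA.c2]; simp; positivity

/-- what holds at almost every time -/
structure Good (M V : ℝ) (q f : ℝ × ℝ → ℝ) (u : ℝ × ℝ → ℝ × ℝ) : Prop where
  mq : Measurable q
  mf : Measurable f
  mu : Measurable u
  qM : ∀ᵐ z ∂(volume.restrict Dom), |q z| ≤ M
  fM : ∀ᵐ z ∂(volume.restrict Dom), |f z| ≤ M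
  hV : |V| ≤ M
  vel : Vel f V (fun z => (u z).1) (fun z => (u z).2)

lemma good_ae {T β V₀ : ℝ} {h q₀ : ℝ × ℝ → ℝ} {V : ℝ → ℝ} {q : ℝ → ℝ × ℝ → ℝ} {u : ℝ → ℝ × ℝ → ℝ × ℝ}
    (hmeas : Measurable h) (hbdd : ∃ M : ℝ, ∀ᵐ z ∂(volume.restrict Dom), |h z| ≤ M) (hodd : OddInY h)
    (hs : IsWeakSolution T β h V₀ q₀ V q u) :
    ∃ M₀ : ℝ, ∀ M, M₀ ≤ M → ∀ᵐ t ∂(volume.restrict (Icc (0 : ℝ) T)),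
      Good M (V t) (q t) (fun z => q t z - h z - β * z.2) (u t) := by
  obtain ⟨Mh, hMh⟩ := hbdd
  obtain ⟨Mq, hMq⟩ := hs.bddq
  obtain ⟨MV, hMV⟩ := hs.bddV
  refine ⟨max MV (|Mq| + |Mh| + |β| * π), fun M hM => ?_⟩
  have hMV' := (le_max_left _ _).trans hM
  have hMq' := (le_max_right _ _).trans hM
  have hq : ∀ᵐ t ∂(volume.restrict (Icc (0 : ℝ) T)), ∀ᵐ z ∂(volume.restrict Dom), |q t z| ≤ Mq := by
    rw [Measure.volume_eq_prod, ← Measure.prod_restrict] at hMq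
    exact Measure.ae_ae_of_ae_prod hMq
  filter_upwards [hq, hs.oddq, hs.vel, ae_restrict_mem measurableSet_Icc] with t h1 h2 h3 h4
  have mq : Measurable (q t) := hs.measq.comp (by fun_prop : Measurable fun z : ℝ × ℝ => (t, z))
  have mu : Measurable (u t) := hs.measu.comp (by fun_prop : Measurable fun z : ℝ × ℝ => (t, z))
  have iq : Integrable (q t) (volume.restrict Dom) :=
    (bdd_memLp mq.aestronglyMeasurable h1).integrable (by norm_num)
  have ih : Integrable h (volume.restrict Dom) :=
    (bdd_memLp hmeas.aestronglyMeasurable hMh).integrable (by norm_num)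
  have hpos : 0 ≤ |β| * π := by positivity
  refine ⟨mq, by fun_prop, mu, ?_, ?_, (hMV t h4).trans hMV', ?_⟩
  · filter_upwards [h1] with z hz
    have := le_abs_self Mq
    have := abs_nonneg Mh
    linarith
  · filter_upwards [h1, hMh, ae_restrict_mem dom_measurable] with z hz hz' hD
    have a1 := le_abs_self Mq
    have a2 := le_abs_self Mh
    have a3 : |β * z.2| ≤ |β| * π := by
      rw [abs_mul]
      have : |z.2| ≤ π := abs_le.2 ⟨hD.2.1.le, hD.2.2⟩
      gcongr
    have a4 := abs_sub (q t z - h z) (β * z.2)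
    have a5 := abs_sub (q t z) (h z)
    linarith
  · exact Vel.of ((iq.sub ih).sub (int_y β)) (odd_f iq ih β h2 hodd) h3

/-- a spatial test function with its gradient -/
structure Test (c c1 c2 : ℝ × ℝ → ℝ) (K : ℝ) : Prop where
  smooth : ContDiff ℝ 1 c
  d : ∀ z, ∀ v : ℝ × ℝ, fderiv ℝ c z v = c1 z * v.1 + c2 z * v.2
  perx : ∀ x y, c (x + 2 * π, y) = c (x, y)
  pery : ∀ x y, c (x, y + 2 * π) = c (x, y)
  m1 : Continuous c1
  m2 : Continuous c2
  b : ∀ z, |c z| ≤ K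
  b1 : ∀ z, |c1 z| ≤ K
  b2 : ∀ z, |c2 z| ≤ K

def Bf (c1 c2 : ℝ × ℝ → ℝ) (q : ℝ × ℝ → ℝ) (u : ℝ × ℝ → ℝ × ℝ) : ℝ :=
  ∫ z in Dom, (c1 z * (u z).1 + c2 z * (u z).2) * q z

lemma meas_int {F : ℝ → ℝ × ℝ → ℝ} (hF : Measurable fun p : ℝ × (ℝ × ℝ) => F p.1 p.2) :
    Measurable fun s => ∫ z in Dom, F s z := by
  have : StronglyMeasurable (Function.uncurry F) := hF.stronglyMeasurable
  exact (this.integral_prod_right (ν := volume.restrict Dom)).measurable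

lemma bf_int {c c1 c2 q f : ℝ × ℝ → ℝ} {K M V : ℝ} (hc : Test c c1 c2 K) {u : ℝ × ℝ → ℝ × ℝ}
    (hg : Good M V q f u) :
    Integrable (fun z => (c1 z * (u z).1 + c2 z * (u z).2) * q z) (volume.restrict Dom) := by
  have i1 : Integrable (fun z => (u z).1) (volume.restrict Dom) := hg.vel.m1.integrable (by norm_num)
  have i2 : Integrable (fun z => (u z).2) (volume.restrict Dom) := hg.vel.m2.integrable (by norm_num)
  exact ((i1.bdd_mul (c := K) hc.m1.aestronglyMeasurable (Filter.Eventually.of_forall hc.b1)).add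
    (i2.bdd_mul (c := K) hc.m2.aestronglyMeasurable (Filter.Eventually.of_forall hc.b2))).mul_bdd (c := M)
    hg.mq.aestronglyMeasurable hg.qM

lemma bf_bound {c c1 c2 q f : ℝ × ℝ → ℝ} {K M V : ℝ} (hc : Test c c1 c2 K) {u : ℝ × ℝ → ℝ × ℝ}
    (hM : 0 ≤ M) (hg : Good M V q f u) :
    |Bf c1 c2 q u| ≤ K * M * (8 * π ^ 2 + 16 * π ^ 2 * M ^ 2) := by
  have hK : 0 ≤ K := (abs_nonneg _).trans (hc.b 0)
  obtain ⟨v1, v2⟩ := vel_sq hg.vel hg.mf.aestronglyMeasurable hg.fM hg.hV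
  have i1 := hg.vel.m1.integrable_sq
  have i2 := hg.vel.m2.integrable_sq
  have i12 : Integrable (fun z => (u z).1 ^ 2 + (u z).2 ^ 2) (volume.restrict Dom) := i1.add i2
  have i012 : Integrable (fun z => K * M * (2 + ((u z).1 ^ 2 + (u z).2 ^ 2))) (volume.restrict Dom) :=
    ((integrable_const _).add i12).const_mul _
  have e : K * M * (8 * π ^ 2 + ((∫ z in Dom, (u z).1 ^ 2) + ∫ z in Dom, (u z).2 ^ 2))
      = ∫ z in Dom, K * M * (2 + ((u z).1 ^ 2 + (u z).2 ^ 2)) := by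
    rw [integral_const_mul, integral_add (integrable_const _) i12, integral_add i1 i2, integral_const,
      measureReal_restrict_apply_univ, vol_dom, smul_eq_mul]
    ring
  have : |Bf c1 c2 q u| ≤ K * M * (8 * π ^ 2 + ((∫ z in Dom, (u z).1 ^ 2) + ∫ z in Dom, (u z).2 ^ 2)) := by
    rw [e, Bf, ← Real.norm_eq_abs]
    refine norm_integral_le_of_norm_le i012 ?_
    filter_upwards [hg.qM] with z hz
    rw [Real.norm_eq_abs, abs_mul]
    have : |c1 z * (u z).1 + c2 z * (u z).2| ≤ K * (2 + ((u z).1 ^ 2 + (u z).2 ^ 2)) := by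
      refine (abs_add_le _ _).trans ?_
      rw [abs_mul, abs_mul]
      have t1 : |(u z).1| ≤ 1 + (u z).1 ^ 2 := by nlinarith [sq_abs (u z).1, sq_nonneg (|(u z).1| - 1)]
      have t2 : |(u z).2| ≤ 1 + (u z).2 ^ 2 := by nlinarith [sq_abs (u z).2, sq_nonneg (|(u z).2| - 1)]
      have := mul_le_mul (hc.b1 z) t1 (abs_nonneg _) hK
      have := mul_le_mul (hc.b2 z) t2 (abs_nonneg _) hK
      linarith
    calc _ ≤ K * (2 + ((u z).1 ^ 2 + (u z).2 ^ 2)) * M := by gcongr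
      _ = _ := by ring
  refine this.trans ?_
  gcongr
  linarith

lemma weak_one {T β V₀ : ℝ} {h q₀ : ℝ × ℝ → ℝ} {V : ℝ → ℝ} {q : ℝ → ℝ × ℝ → ℝ} {u : ℝ → ℝ × ℝ → ℝ × ℝ}
    (hT : 0 < T) (hs : IsWeakSolution T β h V₀ q₀ V q u) {M : ℝ}
    (hg : ∀ᵐ t ∂(volume.restrict (Icc (0 : ℝ) T)), Good M (V t) (q t) (fun z => q t z - h z - β * z.2) (u t))
    {c c1 c2 : ℝ × ℝ → ℝ} {K : ℝ} (hc : Test c c1 c2 K) (η : ℝ → ℝ) (hη : ContDiff ℝ 1 η) (hηT : η T = 0) :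
    ∫ s in (0)..T, (deriv η s * (∫ z in Dom, q s z * c z) + η s * Bf c1 c2 (q s) (u s))
      = - ∫ z in Dom, η 0 * c z * q₀ z := by
  have hsm := hc.smooth
  have hd : ∀ s z (v : ℝ × ℝ × ℝ), fderiv ℝ (fun p : ℝ × ℝ × ℝ => η p.1 * c p.2) (s, z) v
      = deriv η s * v.1 * c z + η s * (c1 z * v.2.1 + c2 z * v.2.2) := by
    intro s z v
    have d1 : HasFDerivAt η (fderiv ℝ η s) s := (hη.differentiable (by norm_num) s).hasFDerivAt
    have d2 : HasFDerivAt c (fderiv ℝ c z) z := (hc.smooth.differentiable (by norm_num) z).hasFDerivAt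
    have d1' : HasFDerivAt (fun p : ℝ × ℝ × ℝ => η p.1) _ (s, z) :=
      HasFDerivAt.comp (s, z) (f := Prod.fst) d1 hasFDerivAt_fst
    have d2' : HasFDerivAt (fun p : ℝ × ℝ × ℝ => c p.2) _ (s, z) :=
      HasFDerivAt.comp (s, z) (f := Prod.snd) d2 hasFDerivAt_snd
    have d3 : HasFDerivAt (fun p : ℝ × ℝ × ℝ => η p.1 * c p.2) _ (s, z) := d1'.mul d2'
    rw [d3.fderiv]
    simp [hc.d]
    ring
  have hw := hs.weak_q (fun p => η p.1 * c p.2)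
    ((hη.comp contDiff_fst).mul (hsm.comp contDiff_snd))
    (fun t x y => by simp only [hc.perx]) (fun t x y => by simp only [hc.pery])
  simp only [hηT, zero_mul, integral_zero, zero_sub] at hw
  rw [hw, intervalIntegral.integral_of_le hT.le, ← integral_Icc_eq_integral_Ioc]
  apply integral_congr_ae
  filter_upwards [hg] with s hs
  have iq : Integrable (q s) (volume.restrict Dom) :=
    (bdd_memLp hs.mq.aestronglyMeasurable hs.qM).integrable (by norm_num)
  have iqc : Integrable (fun z => q s z * c z) (volume.restrict Dom) :=
    iq.mul_bdd (c := K) hsm.continuous.aestronglyMeasurable (Filter.Eventually.of_forall hc.b)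
  rw [Bf, ← integral_const_mul, ← integral_const_mul, ← integral_add (iqc.const_mul _) ((bf_int hc hs).const_mul _)]
  congr 1; ext z
  rw [hd, hd]; simp; ring

/-- the evolution of a Fourier mode of the difference -/
lemma mode_evol {T β V₀ M : ℝ} {h q₀ : ℝ × ℝ → ℝ} {V₁ V₂ : ℝ → ℝ} {q₁ q₂ : ℝ → ℝ × ℝ → ℝ}
    {u₁ u₂ : ℝ → ℝ × ℝ → ℝ × ℝ}
    (hT : 0 < T) (hM : 0 ≤ M) (hs₁ : IsWeakSolution T β h V₀ q₀ V₁ q₁ u₁) (hs₂ : IsWeakSolution T β h V₀ q₀ V₂ q₂ u₂)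
    (hg₁ : ∀ᵐ t ∂(volume.restrict (Icc (0 : ℝ) T)), Good M (V₁ t) (q₁ t) (fun z => q₁ t z - h z - β * z.2) (u₁ t))
    (hg₂ : ∀ᵐ t ∂(volume.restrict (Icc (0 : ℝ) T)), Good M (V₂ t) (q₂ t) (fun z => q₂ t z - h z - β * z.2) (u₂ t))
    {c c1 c2 : ℝ × ℝ → ℝ} {K : ℝ} (hc : Test c c1 c2 K) :
    IntervalIntegrable (fun s => Bf c1 c2 (q₁ s) (u₁ s) - Bf c1 c2 (q₂ s) (u₂ s)) volume 0 T ∧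
    ∀ t ∈ Icc 0 T, (∫ z in Dom, q₁ t z * c z) - (∫ z in Dom, q₂ t z * c z)
      = ∫ s in (0)..t, (Bf c1 c2 (q₁ s) (u₁ s) - Bf c1 c2 (q₂ s) (u₂ s)) := by
  have iB : ∀ {V : ℝ → ℝ} {q : ℝ → ℝ × ℝ → ℝ} {u : ℝ → ℝ × ℝ → ℝ × ℝ}, IsWeakSolution T β h V₀ q₀ V q u →
      (∀ᵐ t ∂(volume.restrict (Icc (0 : ℝ) T)), Good M (V t) (q t) (fun z => q t z - h z - β * z.2) (u t)) →
      IntervalIntegrable (fun s => Bf c1 c2 (q s) (u s)) volume 0 T := by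
    intro V q u hs hg
    rw [intervalIntegrable_iff_integrableOn_Icc_of_le hT.le]
    have hm : Measurable fun s => Bf c1 c2 (q s) (u s) := by
      apply meas_int
      have h1 := hc.m1.measurable
      have h2 := hc.m2.measurable
      have h3 := hs.measu
      have h4 := hs.measq
      fun_prop
    refine Integrable.of_bound hm.aestronglyMeasurable (K * M * (8 * π ^ 2 + 16 * π ^ 2 * M ^ 2)) ?_
    filter_upwards [hg] with s hs using bf_bound hc hM hs
  have i1 := iB hs₁ hg₁
  have i2 := iB hs₂ hg₂
  refine ⟨i1.sub i2, ?_⟩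
  have k1 := hs₁.contq c hc.smooth.continuous
  have k2 := hs₂.contq c hc.smooth.continuous
  refine dbr hT (A := fun t => (∫ z in Dom, q₁ t z * c z) - (∫ z in Dom, q₂ t z * c z)) (k1.sub k2) (i1.sub i2) ?_
  intro η hη hηT
  have w1 := weak_one hT hs₁ hg₁ hc η hη hηT
  have w2 := weak_one hT hs₂ hg₂ hc η hη hηT
  have hdc : Continuous (deriv η) := hη.continuous_deriv le_rfl
  have j : ∀ {A B : ℝ → ℝ}, ContinuousOn A (Icc 0 T) → IntervalIntegrable B volume 0 T →
      IntervalIntegrable (fun s => deriv η s * A s + η s * B s) volume 0 T := fun hA hB =>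
    (ContinuousOn.intervalIntegrable_of_Icc hT.le (hdc.continuousOn.mul hA)).add
      (hB.continuousOn_mul hη.continuous.continuousOn)
  have := intervalIntegral.integral_sub (j k1 i1) (j k2 i2)
  rw [w1, w2, sub_self] at this
  rw [← this]
  congr 1; ext s; ring


def th (n : ℤ × ℤ) (z : ℝ × ℝ) : ℝ := n.1 * z.1 + n.2 * z.2

lemma th_deriv (n : ℤ × ℤ) (z : ℝ × ℝ) :
    HasFDerivAt (th n) ((n.1 : ℝ) • ContinuousLinearMap.fst ℝ ℝ ℝ + (n.2 : ℝ) • ContinuousLinearMap.snd ℝ ℝ ℝ) z := by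
  exact (hasFDerivAt_fst.const_mul (n.1 : ℝ)).add (hasFDerivAt_snd.const_mul (n.2 : ℝ))

lemma th_smooth (n : ℤ × ℤ) : ContDiff ℝ 1 (th n) := by
  unfold th; fun_prop

lemma test_cos (n : ℤ × ℤ) : Test (fun z => Real.cos (th n z)) (fun z => -(n.1 * Real.sin (th n z)))
    (fun z => -(n.2 * Real.sin (th n z))) (1 + |(n.1 : ℝ)| + |(n.2 : ℝ)|) where
  smooth := (th_smooth n).cos
  d z v := by
    rw [(th_deriv n z).cos.fderiv]
    simp; ring
  perx x y := by
    rw [← Real.cos_add_int_mul_two_pi (th n (x, y)) n.1]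
    congr 1; simp only [th]; ring
  pery x y := by
    rw [← Real.cos_add_int_mul_two_pi (th n (x, y)) n.2]
    congr 1; simp only [th]; ring
  m1 := by have := (th_smooth n).continuous; fun_prop
  m2 := by have := (th_smooth n).continuous; fun_prop
  b z := by
    have := Real.abs_cos_le_one (th n z)
    have := abs_nonneg (n.1 : ℝ)
    have := abs_nonneg (n.2 : ℝ)
    linarith
  b1 z := by
    rw [abs_neg, abs_mul]
    have := mul_le_of_le_one_right (abs_nonneg (n.1 : ℝ)) (Real.abs_sin_le_one (th n z))
    have := abs_nonneg (n.2 : ℝ)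
    linarith
  b2 z := by
    rw [abs_neg, abs_mul]
    have := mul_le_of_le_one_right (abs_nonneg (n.2 : ℝ)) (Real.abs_sin_le_one (th n z))
    have := abs_nonneg (n.1 : ℝ)
    linarith

lemma test_sin (n : ℤ × ℤ) : Test (fun z => Real.sin (th n z)) (fun z => n.1 * Real.cos (th n z))
    (fun z => n.2 * Real.cos (th n z)) (1 + |(n.1 : ℝ)| + |(n.2 : ℝ)|) where
  smooth := (th_smooth n).sin
  d z v := by
    rw [(th_deriv n z).sin.fderiv]
    simp; ring
  perx x y := by
    rw [← Real.sin_add_int_mul_two_pi (th n (x, y)) n.1]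
    congr 1; simp only [th]; ring
  pery x y := by
    rw [← Real.sin_add_int_mul_two_pi (th n (x, y)) n.2]
    congr 1; simp only [th]; ring
  m1 := by have := (th_smooth n).continuous; fun_prop
  m2 := by have := (th_smooth n).continuous; fun_prop
  b z := by
    have := Real.abs_sin_le_one (th n z)
    have := abs_nonneg (n.1 : ℝ)
    have := abs_nonneg (n.2 : ℝ)
    linarith
  b1 z := by
    rw [abs_mul]
    have := mul_le_of_le_one_right (abs_nonneg (n.1 : ℝ)) (Real.abs_cos_le_one (th n z))
    have := abs_nonneg (n.2 : ℝ)
    linarith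
  b2 z := by
    rw [abs_mul]
    have := mul_le_of_le_one_right (abs_nonneg (n.2 : ℝ)) (Real.abs_cos_le_one (th n z))
    have := abs_nonneg (n.1 : ℝ)
    linarith

lemma cr_cs {w : ℝ × ℝ → ℝ} (hw : Integrable w (volume.restrict Dom)) (n : ℤ × ℤ) :
    cr w n = ((∫ z in Dom, w z * Real.cos (th n z) : ℝ) : ℂ)
      - Complex.I * ((∫ z in Dom, w z * Real.sin (th n z) : ℝ) : ℂ) := by
  have i1 : Integrable (fun z => w z * Real.cos (th n z)) (volume.restrict Dom) :=
    hw.mul_bdd (c := 1) (Real.continuous_cos.comp (th_smooth n).continuous).aestronglyMeasurable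
      (Filter.Eventually.of_forall fun z => Real.abs_cos_le_one _)
  have i2 : Integrable (fun z => w z * Real.sin (th n z)) (volume.restrict Dom) :=
    hw.mul_bdd (c := 1) (Real.continuous_sin.comp (th_smooth n).continuous).aestronglyMeasurable
      (Filter.Eventually.of_forall fun z => Real.abs_sin_le_one _)
  have k1 : Integrable (fun z => ((w z * Real.cos (th n z) : ℝ) : ℂ)) (volume.restrict Dom) := i1.ofReal
  have k2 : Integrable (fun z => Complex.I * ((w z * Real.sin (th n z) : ℝ) : ℂ)) (volume.restrict Dom) :=
    (i2.ofReal (𝕜 := ℂ)).const_mul _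
  rw [cr, co, ← integral_complex_ofReal, ← integral_complex_ofReal, ← integral_const_mul,
    ← integral_sub k1 k2]
  congr 1; ext z
  have : ek (-n) z = (Real.cos (th n z) : ℂ) - Complex.I * (Real.sin (th n z) : ℂ) := by
    rw [ek]
    have : Complex.I * (((-n).1 : ℂ) * (z.1 : ℂ) + ((-n).2 : ℂ) * (z.2 : ℂ)) = (-(th n z : ℝ) : ℂ) * Complex.I := by
      simp only [th, Prod.fst_neg, Prod.snd_neg]; push_cast; ring
    rw [this, Complex.exp_mul_I, Complex.cos_neg, Complex.sin_neg]
    push_cast; ring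
  rw [this]
  push_cast; ring

def dp1 (u v : ℝ × ℝ → ℝ × ℝ) (z : ℝ × ℝ) : ℝ := 2 * ((u z).2 - (v z).2)
def dp2 (V W : ℝ) (u v : ℝ × ℝ → ℝ × ℝ) (z : ℝ × ℝ) : ℝ := -2 * ((u z).1 - (v z).1 - (V - W))
def fl1 (q r : ℝ × ℝ → ℝ) (u v : ℝ × ℝ → ℝ × ℝ) (z : ℝ × ℝ) : ℝ := (u z).1 * q z - (v z).1 * r z
def fl2 (q r : ℝ × ℝ → ℝ) (u v : ℝ × ℝ → ℝ × ℝ) (z : ℝ × ℝ) : ℝ := (u z).2 * q z - (v z).2 * r z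

/-- difference of modes -/
def AA (c q r : ℝ × ℝ → ℝ) : ℝ := (∫ z in Dom, q z * c z) - ∫ z in Dom, r z * c z
def Ac (n : ℤ × ℤ) (q r : ℝ × ℝ → ℝ) : ℝ := AA (fun z => Real.cos (th n z)) q r
def As (n : ℤ × ℤ) (q r : ℝ × ℝ → ℝ) : ℝ := AA (fun z => Real.sin (th n z)) q r
def Bc (n : ℤ × ℤ) (q r : ℝ × ℝ → ℝ) (u v : ℝ × ℝ → ℝ × ℝ) : ℝ :=
  Bf (fun z => -(n.1 * Real.sin (th n z))) (fun z => -(n.2 * Real.sin (th n z))) q u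
  - Bf (fun z => -(n.1 * Real.sin (th n z))) (fun z => -(n.2 * Real.sin (th n z))) r v
def Bs (n : ℤ × ℤ) (q r : ℝ × ℝ → ℝ) (u v : ℝ × ℝ → ℝ × ℝ) : ℝ :=
  Bf (fun z => n.1 * Real.cos (th n z)) (fun z => n.2 * Real.cos (th n z)) q u
  - Bf (fun z => n.1 * Real.cos (th n z)) (fun z => n.2 * Real.cos (th n z)) r v

lemma AA_eq {c q r : ℝ × ℝ → ℝ} (hq : Integrable q (volume.restrict Dom)) (hr : Integrable r (volume.restrict Dom))
    (hc : Continuous c) (hb : ∀ z, |c z| ≤ 1) : AA c q r = ∫ z in Dom, (q z - r z) * c z := by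
  have j : ∀ {q : ℝ × ℝ → ℝ}, Integrable q (volume.restrict Dom) → Integrable (fun z => q z * c z) (volume.restrict Dom) :=
    fun hq => hq.mul_bdd (c := 1) hc.aestronglyMeasurable (Filter.Eventually.of_forall hb)
  rw [AA, ← integral_sub (j hq) (j hr)]
  congr 1; ext z; ring

section pair
variable {M V W : ℝ} {q r f g : ℝ × ℝ → ℝ} {u v : ℝ × ℝ → ℝ × ℝ}

lemma Good.iq (hq : Good M V q f u) : Integrable q (volume.restrict Dom) :=
  (bdd_memLp hq.mq.aestronglyMeasurable hq.qM).integrable (by norm_num)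

lemma Good.if (hq : Good M V q f u) : Integrable f (volume.restrict Dom) :=
  (bdd_memLp hq.mf.aestronglyMeasurable hq.fM).integrable (by norm_num)

lemma cr_w (hq : Good M V q f u) (hr : Good M W r g v) (n : ℤ × ℤ) :
    cr (fun z => q z - r z) n = (Ac n q r : ℂ) - Complex.I * (As n q r : ℂ) := by
  rw [cr_cs (w := fun z => q z - r z) (hq.iq.sub hr.iq), Ac, As,
    AA_eq (c := fun z => Real.cos (th n z)) hq.iq hr.iq (Real.continuous_cos.comp (th_smooth n).continuous) (fun _ => Real.abs_cos_le_one _),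
    AA_eq (c := fun z => Real.sin (th n z)) hq.iq hr.iq (Real.continuous_sin.comp (th_smooth n).continuous) (fun _ => Real.abs_sin_le_one _)]

lemma memLp_fl (hq : Good M V q f u) (hr : Good M W r g v) :
    MemLp (fl1 q r u v) 2 (volume.restrict Dom) ∧ MemLp (fl2 q r u v) 2 (volume.restrict Dom) := by
  have j : ∀ {a q : ℝ × ℝ → ℝ}, MemLp a 2 (volume.restrict Dom) → Measurable q →
      (∀ᵐ z ∂(volume.restrict Dom), |q z| ≤ M) → MemLp (fun z => a z * q z) 2 (volume.restrict Dom) := by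
    intro a q ha hq hM
    exact (memLp_top_of_bound hq.aestronglyMeasurable M hM).mul (r := 2) ha
  exact ⟨(j hq.vel.m1 hq.mq hq.qM).sub (j hr.vel.m1 hr.mq hr.qM),
    (j hq.vel.m2 hq.mq hq.qM).sub (j hr.vel.m2 hr.mq hr.qM)⟩

lemma cr_fl (hq : Good M V q f u) (hr : Good M W r g v) (n : ℤ × ℤ) :
    n.1 * cr (fl1 q r u v) n + n.2 * cr (fl2 q r u v) n
      = (Bs n q r u v : ℂ) + Complex.I * (Bc n q r u v : ℂ) := by
  obtain ⟨m1, m2⟩ := memLp_fl hq hr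
  have i1 := m1.integrable (by norm_num)
  have i2 := m2.integrable (by norm_num)
  have jc : ∀ {w : ℝ × ℝ → ℝ}, Integrable w (volume.restrict Dom) →
      Integrable (fun z => w z * Real.cos (th n z)) (volume.restrict Dom) := fun hw =>
    hw.mul_bdd (c := 1) (Real.continuous_cos.comp (th_smooth n).continuous).aestronglyMeasurable
      (Filter.Eventually.of_forall fun z => Real.abs_cos_le_one _)
  have js : ∀ {w : ℝ × ℝ → ℝ}, Integrable w (volume.restrict Dom) →
      Integrable (fun z => w z * Real.sin (th n z)) (volume.restrict Dom) := fun hw =>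
    hw.mul_bdd (c := 1) (Real.continuous_sin.comp (th_smooth n).continuous).aestronglyMeasurable
      (Filter.Eventually.of_forall fun z => Real.abs_sin_le_one _)
  have hS : Bs n q r u v = n.1 * (∫ z in Dom, fl1 q r u v z * Real.cos (th n z))
      + n.2 * (∫ z in Dom, fl2 q r u v z * Real.cos (th n z)) := by
    rw [Bs, Bf, Bf, ← integral_sub (bf_int (test_sin n) hq) (bf_int (test_sin n) hr), ← integral_const_mul,
      ← integral_const_mul, ← integral_add ((jc i1).const_mul _) ((jc i2).const_mul _)]
    congr 1; ext z; simp only [fl1, fl2]; ring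
  have hC : Bc n q r u v = -(n.1 * (∫ z in Dom, fl1 q r u v z * Real.sin (th n z))
      + n.2 * (∫ z in Dom, fl2 q r u v z * Real.sin (th n z))) := by
    rw [Bc, Bf, Bf, ← integral_sub (bf_int (test_cos n) hq) (bf_int (test_cos n) hr), ← integral_const_mul,
      ← integral_const_mul, ← integral_add ((js i1).const_mul _) ((js i2).const_mul _), ← integral_neg]
    congr 1; ext z; simp only [fl1, fl2]; ring
  rw [hS, hC, cr_cs i1, cr_cs i2]
  push_cast; ring

/-- the energy density identities for one mode -/
lemma mode_id (hq : Good M V q f u) (hr : Good M W r g v) (hfg : ∀ z, q z - r z = f z - g z) (n : ℤ × ℤ) :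
    (Ac n q r ^ 2 + As n q r ^ 2) / nsq n = ‖cr (dp1 u v) n‖ ^ 2 + ‖cr (dp2 V W u v) n‖ ^ 2 ∧
    2 * (Ac n q r * Bc n q r u v + As n q r * Bs n q r u v) / nsq n
      = -2 * ((conj (cr (dp1 u v) n) * cr (fl1 q r u v) n).re + (conj (cr (dp2 V W u v) n) * cr (fl2 q r u v) n).re) := by
  obtain ⟨c1, c2, -⟩ := p_cr (w := fun z => q z - r z) (p1 := dp1 u v) (p2 := dp2 V W u v) hq.vel hr.vel hq.if hr.if hfg
    (fun _ => rfl) (fun _ => rfl)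
  have hw := cr_w hq hr n
  have hF := cr_fl hq hr n
  rw [c1, c2, hw]
  by_cases hn : n = 0
  · subst hn; simp [nsq_zero]
  have hns := one_le_nsq hn
  have hne : (nsq n : ℂ) ≠ 0 := by exact_mod_cast (by positivity : nsq n ≠ 0)
  constructor
  · have : ∀ x y : ℝ, ‖(x : ℂ) - Complex.I * y‖ ^ 2 = x ^ 2 + y ^ 2 := fun x y => by
      rw [← Complex.normSq_eq_norm_sq, Complex.normSq_apply]; simp; ring
    rw [norm_neg, norm_neg, norm_div, norm_div, norm_mul, norm_mul, norm_mul, norm_mul, Complex.norm_I, div_pow, div_pow,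
      mul_pow, mul_pow, mul_pow, mul_pow, this]
    simp only [Complex.norm_real, Complex.norm_intCast, Real.norm_eq_abs, one_mul, sq_abs]
    have : nsq n = (n.1 : ℝ) ^ 2 + (n.2 : ℝ) ^ 2 := rfl
    rw [← add_div, one_pow, one_mul, one_mul, ← add_mul, ← this]
    field_simp
  · rw [← Complex.add_re]
    have : conj (-(Complex.I * n.1 * ((Ac n q r : ℂ) - Complex.I * (As n q r : ℂ)) / nsq n)) * cr (fl1 q r u v) n
        + conj (-(Complex.I * n.2 * ((Ac n q r : ℂ) - Complex.I * (As n q r : ℂ)) / nsq n)) * cr (fl2 q r u v) n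
        = (Complex.I * ((Ac n q r : ℂ) + Complex.I * (As n q r : ℂ)) * (n.1 * cr (fl1 q r u v) n + n.2 * cr (fl2 q r u v) n))
          * ((1 / nsq n : ℝ) : ℂ) := by
      simp only [map_neg, map_div₀, map_mul, map_sub, Complex.conj_I, Complex.conj_ofReal, map_intCast]
      push_cast; field_simp; ring
    rw [this, hF, Complex.re_mul_ofReal]
    simp [Complex.add_re, Complex.mul_re, Complex.mul_im]
    field_simp; ring

/-- total size bound -/
lemma tot_bound (hM : 0 ≤ M) (hq : Good M V q f u) (hr : Good M W r g v) :
    (∫ z in Dom, dp1 u v z ^ 2) + (∫ z in Dom, dp2 V W u v z ^ 2) + (∫ z in Dom, fl1 q r u v z ^ 2)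
      + (∫ z in Dom, fl2 q r u v z ^ 2) ≤ (12 + 2 * M ^ 2) * (32 * π ^ 2 * M ^ 2) + 192 * π ^ 2 * M ^ 2 := by
  obtain ⟨p1, p2⟩ := p_memLp (p1 := dp1 u v) (p2 := dp2 V W u v) hq.vel hr.vel (fun _ => rfl) (fun _ => rfl)
  obtain ⟨f1, f2⟩ := memLp_fl hq hr
  obtain ⟨v1, v2⟩ := vel_sq hq.vel hq.mf.aestronglyMeasurable hq.fM hq.hV
  obtain ⟨v3, v4⟩ := vel_sq hr.vel hr.mf.aestronglyMeasurable hr.fM hr.hV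
  have a1 := hq.vel.m1.integrable_sq
  have a2 := hq.vel.m2.integrable_sq
  have b1 := hr.vel.m1.integrable_sq
  have b2 := hr.vel.m2.integrable_sq
  have a12 : Integrable (fun z => (u z).1 ^ 2 + (u z).2 ^ 2) (volume.restrict Dom) := a1.add a2
  have b12 : Integrable (fun z => (v z).1 ^ 2 + (v z).2 ^ 2) (volume.restrict Dom) := b1.add b2
  have ab : Integrable (fun z => ((u z).1 ^ 2 + (u z).2 ^ 2) + ((v z).1 ^ 2 + (v z).2 ^ 2)) (volume.restrict Dom) :=
    a12.add b12
  have i1 : Integrable (fun z => dp1 u v z ^ 2 + dp2 V W u v z ^ 2) (volume.restrict Dom) :=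
    p1.integrable_sq.add p2.integrable_sq
  have i2 : Integrable (fun z => dp1 u v z ^ 2 + dp2 V W u v z ^ 2 + fl1 q r u v z ^ 2) (volume.restrict Dom) :=
    i1.add f1.integrable_sq
  have hVW : (V - W) ^ 2 ≤ 4 * M ^ 2 := by
    have h1 := abs_le.1 hq.hV
    have h2 := abs_le.1 hr.hV
    nlinarith
  rw [← integral_add p1.integrable_sq p2.integrable_sq, ← integral_add i1 f1.integrable_sq,
    ← integral_add i2 f2.integrable_sq]
  have e : ∫ z in Dom, ((12 + 2 * M ^ 2) * (((u z).1 ^ 2 + (u z).2 ^ 2) + ((v z).1 ^ 2 + (v z).2 ^ 2)) + 48 * M ^ 2)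
      ≤ (12 + 2 * M ^ 2) * (32 * π ^ 2 * M ^ 2) + 192 * π ^ 2 * M ^ 2 := by
    rw [integral_add (ab.const_mul _) (integrable_const _), integral_const_mul, integral_add a12 b12,
      integral_add a1 a2, integral_add b1 b2, integral_const,
      measureReal_restrict_apply_univ, vol_dom, smul_eq_mul]
    have : (∫ z in Dom, (u z).1 ^ 2) + (∫ z in Dom, (u z).2 ^ 2) + ((∫ z in Dom, (v z).1 ^ 2) + ∫ z in Dom, (v z).2 ^ 2)
        ≤ 32 * π ^ 2 * M ^ 2 := by linarith
    have := mul_le_mul_of_nonneg_left this (by positivity : 0 ≤ 12 + 2 * M ^ 2)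
    linarith
  refine le_trans (integral_mono_ae (i2.add f2.integrable_sq) ((ab.const_mul _).add (integrable_const _)) ?_) e
  filter_upwards [hq.qM, hr.qM] with z h1 h2
  have k1 : q z ^ 2 ≤ M ^ 2 := sq_le_sq' (by linarith [(abs_le.1 h1).1]) (abs_le.1 h1).2
  have k2 : r z ^ 2 ≤ M ^ 2 := sq_le_sq' (by linarith [(abs_le.1 h2).1]) (abs_le.1 h2).2
  have t1 : dp1 u v z ^ 2 ≤ 12 * ((u z).2 ^ 2 + (v z).2 ^ 2) := by
    simp only [dp1]; nlinarith [sq_nonneg ((u z).2 + (v z).2), sq_nonneg (u z).2, sq_nonneg (v z).2]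
  have t2 : dp2 V W u v z ^ 2 ≤ 12 * ((u z).1 ^ 2 + (v z).1 ^ 2) + 48 * M ^ 2 := by
    simp only [dp2]
    nlinarith [sq_nonneg ((u z).1 + (v z).1), sq_nonneg ((u z).1 + (V - W)), sq_nonneg ((v z).1 - (V - W))]
  have t3 : ∀ a b : ℝ, (a * q z - b * r z) ^ 2 ≤ 2 * M ^ 2 * (a ^ 2 + b ^ 2) := by
    intro a b
    have := mul_le_mul_of_nonneg_left k1 (sq_nonneg a)
    have := mul_le_mul_of_nonneg_left k2 (sq_nonneg b)
    nlinarith [sq_nonneg (a * q z + b * r z)]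
  have t4 := t3 (u z).1 (v z).1
  have t5 := t3 (u z).2 (v z).2
  simp only [Pi.add_apply, fl1, fl2]
  nlinarith
end pair


lemma prim_sq' {T : ℝ} {A B : ℝ → ℝ} (hB : IntervalIntegrable B volume 0 T)
    (hA : ∀ t ∈ Icc 0 T, A t = ∫ s in (0)..t, B s) (t : ℝ) (ht : t ∈ Icc 0 T) :
    IntervalIntegrable (fun s => 2 * (A s * B s)) volume 0 t ∧ A t ^ 2 = ∫ s in (0)..t, 2 * (A s * B s) := by
  have hT : 0 ≤ T := ht.1.trans ht.2
  have hBt : IntervalIntegrable B volume 0 t := hB.mono_set (by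
    rw [uIcc_of_le ht.1, uIcc_of_le hT]; exact Icc_subset_Icc le_rfl ht.2)
  have hK : ContinuousOn (fun t => ∫ s in (0)..t, B s) (uIcc 0 t) :=
    (hBt.absolutelyContinuousOnInterval_intervalIntegral left_mem_uIcc).continuousOn
  have hAK : ∀ s ∈ uIcc 0 t, A s = ∫ r in (0)..s, B r := fun s hs => by
    rw [uIcc_of_le ht.1] at hs; exact hA s ⟨hs.1, hs.2.trans ht.2⟩
  have hAc : ContinuousOn A (uIcc 0 t) := hK.congr hAK
  refine ⟨(hBt.continuousOn_mul hAc).const_mul 2, ?_⟩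
  rw [hA t ht, ← prim_sq ht.1 hBt]
  apply intervalIntegral.integral_congr
  intro s hs
  simp only [hAK s hs]

section two
variable {T β V₀ M : ℝ} {h q₀ : ℝ × ℝ → ℝ} {V₁ V₂ : ℝ → ℝ} {q₁ q₂ : ℝ → ℝ × ℝ → ℝ}
    {u₁ u₂ : ℝ → ℝ × ℝ → ℝ × ℝ}

def Yn (n : ℤ × ℤ) (q r : ℝ × ℝ → ℝ) (u v : ℝ × ℝ → ℝ × ℝ) : ℝ :=
  2 * (Ac n q r * Bc n q r u v + As n q r * Bs n q r u v) / nsq n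

lemma mode_time
    (hT : 0 < T) (hM : 0 ≤ M) (hs₁ : IsWeakSolution T β h V₀ q₀ V₁ q₁ u₁) (hs₂ : IsWeakSolution T β h V₀ q₀ V₂ q₂ u₂)
    (hg₁ : ∀ᵐ t ∂(volume.restrict (Icc (0 : ℝ) T)), Good M (V₁ t) (q₁ t) (fun z => q₁ t z - h z - β * z.2) (u₁ t))
    (hg₂ : ∀ᵐ t ∂(volume.restrict (Icc (0 : ℝ) T)), Good M (V₂ t) (q₂ t) (fun z => q₂ t z - h z - β * z.2) (u₂ t))
    (n : ℤ × ℤ) (t : ℝ) (ht : t ∈ Icc 0 T) :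
    IntervalIntegrable (fun s => Yn n (q₁ s) (q₂ s) (u₁ s) (u₂ s)) volume 0 t ∧
    (Ac n (q₁ t) (q₂ t) ^ 2 + As n (q₁ t) (q₂ t) ^ 2) / nsq n
      = ∫ s in (0)..t, Yn n (q₁ s) (q₂ s) (u₁ s) (u₂ s) := by
  obtain ⟨b1, e1⟩ := mode_evol hT hM hs₁ hs₂ hg₁ hg₂ (test_cos n)
  obtain ⟨b2, e2⟩ := mode_evol hT hM hs₁ hs₂ hg₁ hg₂ (test_sin n)
  obtain ⟨i1, f1⟩ := prim_sq' (A := fun t => Ac n (q₁ t) (q₂ t)) (B := fun s => Bc n (q₁ s) (q₂ s) (u₁ s) (u₂ s)) b1 e1 t ht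
  obtain ⟨i2, f2⟩ := prim_sq' (A := fun t => As n (q₁ t) (q₂ t)) (B := fun s => Bs n (q₁ s) (q₂ s) (u₁ s) (u₂ s)) b2 e2 t ht
  have e : (fun s => Yn n (q₁ s) (q₂ s) (u₁ s) (u₂ s)) = fun s =>
      (2 * (Ac n (q₁ s) (q₂ s) * Bc n (q₁ s) (q₂ s) (u₁ s) (u₂ s))
        + 2 * (As n (q₁ s) (q₂ s) * Bs n (q₁ s) (q₂ s) (u₁ s) (u₂ s))) / nsq n := by
    ext s; simp only [Yn]; ring
  rw [e]
  refine ⟨(i1.add i2).div_const _, ?_⟩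
  rw [intervalIntegral.integral_div, intervalIntegral.integral_add i1 i2, ← f1, ← f2]

def PF (V W : ℝ) (q r : ℝ × ℝ → ℝ) (u v : ℝ × ℝ → ℝ × ℝ) : ℝ :=
  ∫ z in Dom, (dp1 u v z * fl1 q r u v z + dp2 V W u v z * fl2 q r u v z)

def En (V W : ℝ) (u v : ℝ × ℝ → ℝ × ℝ) : ℝ := ∫ z in Dom, (dp1 u v z ^ 2 + dp2 V W u v z ^ 2)

def Tot (V W : ℝ) (q r : ℝ × ℝ → ℝ) (u v : ℝ × ℝ → ℝ × ℝ) : ℝ :=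
  (∫ z in Dom, dp1 u v z ^ 2) + (∫ z in Dom, dp2 V W u v z ^ 2) + (∫ z in Dom, fl1 q r u v z ^ 2)
      + (∫ z in Dom, fl2 q r u v z ^ 2)

lemma meas_all (hs₁ : IsWeakSolution T β h V₀ q₀ V₁ q₁ u₁) (hs₂ : IsWeakSolution T β h V₀ q₀ V₂ q₂ u₂) :
    (Measurable fun s => PF (V₁ s) (V₂ s) (q₁ s) (q₂ s) (u₁ s) (u₂ s)) ∧
    (Measurable fun s => Tot (V₁ s) (V₂ s) (q₁ s) (q₂ s) (u₁ s) (u₂ s)) := by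
  have m1 := hs₁.measq
  have m2 := hs₂.measq
  have m3 := hs₁.measu
  have m4 := hs₂.measu
  have m5 : Measurable fun p : ℝ × (ℝ × ℝ) => V₁ p.1 := hs₁.measV.comp measurable_fst
  have m6 : Measurable fun p : ℝ × (ℝ × ℝ) => V₂ p.1 := hs₂.measV.comp measurable_fst
  have d1 : Measurable fun p : ℝ × (ℝ × ℝ) => dp1 (u₁ p.1) (u₂ p.1) p.2 := by unfold dp1; fun_prop
  have d2 : Measurable fun p : ℝ × (ℝ × ℝ) => dp2 (V₁ p.1) (V₂ p.1) (u₁ p.1) (u₂ p.1) p.2 :=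
    (((measurable_fst.comp m3).sub (measurable_fst.comp m4)).sub (m5.sub m6)).const_mul (-2)
  have d3 : Measurable fun p : ℝ × (ℝ × ℝ) => fl1 (q₁ p.1) (q₂ p.1) (u₁ p.1) (u₂ p.1) p.2 := by unfold fl1; fun_prop
  have d4 : Measurable fun p : ℝ × (ℝ × ℝ) => fl2 (q₁ p.1) (q₂ p.1) (u₁ p.1) (u₂ p.1) p.2 := by unfold fl2; fun_prop
  refine ⟨meas_int (by fun_prop), ?_⟩
  exact (((meas_int (by fun_prop)).add (meas_int (by fun_prop))).add (meas_int (by fun_prop))).add (meas_int (by fun_prop))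

lemma pf_sum {M V W : ℝ} {q r f g : ℝ × ℝ → ℝ} {u v : ℝ × ℝ → ℝ × ℝ} (hq : Good M V q f u) (hr : Good M W r g v)
    (hfg : ∀ z, q z - r z = f z - g z) :
    HasSum (fun n => Yn n q r u v) (-(8 * π ^ 2) * PF V W q r u v) ∧
    HasSum (fun n => (Ac n q r ^ 2 + As n q r ^ 2) / nsq n) (4 * π ^ 2 * En V W u v) ∧
    HasSum (fun n => ‖cr (dp1 u v) n‖ ^ 2 + ‖cr (dp2 V W u v) n‖ ^ 2 + ‖cr (fl1 q r u v) n‖ ^ 2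
      + ‖cr (fl2 q r u v) n‖ ^ 2) (4 * π ^ 2 * Tot V W q r u v) ∧
    (∀ n, ‖Yn n q r u v‖ ≤ ‖cr (dp1 u v) n‖ ^ 2 + ‖cr (dp2 V W u v) n‖ ^ 2 + ‖cr (fl1 q r u v) n‖ ^ 2
      + ‖cr (fl2 q r u v) n‖ ^ 2) ∧ |PF V W q r u v| ≤ Tot V W q r u v := by
  obtain ⟨p1, p2⟩ := p_memLp (p1 := dp1 u v) (p2 := dp2 V W u v) hq.vel hr.vel (fun _ => rfl) (fun _ => rfl)
  obtain ⟨f1, f2⟩ := memLp_fl hq hr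
  have s1 := parseval_cr_norm p1
  have s2 := parseval_cr_norm p2
  have s3 := parseval_cr_norm f1
  have s4 := parseval_cr_norm f2
  have i1 := memLp_mul_int p1 f1
  have i2 := memLp_mul_int p2 f2
  have eP : PF V W q r u v = (∫ z in Dom, dp1 u v z * fl1 q r u v z) + ∫ z in Dom, dp2 V W u v z * fl2 q r u v z :=
    integral_add i1 i2
  refine ⟨?_, ?_, ?_, ?_, ?_⟩
  · have := ((parseval_cr p1 f1).add (parseval_cr p2 f2)).mul_left (-2)
    have e := funext fun n => (mode_id hq hr hfg n).2
    simp only [Yn]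
    rw [eP, e]
    convert this using 1
    · rfl
    · ring
  · have := s1.add s2
    rw [En, integral_add p1.integrable_sq p2.integrable_sq]
    have e := funext fun n => (mode_id hq hr hfg n).1
    rw [e]
    convert this using 1
    ring
  · convert ((s1.add s2).add s3).add s4 using 1
    rw [Tot]; ring
  · intro n
    rw [Yn, (mode_id hq hr hfg n).2]
    have k : ∀ x y : ℂ, |(conj x * y).re| ≤ (‖x‖ ^ 2 + ‖y‖ ^ 2) / 2 := by
      intro x y
      refine (Complex.abs_re_le_norm _).trans ?_
      rw [norm_mul, Complex.norm_conj]
      nlinarith [sq_nonneg (‖x‖ - ‖y‖)]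
    rw [Real.norm_eq_abs, abs_mul]
    have k1 := k (cr (dp1 u v) n) (cr (fl1 q r u v) n)
    have k2 := k (cr (dp2 V W u v) n) (cr (fl2 q r u v) n)
    have k3 := abs_add_le (conj (cr (dp1 u v) n) * cr (fl1 q r u v) n).re (conj (cr (dp2 V W u v) n) * cr (fl2 q r u v) n).re
    have : |(-2 : ℝ)| = 2 := by norm_num
    rw [this]
    linarith
  · have k : ∀ {x y : ℝ × ℝ → ℝ}, MemLp x 2 (volume.restrict Dom) → MemLp y 2 (volume.restrict Dom) →
        |∫ z in Dom, x z * y z| ≤ (∫ z in Dom, x z ^ 2) + ∫ z in Dom, y z ^ 2 := by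
      intro x y hx hy
      rw [← integral_add hx.integrable_sq hy.integrable_sq, ← Real.norm_eq_abs]
      refine norm_integral_le_of_norm_le (hx.integrable_sq.add hy.integrable_sq) (Filter.Eventually.of_forall fun z => ?_)
      rw [Real.norm_eq_abs, abs_mul]
      nlinarith [sq_nonneg (|x z| - |y z|), sq_abs (x z), sq_abs (y z), sq_nonneg (x z), sq_nonneg (y z)]
    rw [eP, Tot]
    have := abs_add_le (∫ z in Dom, dp1 u v z * fl1 q r u v z) (∫ z in Dom, dp2 V W u v z * fl2 q r u v z)
    have := k p1 f1
    have := k p2 f2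
    linarith

/-- the energy identity -/
lemma energy
    (hT : 0 < T) (hM : 0 ≤ M) (hs₁ : IsWeakSolution T β h V₀ q₀ V₁ q₁ u₁) (hs₂ : IsWeakSolution T β h V₀ q₀ V₂ q₂ u₂)
    (hg₁ : ∀ᵐ t ∂(volume.restrict (Icc (0 : ℝ) T)), Good M (V₁ t) (q₁ t) (fun z => q₁ t z - h z - β * z.2) (u₁ t))
    (hg₂ : ∀ᵐ t ∂(volume.restrict (Icc (0 : ℝ) T)), Good M (V₂ t) (q₂ t) (fun z => q₂ t z - h z - β * z.2) (u₂ t)) :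
    IntervalIntegrable (fun s => PF (V₁ s) (V₂ s) (q₁ s) (q₂ s) (u₁ s) (u₂ s)) volume 0 T ∧
    ∀ᵐ t ∂(volume.restrict (Icc (0 : ℝ) T)), En (V₁ t) (V₂ t) (u₁ t) (u₂ t)
      = ∫ s in (0)..t, -2 * PF (V₁ s) (V₂ s) (q₁ s) (q₂ s) (u₁ s) (u₂ s) := by
  have hpi := Real.pi_pos
  obtain ⟨mP, mT⟩ := meas_all hs₁ hs₂
  have hfg : ∀ t z, q₁ t z - q₂ t z = (q₁ t z - h z - β * z.2) - (q₂ t z - h z - β * z.2) := fun t z => by ring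
  have facts : ∀ᵐ t ∂(volume.restrict (Icc (0 : ℝ) T)),
    Tot (V₁ t) (V₂ t) (q₁ t) (q₂ t) (u₁ t) (u₂ t) ≤ (12 + 2 * M ^ 2) * (32 * π ^ 2 * M ^ 2) + 192 * π ^ 2 * M ^ 2 ∧
    HasSum (fun n => Yn n (q₁ t) (q₂ t) (u₁ t) (u₂ t)) (-(8 * π ^ 2) * PF (V₁ t) (V₂ t) (q₁ t) (q₂ t) (u₁ t) (u₂ t)) ∧
    HasSum (fun n => (Ac n (q₁ t) (q₂ t) ^ 2 + As n (q₁ t) (q₂ t) ^ 2) / nsq n) (4 * π ^ 2 * En (V₁ t) (V₂ t) (u₁ t) (u₂ t)) ∧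
    HasSum (fun n => ‖cr (dp1 (u₁ t) (u₂ t)) n‖ ^ 2 + ‖cr (dp2 (V₁ t) (V₂ t) (u₁ t) (u₂ t)) n‖ ^ 2 + ‖cr (fl1 (q₁ t) (q₂ t) (u₁ t) (u₂ t)) n‖ ^ 2
      + ‖cr (fl2 (q₁ t) (q₂ t) (u₁ t) (u₂ t)) n‖ ^ 2) (4 * π ^ 2 * Tot (V₁ t) (V₂ t) (q₁ t) (q₂ t) (u₁ t) (u₂ t)) ∧
    (∀ n, ‖Yn n (q₁ t) (q₂ t) (u₁ t) (u₂ t)‖ ≤ ‖cr (dp1 (u₁ t) (u₂ t)) n‖ ^ 2 + ‖cr (dp2 (V₁ t) (V₂ t) (u₁ t) (u₂ t)) n‖ ^ 2 + ‖cr (fl1 (q₁ t) (q₂ t) (u₁ t) (u₂ t)) n‖ ^ 2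
      + ‖cr (fl2 (q₁ t) (q₂ t) (u₁ t) (u₂ t)) n‖ ^ 2) ∧ |PF (V₁ t) (V₂ t) (q₁ t) (q₂ t) (u₁ t) (u₂ t)| ≤ Tot (V₁ t) (V₂ t) (q₁ t) (q₂ t) (u₁ t) (u₂ t) := by
    filter_upwards [hg₁, hg₂] with t h1 h2
    exact And.intro (tot_bound hM h1 h2) (pf_sum h1 h2 (hfg t))
  have hTn : ∀ (V W : ℝ) q r u v, 0 ≤ Tot V W q r u v := fun V W q r u v => by
    have := fun f : ℝ × ℝ → ℝ => integral_nonneg (μ := volume.restrict Dom) (f := fun z => f z ^ 2) (fun z => sq_nonneg _)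
    exact add_nonneg (add_nonneg (add_nonneg (this _) (this _)) (this _)) (this _)
  have iP : IntegrableOn (fun s => PF (V₁ s) (V₂ s) (q₁ s) (q₂ s) (u₁ s) (u₂ s)) (Icc 0 T) := by
    refine Integrable.of_bound mP.aestronglyMeasurable ((12 + 2 * M ^ 2) * (32 * π ^ 2 * M ^ 2) + 192 * π ^ 2 * M ^ 2) ?_
    filter_upwards [facts] with t ht
    exact ht.2.2.2.2.2.trans ht.1
  have iT : IntegrableOn (fun s => Tot (V₁ s) (V₂ s) (q₁ s) (q₂ s) (u₁ s) (u₂ s)) (Icc 0 T) := by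
    refine Integrable.of_bound mT.aestronglyMeasurable ((12 + 2 * M ^ 2) * (32 * π ^ 2 * M ^ 2) + 192 * π ^ 2 * M ^ 2) ?_
    filter_upwards [facts] with t ht
    rw [Real.norm_of_nonneg (hTn _ _ _ _ _ _)]
    exact ht.1
  refine ⟨(intervalIntegrable_iff_integrableOn_Icc_of_le hT.le).2 iP, ?_⟩
  have facts' := (ae_restrict_iff' measurableSet_Icc).1 facts
  filter_upwards [facts, ae_restrict_mem measurableSet_Icc] with t hft ht
  have hsub : ∀ s, s ∈ uIoc 0 t → s ∈ Icc 0 T := fun s hs => by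
    rw [uIoc_of_le ht.1] at hs; exact ⟨hs.1.le, hs.2.trans ht.2⟩
  have key := intervalIntegral.hasSum_integral_of_dominated_convergence (μ := volume) (a := 0) (b := t)
    (F := fun n s => Yn n (q₁ s) (q₂ s) (u₁ s) (u₂ s))
    (f := fun s => -(8 * π ^ 2) * PF (V₁ s) (V₂ s) (q₁ s) (q₂ s) (u₁ s) (u₂ s))
    (fun n s => ‖cr (dp1 (u₁ s) (u₂ s)) n‖ ^ 2 + ‖cr (dp2 (V₁ s) (V₂ s) (u₁ s) (u₂ s)) n‖ ^ 2
      + ‖cr (fl1 (q₁ s) (q₂ s) (u₁ s) (u₂ s)) n‖ ^ 2 + ‖cr (fl2 (q₁ s) (q₂ s) (u₁ s) (u₂ s)) n‖ ^ 2)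
    (fun n => (intervalIntegrable_iff.1 (mode_time hT hM hs₁ hs₂ hg₁ hg₂ n t ht).1).aestronglyMeasurable)
    (fun n => by
      filter_upwards [facts'] with s hs hst
      exact (hs (hsub s hst)).2.2.2.2.1 n)
    (by
      filter_upwards [facts'] with s hs hst
      exact (hs (hsub s hst)).2.2.2.1.summable)
    (by
      have iT' : IntervalIntegrable (fun s => 4 * π ^ 2 * Tot (V₁ s) (V₂ s) (q₁ s) (q₂ s) (u₁ s) (u₂ s)) volume 0 t := by
        rw [intervalIntegrable_iff_integrableOn_Icc_of_le ht.1]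
        exact (iT.mono_set (Icc_subset_Icc le_rfl ht.2)).const_mul _
      refine iT'.congr_ae ?_
      rw [Filter.EventuallyEq, ae_restrict_iff' measurableSet_uIoc]
      filter_upwards [facts'] with s hs hst
      exact (hs (hsub s hst)).2.2.2.1.tsum_eq.symm)
    (by
      filter_upwards [facts'] with s hs hst
      exact (hs (hsub s hst)).2.1)
  have k2 := hft.2.2.1
  have e := funext fun n => (mode_time hT hM hs₁ hs₂ hg₁ hg₂ n t ht).2
  rw [e] at k2
  have := k2.unique key
  rw [intervalIntegral.integral_const_mul] at this ⊢
  have h4 : (4 * π ^ 2 : ℝ) ≠ 0 := by positivity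
  apply mul_left_cancel₀ h4
  rw [this]; ring
end two


def Dr (h : ℝ × ℝ → ℝ) (u : ℝ × ℝ → ℝ × ℝ) : ℝ := (∫ z in Dom, h z * (u z).2) / (4 * π ^ 2)

lemma dr_bound {M V : ℝ} {h q f : ℝ × ℝ → ℝ} {u : ℝ × ℝ → ℝ × ℝ} (hM : 0 ≤ M)
    (hhM : ∀ᵐ z ∂(volume.restrict Dom), |h z| ≤ M) (hq : Good M V q f u) :
    |Dr h u| ≤ M * (1 + 2 * M ^ 2) := by
  have hpi := Real.pi_pos
  obtain ⟨v1, v2⟩ := vel_sq hq.vel hq.mf.aestronglyMeasurable hq.fM hq.hV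
  have i2 := hq.vel.m2.integrable_sq
  have i : Integrable (fun z => M * (1 + (u z).2 ^ 2)) (volume.restrict Dom) := ((integrable_const _).add i2).const_mul _
  have : |∫ z in Dom, h z * (u z).2| ≤ ∫ z in Dom, M * (1 + (u z).2 ^ 2) := by
    rw [← Real.norm_eq_abs]
    refine norm_integral_le_of_norm_le i ?_
    filter_upwards [hhM] with z hz
    rw [Real.norm_eq_abs, abs_mul]
    have t2 : |(u z).2| ≤ 1 + (u z).2 ^ 2 := by nlinarith [sq_abs (u z).2, sq_nonneg (|(u z).2| - 1)]
    gcongr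
  rw [integral_const_mul, integral_add (integrable_const _) i2, integral_const,
      measureReal_restrict_apply_univ, vol_dom, smul_eq_mul] at this
  rw [Dr, abs_div, abs_of_pos (by positivity : 0 < 4 * π ^ 2), div_le_iff₀ (by positivity)]
  have := mul_le_mul_of_nonneg_left v2 hM
  linarith

lemma dr_pair {M V W : ℝ} {h q r f g : ℝ × ℝ → ℝ} {u v : ℝ × ℝ → ℝ × ℝ} (hM : 0 ≤ M) (hmeas : Measurable h)
    (hhM : ∀ᵐ z ∂(volume.restrict Dom), |h z| ≤ M) (hq : Good M V q f u) (hr : Good M W r g v) :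
    2 * ((V - W) * (Dr h u - Dr h v)) ≤ M * ((V - W) ^ 2 + En V W u v) := by
  have hpi := Real.pi_pos
  have hpi3 := Real.pi_gt_three
  obtain ⟨p1, p2⟩ := p_memLp (p1 := dp1 u v) (p2 := dp2 V W u v) hq.vel hr.vel (fun _ => rfl) (fun _ => rfl)
  have i1 : Integrable (fun z => h z * (u z).2) (volume.restrict Dom) :=
    (hq.vel.m2.integrable (by norm_num)).bdd_mul (c := M) hmeas.aestronglyMeasurable hhM
  have i2 : Integrable (fun z => h z * (v z).2) (volume.restrict Dom) :=
    (hr.vel.m2.integrable (by norm_num)).bdd_mul (c := M) hmeas.aestronglyMeasurable hhM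
  have i3 : Integrable (fun z => (V - W) * (2 * (h z * (u z).2 - h z * (v z).2))) (volume.restrict Dom) :=
    ((i1.sub i2).const_mul _).const_mul _
  have iE : Integrable (fun z => dp1 u v z ^ 2 + dp2 V W u v z ^ 2) (volume.restrict Dom) :=
    p1.integrable_sq.add p2.integrable_sq
  have i4 : Integrable (fun z => M * ((V - W) ^ 2 + (dp1 u v z ^ 2 + dp2 V W u v z ^ 2))) (volume.restrict Dom) :=
    ((integrable_const _).add iE).const_mul _
  have e : 2 * ((V - W) * (Dr h u - Dr h v))
      = (∫ z in Dom, (V - W) * (2 * (h z * (u z).2 - h z * (v z).2))) / (4 * π ^ 2) := by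
    rw [integral_const_mul, integral_const_mul, integral_sub i1 i2, Dr, Dr]; ring
  have hE : 0 ≤ En V W u v := integral_nonneg fun z => by positivity
  have m := integral_mono_ae i3 i4 (by
    filter_upwards [hhM] with z hz
    have h1 : (V - W) * (2 * (h z * (u z).2 - h z * (v z).2)) ≤ |h z| * (|V - W| * |dp1 u v z|) := by
      rw [← abs_mul, ← abs_mul]
      refine le_trans (le_of_eq ?_) (le_abs_self _)
      simp only [dp1]; ring
    refine h1.trans ?_
    have h2 : |V - W| * |dp1 u v z| ≤ (V - W) ^ 2 + (dp1 u v z ^ 2 + dp2 V W u v z ^ 2) := by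
      nlinarith [sq_nonneg (|V - W| - |dp1 u v z|), sq_abs (V - W), sq_abs (dp1 u v z), sq_nonneg (dp2 V W u v z),
        sq_nonneg (V - W), sq_nonneg (dp1 u v z)]
    exact mul_le_mul hz h2 (by positivity) hM)
  rw [integral_const_mul _ (fun z => (V - W) ^ 2 + (dp1 u v z ^ 2 + dp2 V W u v z ^ 2)),
    integral_add (integrable_const _) iE, integral_const,
      measureReal_restrict_apply_univ, vol_dom, smul_eq_mul] at m
  rw [e, div_le_iff₀ (by positivity)]
  refine m.trans ?_
  change M * (_ + En V W u v) ≤ _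
  rw [mul_assoc M]
  refine mul_le_mul_of_nonneg_left ?_ hM
  have h1 : 1 ≤ 4 * π ^ 2 := by nlinarith
  have h2 := mul_le_mul_of_nonneg_left h1 hE
  linarith

lemma rate_pair {M V W : ℝ} {q r f g : ℝ × ℝ → ℝ} {u v : ℝ × ℝ → ℝ × ℝ} (hM : 0 ≤ M)
    (hq : Good M V q f u) (hr : Good M W r g v) (hfg : ∀ z, q z - r z = f z - g z) (N : ℕ) (hN : 1 ≤ N) :
    |PF V W q r u v| ≤ (2 * M * CK + 2 * M) * (1 + Real.log N) * En V W u v + 4 * π ^ 2 * M ^ 3 * (1 / (N : ℝ) ^ 2)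
      + 2 * π ^ 2 * M * (V - W) ^ 2 :=
  rate (w := fun z => q z - r z) hM hq.vel hr.vel hq.mf.aestronglyMeasurable hq.fM hr.mf.aestronglyMeasurable hr.fM
    hq.mq.aestronglyMeasurable hq.qM hr.mq.aestronglyMeasurable hr.qM hfg (fun _ => rfl) (fun _ => rfl) (fun _ => rfl) N hN

lemma en_zero {M V W : ℝ} {q r f g : ℝ × ℝ → ℝ} {u v : ℝ × ℝ → ℝ × ℝ}
    (hq : Good M V q f u) (hr : Good M W r g v) (hfg : ∀ z, q z - r z = f z - g z) (h0 : En V W u v = 0) :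
    ∀ᵐ z ∂(volume.restrict Dom), q z = r z := by
  obtain ⟨p1, p2⟩ := p_memLp (p1 := dp1 u v) (p2 := dp2 V W u v) hq.vel hr.vel (fun _ => rfl) (fun _ => rfl)
  obtain ⟨c1, c2, c0⟩ := p_cr (w := fun z => q z - r z) (p1 := dp1 u v) (p2 := dp2 V W u v) hq.vel hr.vel hq.if hr.if hfg
    (fun _ => rfl) (fun _ => rfl)
  obtain ⟨hd, -⟩ := div_curl c1 c2 c0
  rw [En, integral_add p1.integrable_sq p2.integrable_sq] at h0
  have n1 : 0 ≤ ∫ z in Dom, dp1 u v z ^ 2 := integral_nonneg fun z => sq_nonneg _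
  have n2 : 0 ≤ ∫ z in Dom, dp2 V W u v z ^ 2 := integral_nonneg fun z => sq_nonneg _
  have z : ∀ {p : ℝ × ℝ → ℝ}, MemLp p 2 (volume.restrict Dom) → ∫ z in Dom, p z ^ 2 = 0 → ∀ n, cr p n = 0 := by
    intro p hp h n
    have s := parseval_cr_norm hp
    rw [h, mul_zero, hasSum_zero_iff_of_nonneg (fun n => sq_nonneg _)] at s
    have := congrFun s n
    simpa using this
  have z1 := z p1 (by linarith)
  have z2 := z p2 (by linarith)
  have mw : MemLp (fun z => q z - r z) 2 (volume.restrict Dom) :=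
    (bdd_memLp hq.mq.aestronglyMeasurable hq.qM).sub (bdd_memLp hr.mq.aestronglyMeasurable hr.qM)
  have s := parseval_cr_norm mw
  have e : (fun n => ‖cr (fun z => q z - r z) n‖ ^ 2) = fun _ => 0 := by
    ext n; rw [hd n, z1, z2]; simp
  rw [e] at s
  have := s.unique hasSum_zero
  have hpi := Real.pi_pos
  have k : ∫ z in Dom, (q z - r z) ^ 2 = 0 := by
    rcases mul_eq_zero.1 this with h | h
    · exact absurd h (by positivity)
    · exact h
  rw [integral_eq_zero_iff_of_nonneg (fun z => sq_nonneg _) mw.integrable_sq] at k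
  filter_upwards [k] with z hz
  have : (q z - r z) ^ 2 = 0 := hz
  have := pow_eq_zero_iff (two_ne_zero) |>.1 this
  linarith

lemma main_core {T β V₀ M : ℝ} {h q₀ : ℝ × ℝ → ℝ} {V₁ V₂ : ℝ → ℝ} {q₁ q₂ : ℝ → ℝ × ℝ → ℝ}
    {u₁ u₂ : ℝ → ℝ × ℝ → ℝ × ℝ}
    (hT : 0 < T) (hM : 0 ≤ M) (hmeas : Measurable h) (hhM : ∀ᵐ z ∂(volume.restrict Dom), |h z| ≤ M)
    (hs₁ : IsWeakSolution T β h V₀ q₀ V₁ q₁ u₁) (hs₂ : IsWeakSolution T β h V₀ q₀ V₂ q₂ u₂)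
    (hg₁ : ∀ᵐ t ∂(volume.restrict (Icc (0 : ℝ) T)), Good M (V₁ t) (q₁ t) (fun z => q₁ t z - h z - β * z.2) (u₁ t))
    (hg₂ : ∀ᵐ t ∂(volume.restrict (Icc (0 : ℝ) T)), Good M (V₂ t) (q₂ t) (fun z => q₂ t z - h z - β * z.2) (u₂ t)) :
    ∀ᵐ t ∂(volume.restrict (Icc (0 : ℝ) T)), V₁ t = V₂ t ∧ ∀ᵐ z ∂(volume.restrict Dom), q₁ t z = q₂ t z := by
  have hpi := Real.pi_pos
  have hCK := CK_nonneg
  have hfg : ∀ t z, q₁ t z - q₂ t z = (q₁ t z - h z - β * z.2) - (q₂ t z - h z - β * z.2) := fun t z => by ring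
  have iD : ∀ {V : ℝ → ℝ} {q : ℝ → ℝ × ℝ → ℝ} {u : ℝ → ℝ × ℝ → ℝ × ℝ}, IsWeakSolution T β h V₀ q₀ V q u →
      (∀ᵐ t ∂(volume.restrict (Icc (0 : ℝ) T)), Good M (V t) (q t) (fun z => q t z - h z - β * z.2) (u t)) →
      IntervalIntegrable (fun s => Dr h (u s)) volume 0 T := by
    intro V q u hs hg
    rw [intervalIntegrable_iff_integrableOn_Icc_of_le hT.le]
    have hm : Measurable fun s => Dr h (u s) := by
      refine (meas_int ?_).div_const _
      have h3 := hs.measu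
      fun_prop
    refine Integrable.of_bound hm.aestronglyMeasurable (M * (1 + 2 * M ^ 2)) ?_
    filter_upwards [hg] with s hs using dr_bound hM hhM hs
  have i1 := iD hs₁ hg₁
  have i2 := iD hs₂ hg₂
  have hsubT : ∀ t ∈ Icc 0 T, uIcc 0 t ⊆ uIcc 0 T := fun t ht => by
    rw [uIcc_of_le ht.1, uIcc_of_le hT.le]; exact Icc_subset_Icc le_rfl ht.2
  have hV : ∀ t ∈ Icc 0 T, V₁ t - V₂ t = ∫ s in (0)..t, (Dr h (u₁ s) - Dr h (u₂ s)) := by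
    intro t ht
    rw [hs₁.meanflow t ht, hs₂.meanflow t ht,
      intervalIntegral.integral_sub (i1.mono_set (hsubT t ht)) (i2.mono_set (hsubT t ht)),
      intervalIntegral.integral_of_le ht.1, intervalIntegral.integral_of_le ht.1]
    simp only [Dr]; ring
  have hsq := prim_sq' (A := fun t => V₁ t - V₂ t) (i1.sub i2) hV
  obtain ⟨iP, hE⟩ := energy hT hM hs₁ hs₂ hg₁ hg₂
  set P : ℝ → ℝ := fun s => PF (V₁ s) (V₂ s) (q₁ s) (q₂ s) (u₁ s) (u₂ s) with hP
  set S : ℝ → ℝ := fun s => 2 * ((V₁ s - V₂ s) * (Dr h (u₁ s) - Dr h (u₂ s))) with hS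
  have iS : IntervalIntegrable S volume 0 T := (hsq T ⟨hT.le, le_rfl⟩).1
  have iP2 : IntervalIntegrable (fun s => -2 * P s) volume 0 T := iP.const_mul _
  have ie : IntervalIntegrable (fun s => -2 * P s + S s) volume 0 T := iP2.add iS
  set G : ℝ → ℝ := fun t => ∫ s in (0)..t, (-2 * P s + S s) with hG
  have hGc : ContinuousOn G (Icc 0 T) := by
    have := (ie.absolutelyContinuousOnInterval_intervalIntegral left_mem_uIcc).continuousOn
    rwa [uIcc_of_le hT.le] at this
  have hGE : ∀ᵐ t ∂(volume.restrict (Icc (0 : ℝ) T)),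
      G t = En (V₁ t) (V₂ t) (u₁ t) (u₂ t) + (V₁ t - V₂ t) ^ 2 := by
    filter_upwards [hE, ae_restrict_mem measurableSet_Icc] with t h1 ht
    rw [h1, (hsq t ht).2, hG]
    exact intervalIntegral.integral_add (iP2.mono_set (hsubT t ht)) (iS.mono_set (hsubT t ht))
  have hEn : ∀ V W u v, 0 ≤ En V W u v := fun V W u v => integral_nonneg fun z => by positivity
  have hG0 : ∀ t ∈ Icc 0 T, 0 ≤ G t := by
    have : EqOn G (fun t => |G t|) (Icc 0 T) := by
      refine Measure.eqOn_Icc_of_ae_eq volume hT.ne ?_ hGc hGc.abs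
      filter_upwards [hGE] with t ht
      rw [ht, abs_of_nonneg (add_nonneg (hEn _ _ _ _) (sq_nonneg _))]
    intro t ht
    rw [this ht]; exact abs_nonneg _
  have hz := osgood (G := G) (C := 4 * M * CK + 4 * M + 8 * π ^ 2 * M ^ 3 + 4 * π ^ 2 * M + M + 1) (by positivity) ie
    (fun t _ => rfl) hGc hG0 (by
      intro N hN
      rw [← ae_restrict_iff' measurableSet_Icc]
      filter_upwards [hGE, hg₁, hg₂] with t h1 h2 h3
      have r := (neg_abs_le _).trans' (neg_le_neg (rate_pair hM h2 h3 (hfg t) N hN))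
      have d := dr_pair hM hmeas hhM h2 h3
      have hN' : (1 : ℝ) ≤ N := by exact_mod_cast hN
      have hl := Real.log_nonneg hN'
      have hEt := hEn (V₁ t) (V₂ t) (u₁ t) (u₂ t)
      rw [h1]
      simp only [hP, hS]
      generalize En (V₁ t) (V₂ t) (u₁ t) (u₂ t) = E at *
      generalize PF (V₁ t) (V₂ t) (q₁ t) (q₂ t) (u₁ t) (u₂ t) = p at *
      generalize 2 * ((V₁ t - V₂ t) * (Dr h (u₁ t) - Dr h (u₂ t))) = s at *
      have hd := sq_nonneg (V₁ t - V₂ t)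
      generalize (V₁ t - V₂ t) ^ 2 = w at *
      generalize Real.log N = l at *
      have hn : 0 ≤ 1 / (N : ℝ) ^ 2 := by positivity
      rw [div_eq_mul_one_div _ ((N : ℝ) ^ 2)]
      generalize 1 / (N : ℝ) ^ 2 = n at *
      have a1 : 0 ≤ M * CK := by positivity
      have a2 : 0 ≤ π ^ 2 * M := by positivity
      have a3 : 0 ≤ π ^ 2 * M ^ 3 := by positivity
      have b1 : (4 * M * CK + 4 * M) * (1 + l) * E + (4 * π ^ 2 * M + M) * w + M * E
          ≤ (4 * M * CK + 4 * M + 8 * π ^ 2 * M ^ 3 + 4 * π ^ 2 * M + M + 1) * (1 + l) * (E + w) := by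
        have c1 : 0 ≤ (4 * M * CK + 4 * M) * (1 + l) * w := by positivity
        have c2 : 0 ≤ (8 * π ^ 2 * M ^ 3 + 1) * (1 + l) * (E + w) := by positivity
        have c3 : 0 ≤ (4 * π ^ 2 * M + M) * l * (E + w) := by positivity
        have c4 : 0 ≤ (4 * π ^ 2 * M) * E := by positivity
        nlinarith
      have b2 : 8 * π ^ 2 * M ^ 3 * n ≤ (4 * M * CK + 4 * M + 8 * π ^ 2 * M ^ 3 + 4 * π ^ 2 * M + M + 1) * n := by
        gcongr
        nlinarith
      nlinarith)
  filter_upwards [hGE, hg₁, hg₂, ae_restrict_mem measurableSet_Icc] with t h1 h2 h3 ht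
  rw [hz t ht] at h1
  have hE0 := hEn (V₁ t) (V₂ t) (u₁ t) (u₂ t)
  have hV0 := sq_nonneg (V₁ t - V₂ t)
  refine ⟨?_, en_zero h2 h3 (hfg t) (by linarith)⟩
  have : (V₁ t - V₂ t) ^ 2 = 0 := by linarith
  have := pow_eq_zero_iff (two_ne_zero) |>.1 this
  linarith

end BQG

namespace BQG

/-- **Uniqueness of weak solutions** (Proposition 2.3). For every `T > 0`, `V₀ ∈ ℝ`, and
`q₀ ∈ L^∞(D)` odd in `y`, any two weak solutions `(V₁,q₁)` and `(V₂,q₂)` of the barotropic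
quasi-geostrophic equations on `[0,T]` with initial datum `(V₀,q₀)` coincide: `V₁ = V₂` for
a.e. `t ∈ [0,T]` and `q₁ = q₂` a.e. on `[0,T]×D`. -/
theorem uniqueness_of_weak_solutions
    (T : ℝ) (hT : 0 < T) (β : ℝ)
    (h : ℝ × ℝ → ℝ) (hmeas : Measurable h)
    (hbdd : ∃ M : ℝ, ∀ᵐ z ∂(volume.restrict Dom), |h z| ≤ M)
    (hodd : OddInY h)
    (hsmooth : ContDiffOn ℝ (⊤ : ℕ∞) h (Icc (-π) π ×ˢ Ioo 0 π))
    (V₀ : ℝ) (q₀ : ℝ × ℝ → ℝ) (hq₀meas : Measurable q₀)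
    (hq₀bdd : ∃ M : ℝ, ∀ᵐ z ∂(volume.restrict Dom), |q₀ z| ≤ M)
    (hq₀odd : OddInY q₀)
    (V₁ V₂ : ℝ → ℝ) (q₁ q₂ : ℝ → ℝ × ℝ → ℝ)
    (u₁ u₂ : ℝ → ℝ × ℝ → ℝ × ℝ)
    (hsol₁ : IsWeakSolution T β h V₀ q₀ V₁ q₁ u₁)
    (hsol₂ : IsWeakSolution T β h V₀ q₀ V₂ q₂ u₂) :
    (∀ᵐ t ∂(volume.restrict (Icc (0 : ℝ) T)), V₁ t = V₂ t) ∧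
    (∀ᵐ p ∂(volume.restrict (Icc (0 : ℝ) T ×ˢ Dom)), q₁ p.1 p.2 = q₂ p.1 p.2) := by
  obtain ⟨M₁, hM₁⟩ := good_ae hmeas hbdd hodd hsol₁
  obtain ⟨M₂, hM₂⟩ := good_ae hmeas hbdd hodd hsol₂
  obtain ⟨Mh, hMh⟩ := hbdd
  have hg₁ := hM₁ (max (max M₁ M₂) (max Mh 0)) ((le_max_left _ _).trans (le_max_left _ _))
  have hg₂ := hM₂ (max (max M₁ M₂) (max Mh 0)) ((le_max_right _ _).trans (le_max_left _ _))
  have hM : 0 ≤ max (max M₁ M₂) (max Mh 0) := (le_max_right _ _).trans (le_max_right _ _)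
  have hhM : ∀ᵐ z ∂(volume.restrict Dom), |h z| ≤ max (max M₁ M₂) (max Mh 0) := by
    filter_upwards [hMh] with z hz
    exact hz.trans ((le_max_left _ _).trans (le_max_right _ _))
  have key := main_core hT hM hmeas hhM hsol₁ hsol₂ hg₁ hg₂
  refine ⟨key.mono fun t ht => ht.1, ?_⟩
  rw [Measure.volume_eq_prod, ← Measure.prod_restrict]
  rw [Measure.ae_prod_iff_ae_ae (measurableSet_eq_fun hsol₁.measq hsol₂.measq)]
  exact key.mono fun t ht => ht.2

end BQG
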